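/- arXiv:math/0611151 — 4 statements merged into one kernel-verified Lean document; each statement's English description precedes it below -/
import Mathlib

section
/- Let p be a prime with p ≡ 1 (mod 3), let L, M be positive integers with 4p = L² + 27M², and let q ≥ 5 be a prime with q ≠ p and q ≡ 3 or 4 (mod 7). Then q^{(p−1)/3} ≡ −(L + 3M)·(6M)⁻¹ (mod p) if and only if there exists an integer t such that (t³ − t² − 9t + 1)·L ≡ −(t³ + 27t² − 9t − 27)·M (mod q). -/
/-!
Write `√-3 = 1 + 2ω`. For the cubic character `χ` of `ℤ/pℤ` with values in `ℤ[ω]`, the Jacobi sum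
`J = J(χ, χ)` has norm `p`, is congruent to an integer modulo `3` and vanishes under the reduction
`ω ↦ r` modulo `p`; these properties force `2J = ±(L + 3M√-3)`.

Reduce to characteristic `q ≡ ε = ±1 (mod 3)`. There the ratio `u = g(χ) / g(χ⁻¹)` of Gauss sums is
an explicit cube root of `J / J̄`, and the Frobenius action on Gauss sums gives
`u ^ q = (χ(q) u) ^ ε`. Thus `χ(q)` measures the failure of a cube root of
`(L + 3M√-3) / (L - 3M√-3)` to lie in the torus `u ^ q = u ^ ε`, and it does so multiplicatively in
`L + 3M√-3`.

The prime `7 = (1 + 27) / 4` has `χ₇(q) = ω²` exactly for `q ≡ 3, 4 (mod 7)`, so `χ(q) = ω` if and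
only if the torus contains a cube root of `z / z̄` for
`z = (L + 3M√-3)(1 + 3√-3) = (L - 27M) + 3(L + M)√-3`. The points of the torus other than `1` are
`(t + √-3) / (t - √-3)` with `t` in the prime field, and the equation between the cube of such a
point and `z / z̄` is the cubic congruence in `t`.
-/

section RootsOfUnity

theorem isPrimitiveRoot_three_iff {R : Type*} [CommRing R] [IsDomain R] {w : R} :
    IsPrimitiveRoot w 3 ↔ (3 : R) ≠ 0 ∧ w ^ 2 + w + 1 = 0 := by
  constructor
  · intro hw
    have hw1 : w - 1 ≠ 0 := sub_ne_zero.2 (hw.ne_one (by norm_num))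
    have hsum : w ^ 2 + w + 1 = 0 :=
      mul_left_cancel₀ hw1 (by linear_combination hw.pow_eq_one)
    refine ⟨fun h3 ↦ pow_ne_zero 2 hw1 ?_, hsum⟩
    linear_combination hsum - w * h3
  · rintro ⟨h3, hw⟩
    have : NeZero ((3 : ℕ) : R) := ⟨mod_cast h3⟩
    rw [← Polynomial.isRoot_cyclotomic_iff, Polynomial.cyclotomic_three]
    simpa using hw

theorem pow_eq_pow_of_isPrimitiveRoot {M N : Type*} [CommMonoid M] [Monoid N] {n : ℕ} [NeZero n]
    {r : M} (hr : IsPrimitiveRoot r n) {w : N} (hw : w ^ n = 1) {i j : ℕ} (h : r ^ i = r ^ j) :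
    w ^ i = w ^ j := by
  rw [pow_eq_pow_mod i hr.pow_eq_one, pow_eq_pow_mod j hr.pow_eq_one] at h
  have hmod := hr.pow_inj (i.mod_lt (NeZero.pos n)) (j.mod_lt (NeZero.pos n)) h
  rw [pow_eq_pow_mod i hw, pow_eq_pow_mod j hw, hmod]

theorem pow_eq_pow_iff_of_isPrimitiveRoot {M N : Type*} [CommMonoid M] [CommMonoid N] {n : ℕ}
    [NeZero n] {r : M} (hr : IsPrimitiveRoot r n) {w : N} (hw : IsPrimitiveRoot w n) {i j : ℕ} :
    r ^ i = r ^ j ↔ w ^ i = w ^ j :=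
  ⟨pow_eq_pow_of_isPrimitiveRoot hr hw.pow_eq_one, pow_eq_pow_of_isPrimitiveRoot hw hr.pow_eq_one⟩

end RootsOfUnity

/-- The `n`-th power residue character of a finite field `K`, normalised by an `n`-th root of unity
`r` of `K` and one `w` of the target: `y ^ ((#K - 1) / n) = r ^ i` implies `χ y = w ^ i`. -/
def IsPowerResidueChar {K R : Type*} [Field K] [Fintype K] [CommRing R] (n : ℕ) (r : K) (w : R)
    (χ : MulChar K R) : Prop :=
  ∀ (y : K) (i : ℕ), y ^ ((Fintype.card K - 1) / n) = r ^ i → χ y = w ^ i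

theorem IsPowerResidueChar.ringHomComp {K R S : Type*} [Field K] [Fintype K] [CommRing R]
    [CommRing S] {n : ℕ} {r : K} {w : R} {χ : MulChar K R} (hχ : IsPowerResidueChar n r w χ)
    (f : R →+* S) : IsPowerResidueChar n r (f w) (χ.ringHomComp f) := fun y i hy ↦ by
  rw [MulChar.ringHomComp_apply, hχ y i hy, map_pow]

section PowerResidue

variable {K : Type*} [Field K] [Fintype K] {n : ℕ} [NeZero n] {r : K}

theorem dvd_card_sub_one_of_isPrimitiveRoot (hr : IsPrimitiveRoot r n) :
    n ∣ Fintype.card K - 1 :=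
  hr.dvd_of_pow_eq_one _ (FiniteField.pow_card_sub_one_eq_one r (hr.ne_zero (NeZero.ne n)))

theorem exists_pow_card_sub_one_div_eq (hr : IsPrimitiveRoot r n) {y : K} (hy : y ≠ 0) :
    ∃ i, y ^ ((Fintype.card K - 1) / n) = r ^ i := by
  obtain ⟨i, -, hi⟩ := hr.eq_pow_of_pow_eq_one (ξ := y ^ ((Fintype.card K - 1) / n)) <| by
    rw [← pow_mul, Nat.div_mul_cancel (dvd_card_sub_one_of_isPrimitiveRoot hr),
      FiniteField.pow_card_sub_one_eq_one y hy]
  exact ⟨i, hi.symm⟩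

theorem card_sub_one_div_pos (hr : IsPrimitiveRoot r n) : 0 < (Fintype.card K - 1) / n :=
  Nat.div_pos (Nat.le_of_dvd (Nat.sub_pos_of_lt Fintype.one_lt_card)
    (dvd_card_sub_one_of_isPrimitiveRoot hr)) (NeZero.pos n)

theorem exists_isPowerResidueChar {R : Type*} [CommRing R] (hr : IsPrimitiveRoot r n) {w : R}
    (hw : w ^ n = 1) : ∃ χ : MulChar K R, IsPowerResidueChar n r w χ := by
  classical
  have hr0 : r ≠ 0 := hr.ne_zero (NeZero.ne n)
  obtain ⟨g, hg⟩ := IsCyclic.exists_monoid_generator (α := Kˣ)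
  obtain ⟨j, hj⟩ := exists_pow_card_sub_one_div_eq hr g.ne_zero
  have hζ : Units.ofPowEqOne w n hw (NeZero.ne n) ^ j ∈ rootsOfUnity (Fintype.card Kˣ) R := by
    obtain ⟨c, hc⟩ := dvd_card_sub_one_of_isPrimitiveRoot hr
    rw [mem_rootsOfUnity, Fintype.card_units, hc, ← pow_mul, mul_left_comm, pow_mul,
      Units.pow_ofPowEqOne, one_pow]
  refine ⟨.ofRootOfUnity hζ fun x ↦ mem_powers_iff_mem_zpowers.1 (hg x), fun y i hy ↦ ?_⟩
  have hy0 : y ≠ 0 := by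
    rintro rfl
    rw [zero_pow (card_sub_one_div_pos hr).ne'] at hy
    exact pow_ne_zero i hr0 hy.symm
  obtain ⟨k, hk : g ^ k = Units.mk0 y hy0⟩ := hg (Units.mk0 y hy0)
  obtain rfl : (g : K) ^ k = y := by simpa using congrArg Units.val hk
  rw [pow_right_comm, hj, ← pow_mul] at hy
  rw [map_pow, MulChar.ofRootOfUnity_spec, Units.val_pow_eq_pow_val, Units.val_ofPowEqOne,
    ← pow_mul]
  exact pow_eq_pow_of_isPrimitiveRoot hr hw hy

namespace IsPowerResidueChar

section CommRing

variable {R : Type*} [CommRing R] {w : R} {χ : MulChar K R}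

theorem pow_eq_one (hχ : IsPowerResidueChar n r w χ) (hr : IsPrimitiveRoot r n) (hw : w ^ n = 1) :
    χ ^ n = 1 := by
  ext y
  obtain ⟨i, hi⟩ := exists_pow_card_sub_one_div_eq hr y.ne_zero
  rw [MulChar.pow_apply_coe, MulChar.one_apply_coe, hχ _ i hi, pow_right_comm, hw, one_pow]

theorem eq_inv_of_mul_eq_one (hχ : IsPowerResidueChar n r w χ) {w' : R} {φ : MulChar K R}
    (hφ : IsPowerResidueChar n r w' φ) (hr : IsPrimitiveRoot r n) (hw : w * w' = 1) :
    φ = χ⁻¹ := by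
  refine eq_inv_of_mul_eq_one_right (MulChar.ext fun y ↦ ?_)
  obtain ⟨i, hi⟩ := exists_pow_card_sub_one_div_eq hr y.ne_zero
  rw [MulChar.mul_apply, hχ _ i hi, hφ _ i hi, ← mul_pow, hw, one_pow, MulChar.one_apply_coe]

theorem ne_one (hχ : IsPowerResidueChar n r w χ) (hr : IsPrimitiveRoot r n)
    (hw : IsPrimitiveRoot w n) (hn : 1 < n) : χ ≠ 1 := by
  rintro rfl
  have hpow (g : Kˣ) : g ^ ((Fintype.card K - 1) / n) = 1 := by
    ext
    obtain ⟨i, hi⟩ := exists_pow_card_sub_one_div_eq hr g.ne_zero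
    have hwi : w ^ i = w ^ 0 := by rw [← hχ _ i hi, MulChar.one_apply_coe, pow_zero]
    rw [Units.val_pow_eq_pow_val, Units.val_one, hi, ← pow_zero r,
      pow_eq_pow_iff_of_isPrimitiveRoot hr hw, hwi]
  have hdvd := Monoid.exponent_dvd_of_forall_pow_eq_one hpow
  rw [IsCyclic.exponent_eq_card, Nat.card_units, Nat.card_eq_fintype_card] at hdvd
  exact absurd (Nat.le_of_dvd (card_sub_one_div_pos hr) hdvd)
    (Nat.div_lt_self (Nat.sub_pos_of_lt Fintype.one_lt_card) hn).not_ge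

end CommRing

theorem apply_eq_pow {χ : MulChar K K} (hχ : IsPowerResidueChar n r r χ) (hr : IsPrimitiveRoot r n)
    (y : K) : χ y = y ^ ((Fintype.card K - 1) / n) := by
  obtain rfl | hy := eq_or_ne y 0
  · rw [MulChar.map_zero, zero_pow (card_sub_one_div_pos hr).ne']
  · obtain ⟨i, hi⟩ := exists_pow_card_sub_one_div_eq hr hy
    rw [hχ y i hi, hi]

/-- Expanding `(x * (1 - x)) ^ ((#K - 1) / n)` only produces powers of `x` of exponent less than
`#K - 1`, and these sum to zero over `K`. -/
theorem jacobiSum_self_eq_zero {χ : MulChar K K} (hχ : IsPowerResidueChar n r r χ)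
    (hr : IsPrimitiveRoot r n) (hn : 2 < n) : jacobiSum χ χ = 0 := by
  set m := (Fintype.card K - 1) / n
  have hexp (x : K) : χ x * χ (1 - x) =
      ∑ k ∈ Finset.range (m + 1), (-1) ^ k * (m.choose k : K) * x ^ (m + k) := by
    rw [hχ.apply_eq_pow hr, hχ.apply_eq_pow hr, sub_eq_neg_add, add_pow, Finset.mul_sum]
    exact Finset.sum_congr rfl fun k _ ↦ by rw [neg_pow]; ring
  simp_rw [jacobiSum, hexp]
  rw [Finset.sum_comm]
  refine Finset.sum_eq_zero fun k hk ↦ ?_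
  have hlt : m + k < Fintype.card K - 1 := calc
    m + k ≤ 2 * m := by grind
    _ < n * m := Nat.mul_lt_mul_of_pos_right hn (card_sub_one_div_pos hr)
    _ ≤ Fintype.card K - 1 := Nat.mul_div_le _ _
  rw [← Finset.mul_sum, FiniteField.sum_pow_lt_card_sub_one _ _ hlt, mul_zero]

end IsPowerResidueChar

end PowerResidue

open scoped QuadraticAlgebra

/-- The ring `ℤ[ω]` of Eisenstein integers, with `ω ^ 2 = -1 - ω`; conjugation is `star`. -/
abbrev Eisenstein : Type := QuadraticAlgebra ℤ (-1) (-1)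

namespace Eisenstein

theorem norm_eq (z : Eisenstein) : z.norm = z.re ^ 2 - z.re * z.im + z.im ^ 2 := by
  rw [QuadraticAlgebra.norm_def]
  ring

theorem norm_eq_zero_iff {z : Eisenstein} : z.norm = 0 ↔ z = 0 := by
  refine ⟨fun h ↦ ?_, fun h ↦ by simp [h]⟩
  rw [norm_eq] at h
  have him : z.im = 0 := by nlinarith [sq_nonneg (2 * z.re - z.im)]
  have hre : z.re = 0 := by nlinarith
  exact QuadraticAlgebra.ext hre him

instance : IsDomain Eisenstein :=
  have : NoZeroDivisors Eisenstein := ⟨fun {x y} h ↦ by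
    simpa [norm_eq_zero_iff] using congrArg QuadraticAlgebra.norm h⟩
  NoZeroDivisors.to_isDomain _

theorem isPrimitiveRoot_omega : IsPrimitiveRoot (ω : Eisenstein) 3 :=
  isPrimitiveRoot_three_iff.2 ⟨OfNat.ofNat_ne_zero 3, by ext <;> simp [sq]⟩

theorem omega_mul_star_omega : (ω : Eisenstein) * star ω = 1 := by
  ext <;> simp

/-- The Eisenstein integer `L + 3M√-3`, where `√-3 = 1 + 2ω`. -/
def ofLM (L M : ℤ) : Eisenstein := ⟨L + 3 * M, 6 * M⟩

theorem ofLM_mul_ofLM (L M L' M' : ℤ) :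
    ofLM L M * ofLM L' M' = ofLM (L * L' - 27 * M * M') (L * M' + M * L') := by
  ext <;> simp [ofLM] <;> ring

theorem norm_ofLM (L M : ℤ) : (ofLM L M).norm = L ^ 2 + 27 * M ^ 2 := by
  simp only [norm_eq, ofLM]
  ring

theorem star_ofLM (L M : ℤ) : star (ofLM L M) = ofLM L (-M) := by
  ext <;> simp [ofLM]
  ring

section evalAt

variable {R : Type*} [CommRing R] [IsDomain R] {w : R}

/-- The ring homomorphism `ℤ[ω] → R` sending `ω` to a primitive cube root of unity `w`. -/
def evalAt (hw : IsPrimitiveRoot w 3) : Eisenstein →+* R :=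
  (QuadraticAlgebra.lift ⟨w, by linear_combination (isPrimitiveRoot_three_iff.1 hw).2⟩ :
    Eisenstein →ₐ[ℤ] R)

variable (hw : IsPrimitiveRoot w 3)

theorem evalAt_apply (z : Eisenstein) : evalAt hw z = z.re + z.im * w := by
  simp [evalAt, QuadraticAlgebra.lift]

theorem evalAt_omega : evalAt hw ω = w := by
  simp [evalAt_apply]

theorem evalAt_ofLM (L M : ℤ) : evalAt hw (ofLM L M) = L + 3 * M * (1 + 2 * w) := by
  simp only [evalAt_apply, ofLM]
  push_cast
  ring

theorem evalAt_mul_evalAt_star (z : Eisenstein) :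
    evalAt hw z * evalAt hw (star z) = (z.norm : ℤ) := by
  rw [← map_mul, ← QuadraticAlgebra.algebraMap_norm_eq_mul_star, algebraMap_int_eq,
    eq_intCast, map_intCast]

end evalAt

end Eisenstein

section JacobiSum

open Eisenstein

section FiniteField

variable {K : Type*} [Field K] [Fintype K] {r : K} {χ : MulChar K Eisenstein}

theorem ringHomComp_starRingEnd_eq_inv (hr : IsPrimitiveRoot r 3)
    (hχ : IsPowerResidueChar 3 r ω χ) : χ.ringHomComp (starRingEnd Eisenstein) = χ⁻¹ :=
  hχ.eq_inv_of_mul_eq_one (hχ.ringHomComp _) hr omega_mul_star_omega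

theorem norm_jacobiSum_self (hr : IsPrimitiveRoot r 3) (hχ : IsPowerResidueChar 3 r ω χ) :
    (jacobiSum χ χ).norm = Fintype.card K := by
  let ι := algebraMap Eisenstein (FractionRing Eisenstein)
  have hι : Function.Injective ι := FaithfulSMul.algebraMap_injective _ _
  have hχ1 : χ ≠ 1 := hχ.ne_one hr isPrimitiveRoot_omega (by norm_num)
  have hχ3 : χ ^ 3 = 1 := hχ.pow_eq_one hr isPrimitiveRoot_omega.pow_eq_one
  have hχχ : χ * χ = χ⁻¹ := eq_inv_of_mul_eq_one_left ((pow_three' χ).symm.trans hχ3)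
  have hchar : ringChar (FractionRing Eisenstein) ≠ ringChar K := by
    rw [ringChar.eq_zero]
    exact (CharP.char_ne_zero_of_finite K _).symm
  have h := jacobiSum_mul_jacobiSum_inv hchar ((MulChar.ringHomComp_ne_one_iff hι).2 hχ1)
    ((MulChar.ringHomComp_ne_one_iff hι).2 hχ1)
    (by rwa [← MulChar.ringHomComp_mul, MulChar.ringHomComp_ne_one_iff hι, hχχ, inv_ne_one])
  rw [MulChar.ringHomComp_inv, ← ringHomComp_starRingEnd_eq_inv hr hχ, jacobiSum_ringHomComp,
    jacobiSum_ringHomComp, jacobiSum_ringHomComp, starRingEnd_apply, ← map_mul,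
    ← QuadraticAlgebra.algebraMap_norm_eq_mul_star, ← map_natCast ι] at h
  simpa using congrArg QuadraticAlgebra.re (hι h)

theorem three_dvd_im_jacobiSum_self (hr : IsPrimitiveRoot r 3)
    (hχ : IsPowerResidueChar 3 r ω χ) : 3 ∣ (jacobiSum χ χ).im := by
  have hχ3 : χ ^ 3 = 1 := hχ.pow_eq_one hr isPrimitiveRoot_omega.pow_eq_one
  obtain ⟨z, -, hz⟩ := exists_jacobiSum_eq_neg_one_add (by norm_num) hχ3 hχ3
    (dvd_card_sub_one_of_isPrimitiveRoot hr) isPrimitiveRoot_omega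
  refine ⟨z.im - z.re, ?_⟩
  rw [hz]
  simp [sq]
  ring

theorem evalAt_jacobiSum_self (hr : IsPrimitiveRoot r 3)
    (hχ : IsPowerResidueChar 3 r ω χ) : evalAt hr (jacobiSum χ χ) = 0 := by
  rw [← jacobiSum_ringHomComp]
  refine IsPowerResidueChar.jacobiSum_self_eq_zero (n := 3) (r := r) ?_ hr (by norm_num)
  simpa only [evalAt_omega] using hχ.ringHomComp (evalAt hr)

end FiniteField

theorem eq_or_eq_neg_of_dvd {p L M K N : ℤ} (hp : 0 < p) (h : 4 * p = L ^ 2 + 27 * M ^ 2)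
    (h' : 4 * p = K ^ 2 + 27 * N ^ 2) (hdvd : p ∣ M * K - N * L) :
    K = L ∧ N = M ∨ K = -L ∧ N = -M := by
  have hnorm : (L * K + 27 * M * N) ^ 2 + 27 * (M * K - N * L) ^ 2 = (4 * p) ^ 2 := by
    linear_combination -(K ^ 2 + 27 * N ^ 2) * h - 4 * p * h'
  have hdet : M * K - N * L = 0 := by
    refine Int.eq_zero_of_abs_lt_dvd hdvd (abs_lt_of_sq_lt_sq ?_ hp.le)
    nlinarith [sq_nonneg (L * K + 27 * M * N)]
  rw [hdet, zero_pow two_ne_zero, mul_zero, add_zero, sq_eq_sq_iff_eq_or_eq_neg] at hnorm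
  have hK : 4 * p * K = L * (L * K + 27 * M * N) := by linear_combination K * h + 27 * M * hdet
  have hN : 4 * p * N = M * (L * K + 27 * M * N) := by linear_combination N * h - L * hdet
  have h4p : 4 * p ≠ 0 := by positivity
  refine hnorm.imp (fun hpos ↦ ⟨?_, ?_⟩) fun hneg ↦ ⟨?_, ?_⟩ <;> apply mul_left_cancel₀ h4p <;>
    grind

theorem two_mul_jacobiSum_self {p : ℕ} [Fact p.Prime] {r : ZMod p} (hr : IsPrimitiveRoot r 3)
    {L M : ℤ} (h : (4 * p : ℤ) = L ^ 2 + 27 * M ^ 2)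
    (hLM : evalAt hr (ofLM L M) = 0) {χ : MulChar (ZMod p) Eisenstein}
    (hχ : IsPowerResidueChar 3 r ω χ) :
    2 * jacobiSum χ χ = ofLM L M ∨ 2 * jacobiSum χ χ = -ofLM L M := by
  set J := jacobiSum χ χ
  obtain ⟨N, hN⟩ : 3 ∣ J.im := three_dvd_im_jacobiSum_self hr hχ
  have hJ : 2 * J = ofLM (2 * J.re - 3 * N) N := by
    ext <;> simp [ofLM, hN]
    ring
  have hnorm : (4 * p : ℤ) = (2 * J.re - 3 * N) ^ 2 + 27 * N ^ 2 := by
    rw [← norm_ofLM, ← hJ, map_mul, norm_jacobiSum_self hr hχ, ZMod.card]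
    simp [norm_eq]
  have hdvd : (p : ℤ) ∣ M * (2 * J.re - 3 * N) - N * L := by
    have hev : evalAt hr (ofLM (2 * J.re - 3 * N) N) = 0 := by
      rw [← hJ, map_mul, evalAt_jacobiSum_self hr hχ, mul_zero]
    rw [evalAt_ofLM] at hev hLM
    rw [← ZMod.intCast_zmod_eq_zero_iff_dvd]
    push_cast at hev ⊢
    linear_combination (M : ZMod p) * hev - (N : ZMod p) * hLM
  rw [hJ]
  refine (eq_or_eq_neg_of_dvd (mod_cast (Fact.out : p.Prime).pos) h hnorm hdvd).imp ?_ ?_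
  · rintro ⟨hL, hM⟩
    rw [hL, hM]
  · rintro ⟨hL, hM⟩
    rw [hL, hM]
    ext <;> simp [ofLM]
    ring

end JacobiSum

theorem pow_eq_zpow_of_modEq_three {G : Type*} [DivisionMonoid G] {x : G} (hx : x ^ 3 = 1)
    {q : ℕ} {ε : ℤˣ} (hε : q ≡ ε [ZMOD 3]) : x ^ q = x ^ (ε : ℤ) := by
  rw [pow_eq_pow_mod q hx]
  obtain rfl | rfl := Int.units_eq_one_or ε
  · have hq : q % 3 = 1 := by
      rw [Int.ModEq, Units.val_one] at hε
      omega
    rw [hq, pow_one, Units.val_one, zpow_one]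
  · have hq : q % 3 = 2 := by
      rw [Int.ModEq, Units.val_neg, Units.val_one] at hε
      omega
    rw [hq, Units.val_neg, Units.val_one, zpow_neg_one]
    exact (inv_eq_of_mul_eq_one_right ((pow_succ' x 2).symm.trans hx)).symm

theorem pow_eq_zpow_of_pow_three_eq {F : Type*} [Field F] {q : ℕ} {ε : ℤˣ}
    (hε : q ≡ ε [ZMOD 3]) {u v : F} (hv0 : v ≠ 0) (huv : u ^ 3 = v ^ 3)
    (hv : v ^ q = v ^ (ε : ℤ)) : u ^ q = u ^ (ε : ℤ) := by
  have hdiv : (u / v) ^ 3 = 1 := by rw [div_pow, huv, div_self (pow_ne_zero 3 hv0)]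
  rw [← div_mul_cancel₀ u hv0, mul_pow, mul_zpow, hv, pow_eq_zpow_of_modEq_three hdiv hε]

theorem exists_units_modEq_three {q : ℕ} (hq : ¬3 ∣ q) : ∃ ε : ℤˣ, q ≡ ε [ZMOD 3] := by
  obtain h | h : q % 3 = 1 ∨ q % 3 = 2 := by omega
  · exact ⟨1, by
      rw [Int.ModEq, Units.val_one]
      omega⟩
  · exact ⟨-1, by
      rw [Int.ModEq, Units.val_neg, Units.val_one]
      omega⟩

section GaussSum

variable {K F : Type*} [Field K] [Fintype K] [Field F]

theorem gaussSum_pow_char_eq {R : Type*} [CommRing R] (q : ℕ) [Fact q.Prime] [CharP R q]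
    (hq : (q : K) ≠ 0) (χ : MulChar K R) (ψ : AddChar K R) :
    gaussSum χ ψ ^ q = (χ ^ q)⁻¹ q * gaussSum (χ ^ q) ψ := by
  rw [gaussSum_frob, AddChar.pow_mulShift]
  exact gaussSum_mulShift_eq (χ ^ q) ψ (Units.mk0 (q : K) hq)

/-- The ratio `g(χ) / g(χ⁻¹)` of Gauss sums. For a cubic character it is a cube root of the ratio
`J(χ, χ) / J(χ⁻¹, χ⁻¹)` of Jacobi sums. -/
noncomputable def gaussSumRatio (χ : MulChar K F) (ψ : AddChar K F) : F :=
  gaussSum χ ψ / gaussSum χ⁻¹ ψ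

variable {χ : MulChar K F} {ψ : AddChar K F}

theorem gaussSumRatio_pow_three (hK : (Fintype.card K : F) ≠ 0) (hχ : χ ≠ 1) (hχ3 : χ ^ 3 = 1)
    (hψ : ψ.IsPrimitive) :
    gaussSumRatio χ ψ ^ 3 * jacobiSum χ⁻¹ χ⁻¹ = jacobiSum χ χ := by
  have hχχ : χ * χ = χ⁻¹ := eq_inv_of_mul_eq_one_left ((pow_three' χ).symm.trans hχ3)
  have hinv : χ⁻¹ * χ⁻¹ = χ := by rw [← mul_inv, hχχ, inv_inv]
  have hJ := jacobiSum_mul_nontrivial (by rwa [hχχ, inv_ne_one]) ψ (χ := χ) (φ := χ)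
  have hJ' := jacobiSum_mul_nontrivial (by rwa [hinv]) ψ (χ := χ⁻¹) (φ := χ⁻¹)
  rw [hχχ] at hJ
  rw [hinv] at hJ'
  have hg := gaussSum_ne_zero_of_nontrivial hK hχ hψ
  have hg' := gaussSum_ne_zero_of_nontrivial hK (inv_ne_one.2 hχ) hψ
  rw [gaussSumRatio, div_pow, div_mul_eq_mul_div, div_eq_iff (pow_ne_zero 3 hg')]
  apply mul_left_cancel₀ hg
  linear_combination gaussSum χ ψ ^ 3 * hJ' - gaussSum χ ψ * gaussSum χ⁻¹ ψ ^ 2 * hJ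

theorem gaussSumRatio_pow_char {q : ℕ} [Fact q.Prime] [CharP F q] (hq : (q : K) ≠ 0)
    {ε : ℤˣ} (hε : q ≡ ε [ZMOD 3]) (hχ3 : χ ^ 3 = 1) :
    gaussSumRatio χ ψ ^ q = (χ q * gaussSumRatio χ ψ) ^ (ε : ℤ) := by
  have hχ3' : χ⁻¹ ^ 3 = 1 := by rw [inv_pow, hχ3, inv_one]
  have hχq : χ q ^ 3 = 1 := by
    rw [← MulChar.pow_apply' χ three_ne_zero, hχ3, MulChar.one_apply hq.isUnit]
  have hχq0 : χ q ≠ 0 := fun h ↦ by simp [h] at hχq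
  rw [gaussSumRatio, div_pow, gaussSum_pow_char_eq q hq, gaussSum_pow_char_eq q hq,
    pow_eq_zpow_of_modEq_three hχ3 hε, pow_eq_zpow_of_modEq_three hχ3' hε]
  obtain rfl | rfl := Int.units_eq_one_or ε
  · simp only [Units.val_one, zpow_one, inv_inv, MulChar.inv_apply_eq_inv']
    field_simp
    rw [hχq, one_mul]
  · simp only [Units.val_neg, Units.val_one, zpow_neg_one, inv_inv, MulChar.inv_apply_eq_inv']
    field_simp
    rw [hχq, one_mul]

end GaussSum

section CayleyTransform

variable {F : Type*} [Field F] {q : ℕ} [Fact q.Prime] [CharP F q] {ε : ℤˣ}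

theorem intCast_pow_char {R : Type*} [CommRing R] (q : ℕ) [Fact q.Prime] [CharP R q] (n : ℤ) :
    (n : R) ^ q = n := by
  rw [← frobenius_def, map_intCast]

theorem exists_intCast_eq_of_pow_char_eq_self {x : F} (hx : x ^ q = x) : ∃ n : ℤ, (n : F) = x := by
  have hle : (⊥ : Subfield F) ≤ (ZMod.castHom dvd_rfl F : ZMod q →+* F).fieldRange := bot_le
  obtain ⟨y, rfl⟩ := hle ((Subfield.mem_bot_iff_pow_eq_self F q).2 hx)
  obtain ⟨n, rfl⟩ := ZMod.intCast_surjective y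
  exact ⟨n, (map_intCast _ n).symm⟩

theorem one_add_two_mul_pow_char {w : F} (hw : IsPrimitiveRoot w 3) (hε : q ≡ ε [ZMOD 3]) :
    (1 + 2 * w) ^ q = ((ε : ℤ) : F) * (1 + 2 * w) := by
  have h2 : (2 : F) ^ q = 2 := mod_cast intCast_pow_char q 2
  rw [add_pow_char, mul_pow, one_pow, h2, pow_eq_zpow_of_modEq_three hw.pow_eq_one hε]
  obtain rfl | rfl := Int.units_eq_one_or ε
  · simp
  · have hinv : w⁻¹ = w ^ 2 := inv_eq_of_mul_eq_one_right ((pow_succ' w 2).symm.trans hw.pow_eq_one)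
    simp only [Units.val_neg, Units.val_one, zpow_neg_one, hinv]
    push_cast
    linear_combination 2 * (isPrimitiveRoot_three_iff.1 hw).2

/-- The Cayley transform `t ↦ (t + s) / (t - s)` identifies the prime field with the part of the
torus `z ^ q = z ^ ε` away from `1`. -/
theorem pow_char_eq_zpow_iff_exists_int {s : F} (hs0 : 2 * s ≠ 0)
    (hs : s ^ q = ((ε : ℤ) : F) * s) {z : F} (hz0 : z ≠ 0) (hz1 : z ≠ 1) :
    z ^ q = z ^ (ε : ℤ) ↔ ∃ t : ℤ, z * (t - s) = t + s := by
  constructor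
  · intro hz
    have hz1' : z - 1 ≠ 0 := sub_ne_zero.2 hz1
    suffices h : (s * (z + 1) / (z - 1)) ^ q = s * (z + 1) / (z - 1) by
      obtain ⟨t, ht⟩ := exists_intCast_eq_of_pow_char_eq_self h
      refine ⟨t, ?_⟩
      rw [eq_div_iff hz1'] at ht
      linear_combination ht
    rw [div_pow, mul_pow, sub_pow_char, add_pow_char, one_pow, hs, hz]
    obtain rfl | rfl := Int.units_eq_one_or ε
    · simp
    · have hz1'' : 1 - z ≠ 0 := sub_ne_zero.2 hz1.symm
      simp only [Units.val_neg, Units.val_one, zpow_neg_one]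
      field_simp
      push_cast
      ring
  · rintro ⟨t, ht⟩
    have hsub : (t : F) - s ≠ 0 := fun h ↦ hs0 (by linear_combination (z - 1) * h - ht)
    obtain rfl : z = (t + s) / (t - s) := (eq_div_iff hsub).2 ht
    rw [div_pow, add_pow_char, sub_pow_char, intCast_pow_char, hs]
    obtain rfl | rfl := Int.units_eq_one_or ε
    · simp
    · simp [← sub_eq_add_neg]

theorem add_pow_three_mul_eq_iff {s X Y t : F} (hs : s ^ 2 = -3) (hs0 : 2 * s ≠ 0) :
    (t + s) ^ 3 * (X - 3 * Y * s) = (t - s) ^ 3 * (X + 3 * Y * s) ↔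
      X * (t ^ 2 - 1) = Y * (t ^ 3 - 9 * t) := by
  have h3 : (3 : F) ≠ 0 := fun h3 ↦ hs0 (by simp_all)
  refine ⟨fun h ↦ mul_left_cancel₀ (mul_ne_zero h3 hs0) ?_, fun h ↦ ?_⟩
  · linear_combination h - (2 * s * X - 18 * Y * s * t) * hs
  · linear_combination 6 * s * h + (2 * s * X - 18 * Y * s * t) * hs

theorem mul_sq_sub_one_eq_iff_exists {s X Y t u : F} (hs : s ^ 2 = -3) (hs0 : 2 * s ≠ 0)
    (hsub : X - 3 * Y * s ≠ 0) (hu : u ^ 3 * (X - 3 * Y * s) = X + 3 * Y * s) :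
    X * (t ^ 2 - 1) = Y * (t ^ 3 - 9 * t) ↔ ∃ v, v ^ 3 = u ^ 3 ∧ v * (t - s) = t + s := by
  rw [← add_pow_three_mul_eq_iff hs hs0, ← hu, ← mul_assoc, mul_left_inj' hsub]
  constructor
  · intro h
    have hts : t - s ≠ 0 := by
      intro hts
      have hts' : t + s = 0 := by simpa [hts] using h
      exact hs0 (by linear_combination hts' - hts)
    refine ⟨(t + s) / (t - s), ?_, div_mul_cancel₀ _ hts⟩
    rw [div_pow, div_eq_iff (pow_ne_zero 3 hts), h, mul_comm]
  · rintro ⟨v, hv, ht⟩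
    rw [← ht, mul_pow, hv, mul_comm]

theorem pow_char_eq_zpow_iff_exists_mul_eq {w : F} (hw : IsPrimitiveRoot w 3) (h2 : (2 : F) ≠ 0)
    (hε : q ≡ ε [ZMOD 3]) {X Y u : F} (hsub : X - 3 * Y * (1 + 2 * w) ≠ 0)
    (hu0 : u ≠ 0) (hu : u ^ 3 * (X - 3 * Y * (1 + 2 * w)) = X + 3 * Y * (1 + 2 * w)) :
    u ^ q = u ^ (ε : ℤ) ↔ ∃ t : ℤ, X * ((t : F) ^ 2 - 1) = Y * ((t : F) ^ 3 - 9 * t) := by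
  obtain ⟨h3, hsum⟩ := isPrimitiveRoot_three_iff.1 hw
  have hs : (1 + 2 * w) ^ 2 = -3 := by linear_combination 4 * hsum
  have hs0 : 2 * (1 + 2 * w) ≠ 0 := mul_ne_zero h2 fun h0 ↦ h3 (by simp_all)
  have hsq := one_add_two_mul_pow_char hw hε
  have hne {v : F} (hv : v ^ 3 = u ^ 3) : v ≠ 0 := fun hv0 ↦
    pow_ne_zero 3 hu0 (by rw [← hv, hv0, zero_pow three_ne_zero])
  simp_rw [mul_sq_sub_one_eq_iff_exists hs hs0 hsub hu]
  constructor
  · intro h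
    obtain ⟨v, hv1, hv⟩ : ∃ v, v ≠ 1 ∧ v ^ 3 = u ^ 3 := by
      obtain rfl | hu1 := eq_or_ne u 1
      · exact ⟨w, hw.ne_one (by norm_num), by rw [hw.pow_eq_one, one_pow]⟩
      · exact ⟨u, hu1, rfl⟩
    obtain ⟨t, ht⟩ := (pow_char_eq_zpow_iff_exists_int hs0 hsq (hne hv) hv1).1
      (pow_eq_zpow_of_pow_three_eq hε hu0 hv h)
    exact ⟨t, v, hv, ht⟩
  · rintro ⟨t, v, hv, ht⟩
    have hv1 : v ≠ 1 := by
      rintro rfl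
      exact hs0 (by linear_combination -ht)
    exact pow_eq_zpow_of_pow_three_eq hε (hne hv) hv.symm <|
      (pow_char_eq_zpow_iff_exists_int hs0 hsq (hne hv) hv1).2 ⟨t, ht⟩

end CayleyTransform

section KummerSymbol

open Eisenstein

variable {F : Type*} [Field F] {w : F} {q : ℕ} {ε : ℤˣ}

/-- `c` is the cubic Kummer symbol of `z / star z` at `q`, where `q ≡ ε` modulo `3` and `ω` is
reduced to `w` in characteristic `q`: some cube root `u` of the reduction of `z / star z` satisfies
`u ^ q = (c * u) ^ ε`. The notion is meaningful when `z` is prime to `q`. -/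
def IsKummerSymbol (hw : IsPrimitiveRoot w 3) (q : ℕ) (ε : ℤˣ) (z : Eisenstein) (c : F) : Prop :=
  ∃ u : F, u ^ 3 * evalAt hw (star z) = evalAt hw z ∧ u ^ q = (c * u) ^ (ε : ℤ)

theorem IsKummerSymbol.mul {hw : IsPrimitiveRoot w 3} {z z' : Eisenstein} {c c' : F}
    (h : IsKummerSymbol hw q ε z c) (h' : IsKummerSymbol hw q ε z' c') :
    IsKummerSymbol hw q ε (z * z') (c * c') := by
  obtain ⟨u, hu, hc⟩ := h
  obtain ⟨u', hu', hc'⟩ := h'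
  refine ⟨u * u', ?_, ?_⟩
  · rw [star_mul', map_mul, map_mul, ← hu, ← hu']
    ring
  · rw [mul_mul_mul_comm, mul_zpow, mul_pow, hc, hc']

theorem gaussSumRatio_pow_three_mul_evalAt_star_ofLM {p : ℕ} [Fact p.Prime] (hpF : (p : F) ≠ 0)
    (hw : IsPrimitiveRoot w 3) {r : ZMod p} (hr : IsPrimitiveRoot r 3) {L M : ℤ}
    (h : (4 * p : ℤ) = L ^ 2 + 27 * M ^ 2) (hLM : evalAt hr (ofLM L M) = 0)
    {χ : MulChar (ZMod p) Eisenstein} (hχ : IsPowerResidueChar 3 r ω χ)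
    {ψ : AddChar (ZMod p) F} (hψ : ψ.IsPrimitive) :
    gaussSumRatio (χ.ringHomComp (evalAt hw)) ψ ^ 3 * evalAt hw (star (ofLM L M)) =
      evalAt hw (ofLM L M) := by
  have hχF : IsPowerResidueChar 3 r w (χ.ringHomComp (evalAt hw)) := by
    simpa only [evalAt_omega] using hχ.ringHomComp (evalAt hw)
  have hcube := gaussSumRatio_pow_three (by rwa [ZMod.card]) (hχF.ne_one hr hw (by norm_num))
    (hχF.pow_eq_one hr hw.pow_eq_one) hψ
  rw [MulChar.ringHomComp_inv, ← ringHomComp_starRingEnd_eq_inv hr hχ, jacobiSum_ringHomComp,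
    jacobiSum_ringHomComp, jacobiSum_ringHomComp, starRingEnd_apply] at hcube
  obtain hJ | hJ := two_mul_jacobiSum_self hr h hLM hχ
  · rw [← hJ, star_mul', map_mul, map_mul, star_ofNat, map_ofNat]
    linear_combination 2 * hcube
  · rw [← neg_eq_iff_eq_neg.2 hJ, star_neg, star_mul', map_neg, map_neg, map_mul, map_mul,
      star_ofNat, map_ofNat]
    linear_combination -2 * hcube

theorem isKummerSymbol_ofLM [Fact q.Prime] [CharP F q] [IsAlgClosed F]
    (hw : IsPrimitiveRoot w 3) (hε : q ≡ ε [ZMOD 3]) {p : ℕ} [Fact p.Prime] (hqp : q ≠ p)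
    {r : ZMod p} (hr : IsPrimitiveRoot r 3) {L M : ℤ} (h : (4 * p : ℤ) = L ^ 2 + 27 * M ^ 2)
    (hLM : evalAt hr (ofLM L M) = 0) {i : ℕ} (hi : (q : ZMod p) ^ ((p - 1) / 3) = r ^ i) :
    IsKummerSymbol hw q ε (ofLM L M) (w ^ i) := by
  have hpF : (p : F) ≠ 0 := CharP.cast_ne_zero_of_ne_of_prime F Fact.out hqp
  have hqp' : (q : ZMod p) ≠ 0 := CharP.cast_ne_zero_of_ne_of_prime (ZMod p) Fact.out hqp.symm
  have : NeZero (p : F) := ⟨hpF⟩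
  obtain ⟨ζ, hζ⟩ := HasEnoughRootsOfUnity.exists_primitiveRoot F p
  have hψ := AddChar.zmodChar_primitive_of_primitive_root p hζ
  obtain ⟨χ, hχ⟩ := exists_isPowerResidueChar hr isPrimitiveRoot_omega.pow_eq_one
  have hχF : IsPowerResidueChar 3 r w (χ.ringHomComp (evalAt hw)) := by
    simpa only [evalAt_omega] using hχ.ringHomComp (evalAt hw)
  refine ⟨_, gaussSumRatio_pow_three_mul_evalAt_star_ofLM hpF hw hr h hLM hχ hψ, ?_⟩
  rw [gaussSumRatio_pow_char hqp' hε (hχF.pow_eq_one hr hw.pow_eq_one),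
    hχF q i (by rwa [ZMod.card])]

theorem IsKummerSymbol.eq_one_iff_exists [Fact q.Prime] [CharP F q] {hw : IsPrimitiveRoot w 3}
    (h2 : (2 : F) ≠ 0) (hε : q ≡ ε [ZMOD 3]) {X Y : ℤ}
    (hXY : ((ofLM X Y).norm : F) ≠ 0) {c : F}
    (hc : IsKummerSymbol hw q ε (ofLM X Y) c) :
    c = 1 ↔ ∃ t : ℤ, (X : F) * ((t : F) ^ 2 - 1) = Y * ((t : F) ^ 3 - 9 * t) := by
  obtain ⟨u, hu, huq⟩ := hc
  rw [← evalAt_mul_evalAt_star hw] at hXY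
  have hu0 : u ≠ 0 := by
    rintro rfl
    exact left_ne_zero_of_mul hXY (by rw [← hu, zero_pow three_ne_zero, zero_mul])
  have hsub := right_ne_zero_of_mul hXY
  have hstar : evalAt hw (star (ofLM X Y)) = X - 3 * Y * (1 + 2 * w) := by
    rw [star_ofLM, evalAt_ofLM]
    push_cast
    ring
  rw [hstar] at hsub hu
  rw [evalAt_ofLM] at hu
  rw [← pow_char_eq_zpow_iff_exists_mul_eq hw h2 hε hsub hu0 hu, huq, mul_zpow]
  obtain rfl | rfl := Int.units_eq_one_or ε <;> simp [hu0]

end KummerSymbol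

section CubicRule

open Eisenstein

theorem intCast_six_mul_ne_zero {p : ℕ} [Fact p.Prime] (hp3 : p % 3 = 1) {L M : ℤ}
    (h : (4 * p : ℤ) = L ^ 2 + 27 * M ^ 2) : ((6 * M : ℤ) : ZMod p) ≠ 0 := by
  have hp : Prime (p : ℤ) := Nat.prime_iff_prime_int.1 Fact.out
  have hp4 : 4 < p := by
    have hp1 := (Fact.out : p.Prime).ne_one
    have hp4 : p ≠ 4 := by
      rintro rfl
      exact absurd (Fact.out : Nat.Prime 4) (by norm_num)
    omega
  have hnot_dvd (n : ℤ) (hn0 : 0 < n) (hn : n ≤ 4) : ¬(p : ℤ) ∣ n := fun hdvd ↦ by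
    have := Int.le_of_dvd hn0 hdvd
    omega
  rw [Ne, ZMod.intCast_zmod_eq_zero_iff_dvd, show 6 * M = 2 * (3 * M) by ring, hp.dvd_mul,
    hp.dvd_mul, not_or, not_or]
  refine ⟨hnot_dvd 2 (by norm_num) (by norm_num), hnot_dvd 3 (by norm_num) (by norm_num), ?_⟩
  rintro ⟨m, rfl⟩
  obtain ⟨l, rfl⟩ : (p : ℤ) ∣ L := hp.dvd_of_dvd_pow (n := 2) ⟨4 - 27 * p * m ^ 2, by
    linear_combination -h⟩
  refine hnot_dvd 4 (by norm_num) le_rfl ⟨l ^ 2 + 27 * m ^ 2, mul_left_cancel₀ hp.ne_zero ?_⟩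
  linear_combination h

theorem exists_isPrimitiveRoot_three_evalAt_ofLM {p : ℕ} [Fact p.Prime] {L M : ℤ}
    (h : (4 * p : ℤ) = L ^ 2 + 27 * M ^ 2) (h6M : ((6 * M : ℤ) : ZMod p) ≠ 0) :
    ∃ hr : IsPrimitiveRoot (((-(L + 3 * M) : ℤ) : ZMod p) * ((6 * M : ℤ) : ZMod p)⁻¹) 3,
      evalAt hr (ofLM L M) = 0 := by
  generalize hr : ((-(L + 3 * M) : ℤ) : ZMod p) * ((6 * M : ℤ) : ZMod p)⁻¹ = r
  rw [← div_eq_mul_inv, div_eq_iff h6M] at hr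
  push_cast at hr h6M
  have h0 : (L : ZMod p) ^ 2 + 27 * (M : ZMod p) ^ 2 = 0 := by
    have h' := congrArg (Int.cast : ℤ → ZMod p) h
    push_cast at h'
    rw [← h', ZMod.natCast_self, mul_zero]
  have hsum : r ^ 2 + r + 1 = 0 := by
    apply mul_left_cancel₀ (pow_ne_zero 2 h6M)
    linear_combination h0 - (6 * M * r - L + 3 * M) * hr
  have h3 : (3 : ZMod p) ≠ 0 := fun h3 ↦ h6M (by linear_combination 2 * (M : ZMod p) * h3)
  refine ⟨isPrimitiveRoot_three_iff.2 ⟨h3, hsum⟩, ?_⟩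
  rw [evalAt_ofLM]
  linear_combination -hr

theorem isKummerSymbol_ofLM_one_one {F : Type*} [Field F] [IsAlgClosed F] {w : F}
    (hw : IsPrimitiveRoot w 3) {q : ℕ} [Fact q.Prime] [CharP F q] {ε : ℤˣ} (hε : q ≡ ε [ZMOD 3])
    (hq7 : q % 7 = 3 ∨ q % 7 = 4) : IsKummerSymbol hw q ε (ofLM 1 1) (w ^ 2) := by
  have : Fact (Nat.Prime 7) := ⟨by norm_num⟩
  have h4 : IsPrimitiveRoot (4 : ZMod 7) 3 := isPrimitiveRoot_three_iff.2 ⟨by decide, rfl⟩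
  refine isKummerSymbol_ofLM hw hε (by omega) h4 (by norm_num) ?_ ?_
  · rw [evalAt_ofLM]
    rfl
  · rw [← ZMod.natCast_mod q 7]
    obtain h | h := hq7 <;> rw [h] <;> rfl

theorem cubic_modEq_iff {F : Type*} [Field F] {q : ℕ} [CharP F q] (L M t : ℤ) :
    (t ^ 3 - t ^ 2 - 9 * t + 1) * L ≡ -(t ^ 3 + 27 * t ^ 2 - 9 * t - 27) * M [ZMOD (q : ℤ)] ↔
      ((L - 27 * M : ℤ) : F) * ((t : F) ^ 2 - 1) =
        ((L + M : ℤ) : F) * ((t : F) ^ 3 - 9 * t) := by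
  rw [← CharP.intCast_eq_intCast F q]
  push_cast
  constructor <;> intro ht <;> linear_combination -ht

theorem norm_ofLM_sub_add_ne_zero {R : Type*} [CommRing R] [IsDomain R] {p q : ℕ} [CharP R q]
    (hp : p.Prime) {L M : ℤ} (h : (4 * p : ℤ) = L ^ 2 + 27 * M ^ 2) (hq2 : q ≠ 2) (hq7 : q ≠ 7)
    (hqp : q ≠ p) : ((ofLM (L - 27 * M) (L + M)).norm : R) ≠ 0 := by
  have hnorm : (ofLM (L - 27 * M) (L + M)).norm = ((2 ^ 4 * 7 * p : ℕ) : ℤ) := by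
    rw [norm_ofLM]
    push_cast
    linear_combination -28 * h
  rw [hnorm, Int.cast_natCast, Nat.cast_mul, Nat.cast_mul, Nat.cast_pow]
  exact mul_ne_zero (mul_ne_zero
    (pow_ne_zero 4 (CharP.cast_ne_zero_of_ne_of_prime R Nat.prime_two hq2))
    (CharP.cast_ne_zero_of_ne_of_prime R (by norm_num) hq7))
    (CharP.cast_ne_zero_of_ne_of_prime R hp hqp)

theorem pow_eq_iff_exists_modEq {F : Type*} [Field F] [IsAlgClosed F] {w : F}
    (hw : IsPrimitiveRoot w 3) {q : ℕ} [Fact q.Prime] [CharP F q] {ε : ℤˣ} (hε : q ≡ ε [ZMOD 3])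
    (hq7 : q % 7 = 3 ∨ q % 7 = 4) {p : ℕ} [Fact p.Prime] (hqp : q ≠ p) {r : ZMod p}
    (hr : IsPrimitiveRoot r 3) {L M : ℤ} (h : (4 * p : ℤ) = L ^ 2 + 27 * M ^ 2)
    (hLM : evalAt hr (ofLM L M) = 0) :
    (q : ZMod p) ^ ((p - 1) / 3) = r ↔ ∃ t : ℤ, (t ^ 3 - t ^ 2 - 9 * t + 1) * L ≡
      -(t ^ 3 + 27 * t ^ 2 - 9 * t - 27) * M [ZMOD (q : ℤ)] := by
  obtain ⟨i, hi⟩ := exists_pow_card_sub_one_div_eq hr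
    (CharP.cast_ne_zero_of_ne_of_prime (ZMod p) Fact.out hqp.symm)
  rw [ZMod.card] at hi
  have hsymb := (isKummerSymbol_ofLM hw hε hqp hr h hLM hi).mul
    (isKummerSymbol_ofLM_one_one hw hε hq7)
  simp only [ofLM_mul_ofLM, mul_one] at hsymb
  have h2 : (2 : F) ≠ 0 :=
    mod_cast CharP.cast_ne_zero_of_ne_of_prime F Nat.prime_two (show q ≠ 2 by omega)
  have hnorm := norm_ofLM_sub_add_ne_zero (R := F) Fact.out h (by omega) (by omega) hqp
  calc (q : ZMod p) ^ ((p - 1) / 3) = r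
      ↔ w ^ i * w ^ 2 = 1 := by
        rw [hi, ← pow_add, ← hw.pow_eq_one, pow_eq_pow_iff_of_isPrimitiveRoot hw hr, pow_succ' r 2,
          pow_add, mul_left_inj' (pow_ne_zero 2 (hr.ne_zero three_ne_zero))]
    _ ↔ _ := hsymb.eq_one_iff_exists h2 hε hnorm
    _ ↔ _ := exists_congr fun t ↦ (cubic_modEq_iff L M t).symm

theorem rule_e_minus_general (p : ℕ) (hp : p.Prime) (hp3 : p % 3 = 1)
    (L M : ℤ) (h : (4 * p : ℤ) = L ^ 2 + 27 * M ^ 2)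
    (q : ℕ) (hq : q.Prime) (hq5 : 5 ≤ q) (hqp : q ≠ p)
    (hq7 : q % 7 = 3 ∨ q % 7 = 4) :
    ((q : ZMod p) ^ ((p - 1) / 3) =
        ((-(L + 3 * M) : ℤ) : ZMod p) * (((6 * M : ℤ) : ZMod p))⁻¹) ↔
      ∃ t : ℤ, (t ^ 3 - t ^ 2 - 9 * t + 1) * L ≡
        -(t ^ 3 + 27 * t ^ 2 - 9 * t - 27) * M [ZMOD (q : ℤ)] := by
  have : Fact p.Prime := ⟨hp⟩
  have : Fact q.Prime := ⟨hq⟩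
  let F := AlgebraicClosure (ZMod q)
  have : CharP F q := charP_of_injective_algebraMap (algebraMap (ZMod q) F).injective q
  have : NeZero ((3 : ℕ) : F) :=
    ⟨CharP.cast_ne_zero_of_ne_of_prime F Nat.prime_three (show q ≠ 3 by omega)⟩
  obtain ⟨w, hw⟩ := HasEnoughRootsOfUnity.exists_primitiveRoot F 3
  obtain ⟨ε, hε⟩ := exists_units_modEq_three (q := q) fun h3 ↦ by
    have := (Nat.prime_dvd_prime_iff_eq Nat.prime_three hq).1 h3
    omega
  obtain ⟨hr, hLM⟩ := exists_isPrimitiveRoot_three_evalAt_ofLM h (intCast_six_mul_ne_zero hp3 h)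
  exact pow_eq_iff_exists_modEq hw hε hq7 hqp hr h hLM

end CubicRule

/-- Rule (e) with the minus sign: for a prime `q ≥ 5`, `q ≡ ±3 (mod 7)`, `q ≠ p`,
`F_q(L,M) = ω` iff `(t³−t²−9t+1)L ≡ −(t³+27t²−9t−27)M (mod q)` for some `t`. -/
theorem rule_e_minus (p : ℕ) (hp : p.Prime) (hp3 : p % 3 = 1)
    (L M : ℤ) (hL : 0 < L) (hM : 0 < M) (h : (4 * p : ℤ) = L ^ 2 + 27 * M ^ 2)
    (q : ℕ) (hq : q.Prime) (hq5 : 5 ≤ q) (hqp : q ≠ p)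
    (hq7 : q % 7 = 3 ∨ q % 7 = 4) :
    ((q : ZMod p) ^ ((p - 1) / 3) =
        ((-(L + 3 * M) : ℤ) : ZMod p) * (((6 * M : ℤ) : ZMod p))⁻¹) ↔
      ∃ t : ℤ, (t ^ 3 - t ^ 2 - 9 * t + 1) * L ≡
        -(t ^ 3 + 27 * t ^ 2 - 9 * t - 27) * M [ZMOD (q : ℤ)] :=
  rule_e_minus_general p hp hp3 L M h q hq hq5 hqp hq7
end

section
/- Let p be a prime with p ≡ 1 (mod 3), let L, M be positive integers with 4p = L² + 27M², and let q ≥ 5 be a prime with q ≠ p whose residue modulo 13 lies in {2, 3, 10, 11}. Then q^{(p−1)/3} ≡ −(L + 3M)·(6M)⁻¹ (mod p) if and only if there exists an integer t such that (t³ − 5t² − 9t + 5)·L ≡ (5t³ + 27t² − 45t − 27)·M (mod q). -/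
/-!
Let `χ` be the cubic residue character of `𝔽_p` with values in `ℤ[ω]` and let `q ≠ p` be a prime.
Raising the Gauss sum of `χ` to the power `q` in characteristic `q` gives
`χ q = (J / star J) ^ k` in `ℤ[ω] / q`, where `J` is the Jacobi sum of `χ` with itself and
`q = ±(3k + 1)`. As `J` is a rational multiple of `α = L + 3M√-3`, the same holds with `α` for `J`.

For two primes `p` and `p'` with elements `α` and `β`, it follows that `χ q = χ' q` exactly when
`y = (α * star β) / (star α * β)` satisfies `y ^ k = 1` modulo `q`, that is, when `y` is the cube
of an element of the norm-one torus of `ℤ[ω] / q`. The rational points of that torus are the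
quotients `(t - √-3) / (t + √-3)`, and clearing denominators turns the condition into a cubic
congruence in `t`. The rule is the comparison of `p` with `4 * 13 = 5 ^ 2 + 27 * 1 ^ 2`, for which
`χ' q = ω` if and only if `q ≡ ±2, ±3 (mod 13)`.
-/

open QuadraticAlgebra (omega norm)

lemma isPrimitiveRoot_three_of_sq_add_add_one {R : Type*} [CommRing R] {w : R} (h3 : (3 : R) ≠ 0)
    (hw : w ^ 2 + w + 1 = 0) : IsPrimitiveRoot w 3 := by
  rw [IsPrimitiveRoot.iff_orderOf]
  refine orderOf_eq_prime (by linear_combination (w - 1) * hw) fun hw1 ↦ h3 ?_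
  rw [hw1] at hw
  linear_combination hw

/-- The Eisenstein integers `ℤ[ω]` with `ω ^ 2 = -1 - ω`, in the coordinates `re + im * ω`. -/
abbrev EisensteinInt : Type := QuadraticAlgebra ℤ (-1) (-1)

namespace EisensteinInt

lemma norm_eq (z : EisensteinInt) : norm z = z.re ^ 2 - z.re * z.im + z.im ^ 2 := by
  rw [QuadraticAlgebra.norm_def]
  ring

lemma four_mul_norm (z : EisensteinInt) :
    4 * norm z = (2 * z.re - z.im) ^ 2 + 3 * z.im ^ 2 := by
  rw [norm_eq]
  ring

lemma norm_nonneg (z : EisensteinInt) : 0 ≤ norm z := by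
  linarith [four_mul_norm z, sq_nonneg (2 * z.re - z.im), sq_nonneg z.im]

lemma norm_eq_zero_iff {z : EisensteinInt} : norm z = 0 ↔ z = 0 := by
  refine ⟨fun hz ↦ ?_, fun hz ↦ by rw [hz, QuadraticAlgebra.norm_zero]⟩
  have h4 := four_mul_norm z
  have him : z.im = 0 := by
    rw [← sq_eq_zero_iff]
    linarith [sq_nonneg (2 * z.re - z.im), sq_nonneg z.im]
  have hre : z.re = 0 := by
    rw [norm_eq, him] at hz
    simpa using hz
  exact QuadraticAlgebra.ext hre him

instance : NoZeroDivisors EisensteinInt where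
  eq_zero_or_eq_zero_of_mul_eq_zero {x y} hxy := by
    simpa only [map_mul, mul_eq_zero, norm_eq_zero_iff] using
      norm_eq_zero_iff.mpr hxy

instance : IsDomain EisensteinInt := NoZeroDivisors.to_isDomain _

lemma omega_sq_add_omega_add_one : (omega : EisensteinInt) ^ 2 + omega + 1 = 0 := by
  ext <;> simp [sq, QuadraticAlgebra.re_one, QuadraticAlgebra.im_one]

lemma isPrimitiveRoot_omega : IsPrimitiveRoot (omega : EisensteinInt) 3 :=
  isPrimitiveRoot_three_of_sq_add_add_one (by decide) omega_sq_add_omega_add_one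

lemma star_eq_self_of_im_eq_zero {z : EisensteinInt} (hz : z.im = 0) : star z = z :=
  QuadraticAlgebra.ext (by simp [hz]) (by simp [hz])

lemma mul_star_eq_one_of_pow_eq_one {z : EisensteinInt} {n : ℕ} (hn : n ≠ 0) (hz : z ^ n = 1) :
    z * star z = 1 := by
  have hnorm : norm z = 1 := by
    rw [← pow_eq_one_iff_of_nonneg (norm_nonneg z) hn, ← map_pow, hz, map_one]
  rw [← QuadraticAlgebra.algebraMap_norm_eq_mul_star, hnorm, map_one]

section eval

variable {R : Type*} [CommRing R] {w : R}

/-- The ring homomorphism `ℤ[ω] → R` sending `ω` to a root `w` of `X ^ 2 + X + 1`. -/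
def eval (hw : w ^ 2 + w + 1 = 0) : EisensteinInt →+* R :=
  (QuadraticAlgebra.lift ⟨w, by rw [neg_one_smul, neg_one_smul]; linear_combination hw⟩ :
    EisensteinInt →ₐ[ℤ] R)

lemma eval_apply (hw : w ^ 2 + w + 1 = 0) (z : EisensteinInt) :
    eval hw z = z.re + z.im * w := by
  simp [eval, QuadraticAlgebra.lift]

lemma eval_omega (hw : w ^ 2 + w + 1 = 0) : eval hw omega = w := by
  simp [eval_apply]

lemma eval_mul_eval_star (hw : w ^ 2 + w + 1 = 0) (z : EisensteinInt) :
    eval hw z * eval hw (star z) = (norm z : ℤ) := by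
  rw [← map_mul, ← QuadraticAlgebra.algebraMap_norm_eq_mul_star, algebraMap_int_eq, eq_intCast,
    map_intCast]

lemma eq_of_eval_eq_of_pow_three (h3 : (3 : R) ≠ 0) (hw : w ^ 2 + w + 1 = 0)
    {x y : EisensteinInt} (hx : x ^ 3 = 1) (hy : y ^ 3 = 1) (h : eval hw x = eval hw y) :
    x = y := by
  have hquot : (x * y ^ 2 - 1) * ((x * y ^ 2) ^ 2 + x * y ^ 2 + 1) = 0 := by
    linear_combination y ^ 6 * hx + (y ^ 3 + 1) * hy
  rcases mul_eq_zero.mp hquot with h1 | h1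
  · linear_combination y * h1 - x * hy
  · have hy' : eval hw y ^ 3 = 1 := by rw [← map_pow, hy, map_one]
    have h0 := congrArg (eval hw) h1
    simp only [map_add, map_mul, map_pow, map_one, map_zero, h] at h0
    exact absurd (by linear_combination h0 - (eval hw y ^ 3 + 2) * hy') h3

variable (q : ℕ) [Fact q.Prime] [CharP R q]

lemma eval_pow_char (hw : w ^ 2 + w + 1 = 0) (z : EisensteinInt) :
    eval hw z ^ q = z.re + z.im * w ^ q := by
  rw [← frobenius_def, eval_apply, map_add, map_mul, map_intCast, map_intCast, frobenius_def]

variable {q}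

lemma eval_pow_char_of_mod_three_eq_one (hq : q % 3 = 1) (hw : w ^ 2 + w + 1 = 0)
    (z : EisensteinInt) : eval hw z ^ q = eval hw z := by
  have hw3 : w ^ 3 = 1 := by linear_combination (w - 1) * hw
  rw [eval_pow_char, pow_eq_pow_mod q hw3, hq, pow_one, eval_apply]

lemma eval_pow_char_of_mod_three_eq_two (hq : q % 3 = 2) (hw : w ^ 2 + w + 1 = 0)
    (z : EisensteinInt) : eval hw z ^ q = eval hw (star z) := by
  have hw3 : w ^ 3 = 1 := by linear_combination (w - 1) * hw
  rw [eval_pow_char, pow_eq_pow_mod q hw3, hq, eval_apply]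
  simp only [QuadraticAlgebra.re_star, QuadraticAlgebra.im_star]
  push_cast
  linear_combination (z.im : R) * hw

lemma exists_eval_eq_of_pow_three_eq_one {F : Type*} [Field F] {r : F} (hr : r ^ 2 + r + 1 = 0)
    {x : F} (hx : x ^ 3 = 1) : ∃ u : EisensteinInt, u ^ 3 = 1 ∧ eval hr u = x := by
  have hω := isPrimitiveRoot_omega.pow_eq_one
  have hfac : (x - 1) * ((x - r) * (x - r ^ 2)) = 0 := by
    linear_combination hx + (x - 1) * (r - 1 - x) * hr
  rcases mul_eq_zero.mp hfac with h | h
  · exact ⟨1, one_pow 3, by rw [map_one, ← sub_eq_zero.mp h]⟩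
  rcases mul_eq_zero.mp h with h | h
  · exact ⟨omega, hω, by rw [eval_omega, ← sub_eq_zero.mp h]⟩
  · exact ⟨omega ^ 2, by rw [pow_right_comm, hω, one_pow],
      by rw [map_pow, eval_omega, ← sub_eq_zero.mp h]⟩

end eval

end EisensteinInt

open EisensteinInt

section JacobiSum

variable {F : Type*} [Field F] [Fintype F]

lemma sum_pow_mul_one_sub_pow_eq_zero {m n : ℕ} (hmn : m + n < Fintype.card F - 1) :
    ∑ x : F, x ^ m * (1 - x) ^ n = 0 := by
  have hexpand (x : F) : x ^ m * (1 - x) ^ n =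
      ∑ j ∈ Finset.range (n + 1), (-1) ^ j * (n.choose j : F) * x ^ (m + j) := by
    rw [sub_eq_neg_add, add_pow, Finset.mul_sum]
    refine Finset.sum_congr rfl fun j _ ↦ ?_
    rw [neg_pow]
    ring
  simp only [hexpand]
  rw [Finset.sum_comm]
  refine Finset.sum_eq_zero fun j hj ↦ ?_
  rw [← Finset.mul_sum, FiniteField.sum_pow_lt_card_sub_one, mul_zero]
  have := Finset.mem_range.mp hj
  lia

lemma jacobiSum_mul_jacobiSum_inv_of_isDomain {R : Type*} [CommRing R] [IsDomain R]
    (h : ringChar R ≠ ringChar F) {χ φ : MulChar F R} (hχ : χ ≠ 1) (hφ : φ ≠ 1)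
    (hχφ : χ * φ ≠ 1) : jacobiSum χ φ * jacobiSum χ⁻¹ φ⁻¹ = Fintype.card F := by
  have hinj := IsFractionRing.injective R (FractionRing R)
  have hchar : ringChar (FractionRing R) = ringChar R := by
    have := charP_of_injective_algebraMap hinj (ringChar R)
    exact (ringChar.eq (FractionRing R) (ringChar R))
  have hne {ψ : MulChar F R} := (MulChar.ringHomComp_ne_one_iff (χ := ψ) hinj).mpr
  apply hinj
  rw [map_mul, ← jacobiSum_ringHomComp, ← jacobiSum_ringHomComp, ← MulChar.ringHomComp_inv,
    ← MulChar.ringHomComp_inv, map_natCast]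
  refine jacobiSum_mul_jacobiSum_inv (hchar ▸ h) (hne hχ) (hne hφ) ?_
  rw [← MulChar.ringHomComp_mul]
  exact hne hχφ

end JacobiSum

section CubicResidueChar

variable {F : Type*} [Field F] [Fintype F] {r : F}

/-- `χ` is the cubic residue character of the finite field `F` with values in `ℤ[ω]`, where `ω`
reduces to the chosen cube root of unity `r` of `F`. -/
structure IsCubicResidueChar (hr : r ^ 2 + r + 1 = 0) (χ : MulChar F EisensteinInt) : Prop where
  pow_three : χ ^ 3 = 1
  eval_apply (x : F) : eval hr (χ x) = x ^ ((Fintype.card F - 1) / 3)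

lemma three_dvd_card_sub_one (h3 : (3 : F) ≠ 0) (hr : r ^ 2 + r + 1 = 0) :
    3 ∣ Fintype.card F - 1 := by
  have hroot := isPrimitiveRoot_three_of_sq_add_add_one h3 hr
  rw [hroot.eq_orderOf]
  exact orderOf_dvd_of_pow_eq_one (FiniteField.pow_card_sub_one_eq_one r (hroot.ne_zero (by simp)))

lemma exists_isCubicResidueChar (h3 : (3 : F) ≠ 0) (hr : r ^ 2 + r + 1 = 0) :
    ∃ χ : MulChar F EisensteinInt, IsCubicResidueChar hr χ := by
  classical
  obtain ⟨m, hm⟩ := three_dvd_card_sub_one h3 hr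
  have hm0 : m ≠ 0 := by
    rintro rfl
    have := Fintype.one_lt_card (α := F)
    lia
  obtain ⟨g, hg⟩ := IsCyclic.exists_generator (α := Fˣ)
  have hgm : ((g : F) ^ m) ^ 3 = 1 := by
    rw [← pow_mul, mul_comm, ← hm, FiniteField.pow_card_sub_one_eq_one _ g.ne_zero]
  obtain ⟨u, hu, hug⟩ := exists_eval_eq_of_pow_three_eq_one hr hgm
  obtain ⟨χ, hχ, hχg⟩ : ∃ χ : MulChar F EisensteinInt, χ ^ 3 = 1 ∧ χ g = u := by
    have hmem : Units.ofPowEqOne u 3 hu (by simp) ∈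
        rootsOfUnity (Fintype.card Fˣ) EisensteinInt := by
      rw [mem_rootsOfUnity, Fintype.card_units, hm, pow_mul, Units.pow_ofPowEqOne, one_pow]
    refine ⟨MulChar.ofRootOfUnity hmem hg, ?_, MulChar.ofRootOfUnity_spec hmem hg⟩
    rw [MulChar.eq_iff hg, MulChar.pow_apply_coe, MulChar.ofRootOfUnity_spec, MulChar.one_apply_coe,
      Units.val_ofPowEqOne, hu]
  refine ⟨χ, hχ, fun x ↦ ?_⟩
  rw [hm, Nat.mul_div_cancel_left m (by simp)]
  obtain rfl | hx := eq_or_ne x 0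
  · rw [χ.map_zero, map_zero, zero_pow hm0]
  · obtain ⟨n, hn⟩ := mem_powers_iff_mem_zpowers.mpr (hg (Units.mk0 x hx))
    have hxn : x = (g : F) ^ n := by simpa using (congrArg Units.val hn).symm
    rw [hxn, map_pow, map_pow, hχg, hug, pow_right_comm]

namespace IsCubicResidueChar

variable {hr : r ^ 2 + r + 1 = 0} {χ : MulChar F EisensteinInt}

lemma apply_pow_three (hχ : IsCubicResidueChar hr χ) {x : F} (hx : x ≠ 0) : χ x ^ 3 = 1 := by
  rw [← MulChar.pow_apply' χ (by simp), hχ.pow_three, MulChar.one_apply hx.isUnit]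

lemma ne_zero_of_pow_eq_root (hχ : IsCubicResidueChar hr χ) {x : F}
    (hx : x ^ ((Fintype.card F - 1) / 3) = r) : x ≠ 0 := by
  rintro rfl
  rw [← hχ.eval_apply, χ.map_zero, map_zero] at hx
  rw [← hx] at hr
  simp at hr

lemma apply_eq_omega_iff (h3 : (3 : F) ≠ 0) (hχ : IsCubicResidueChar hr χ) {x : F} (hx : x ≠ 0) :
    χ x = omega ↔ x ^ ((Fintype.card F - 1) / 3) = r := by
  rw [← hχ.eval_apply]
  refine ⟨fun h ↦ by rw [h, eval_omega], fun h ↦ ?_⟩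
  exact eq_of_eval_eq_of_pow_three h3 hr (hχ.apply_pow_three hx) isPrimitiveRoot_omega.pow_eq_one
    (by rw [h, eval_omega])

lemma ne_one (h3 : (3 : F) ≠ 0) (hχ : IsCubicResidueChar hr χ) : χ ≠ 1 := by
  rintro rfl
  have hdvd : Fintype.card F - 1 ∣ (Fintype.card F - 1) / 3 := by
    refine (FiniteField.forall_pow_eq_one_iff F _).mp fun x ↦ Units.ext ?_
    rw [Units.val_pow_eq_pow_val, ← hχ.eval_apply, MulChar.one_apply_coe, map_one, Units.val_one]
  obtain ⟨m, hm⟩ := three_dvd_card_sub_one h3 hr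
  have := Fintype.one_lt_card (α := F)
  have := Nat.le_of_dvd (by lia) hdvd
  lia

lemma apply_neg_one (hχ : IsCubicResidueChar hr χ) : χ (-1) = 1 :=
  MulChar.val_neg_one_eq_one_of_odd_order (by decide) hχ.pow_three

lemma star_apply (hχ : IsCubicResidueChar hr χ) (x : F) : star (χ x) = χ⁻¹ x := by
  rw [MulChar.inv_apply']
  by_cases hx : x = 0
  · rw [hx, inv_zero, χ.map_zero, star_zero]
  · have h := mul_star_eq_one_of_pow_eq_one (by simp) (hχ.apply_pow_three hx)
    have h' : χ x * χ x⁻¹ = 1 := by rw [← map_mul, mul_inv_cancel₀ hx, map_one]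
    linear_combination χ x⁻¹ * h - star (χ x) * h'

lemma jacobiSum_inv (hχ : IsCubicResidueChar hr χ) :
    jacobiSum χ⁻¹ χ⁻¹ = star (jacobiSum χ χ) := by
  simp only [jacobiSum, star_sum, star_mul', hχ.star_apply]

lemma norm_jacobiSum (h3 : (3 : F) ≠ 0) (hχ : IsCubicResidueChar hr χ) :
    norm (jacobiSum χ χ) = Fintype.card F := by
  have hχ1 := hχ.ne_one h3
  have hχχ : χ * χ ≠ 1 := fun h ↦ hχ1 (by rw [← hχ.pow_three, pow_succ, sq, h, one_mul])
  have hchar : ringChar EisensteinInt ≠ ringChar F := by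
    rw [ringChar.eq_zero]
    exact (CharP.ringChar_ne_zero_of_finite F).symm
  have hJ := jacobiSum_mul_jacobiSum_inv_of_isDomain hchar hχ1 hχ1 hχχ
  rw [hχ.jacobiSum_inv, ← QuadraticAlgebra.algebraMap_norm_eq_mul_star] at hJ
  simpa using congrArg QuadraticAlgebra.re hJ

lemma three_dvd_im_jacobiSum (h3 : (3 : F) ≠ 0) (hχ : IsCubicResidueChar hr χ) :
    3 ∣ (jacobiSum χ χ).im := by
  obtain ⟨z, -, hz⟩ := exists_jacobiSum_eq_neg_one_add (by simp) hχ.pow_three hχ.pow_three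
    (three_dvd_card_sub_one h3 hr) isPrimitiveRoot_omega
  have hω : ((omega : EisensteinInt) - 1) ^ 2 = ((-3 : ℤ) : EisensteinInt) * omega := by
    push_cast
    linear_combination omega_sq_add_omega_add_one
  refine ⟨z.im - z.re, ?_⟩
  rw [hz, hω]
  simp only [QuadraticAlgebra.im_add, QuadraticAlgebra.im_neg, QuadraticAlgebra.im_one,
    QuadraticAlgebra.im_mul, QuadraticAlgebra.re_mul, QuadraticAlgebra.re_intCast,
    QuadraticAlgebra.im_intCast, QuadraticAlgebra.omega_re, QuadraticAlgebra.omega_im, Int.cast_id]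
  ring

lemma eval_jacobiSum (h3 : (3 : F) ≠ 0) (hχ : IsCubicResidueChar hr χ) :
    eval hr (jacobiSum χ χ) = 0 := by
  obtain ⟨m, hm⟩ := three_dvd_card_sub_one h3 hr
  have := Fintype.one_lt_card (α := F)
  simp only [jacobiSum, map_sum, map_mul, hχ.eval_apply]
  exact sum_pow_mul_one_sub_pow_eq_zero (by lia)

end IsCubicResidueChar

end CubicResidueChar

section QuadraticForm

/-- The element `L + 3M√-3` of `ℤ[ω]`, twice the primary prime over `p` when
`4 * p = L ^ 2 + 27 * M ^ 2`. -/
def EisensteinInt.ofForm (L M : ℤ) : EisensteinInt := ⟨L + 3 * M, 6 * M⟩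

/-- The cube root of unity modulo `p` to which `ω` reduces modulo the prime of `ℤ[ω]` over `p`
that divides `L + 3M√-3`. -/
def formRoot (p : ℕ) (L M : ℤ) : ZMod p :=
  ((-(L + 3 * M) : ℤ) : ZMod p) * ((6 * M : ℤ) : ZMod p)⁻¹

lemma EisensteinInt.norm_ofForm (L M : ℤ) : norm (ofForm L M) = L ^ 2 + 27 * M ^ 2 := by
  rw [norm_eq, ofForm]
  ring

variable {p : ℕ} [Fact p.Prime] {L M : ℤ}

lemma six_mul_ne_zero_of_form (h : (4 * p : ℤ) = L ^ 2 + 27 * M ^ 2) :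
    ((6 * M : ℤ) : ZMod p) ≠ 0 := by
  have hp := Nat.prime_iff_prime_int.mp (Fact.out (p := p.Prime))
  have hM : M ≠ 0 := by
    rintro rfl
    obtain ⟨l, rfl⟩ : 2 ∣ L := Int.prime_two.dvd_of_dvd_pow (n := 2) ⟨2 * p, by linarith⟩
    exact hp.not_isSquare ⟨l, by linarith⟩
  have hM2 : 0 < M ^ 2 := by positivity
  have hp7 : (7 : ℤ) ≤ p := by linarith [sq_nonneg L]
  rw [Ne, ZMod.intCast_zmod_eq_zero_iff_dvd, hp.dvd_mul, not_or]
  refine ⟨fun hdvd ↦ by linarith [Int.le_of_dvd (by simp) hdvd], fun hdvd ↦ ?_⟩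
  nlinarith [Int.le_of_dvd hM2 (pow_dvd_pow_of_dvd hdvd 2), sq_nonneg L]

lemma formRoot_mul (h : (4 * p : ℤ) = L ^ 2 + 27 * M ^ 2) :
    formRoot p L M * (6 * M : ℤ) = (-(L + 3 * M) : ℤ) := by
  rw [formRoot, mul_assoc, inv_mul_cancel₀ (six_mul_ne_zero_of_form h), mul_one]

lemma three_ne_zero_of_form (h : (4 * p : ℤ) = L ^ 2 + 27 * M ^ 2) : (3 : ZMod p) ≠ 0 := by
  intro h3
  refine six_mul_ne_zero_of_form h ?_
  push_cast
  linear_combination (2 * M : ZMod p) * h3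

lemma formRoot_sq_add_add_one (h : (4 * p : ℤ) = L ^ 2 + 27 * M ^ 2) :
    formRoot p L M ^ 2 + formRoot p L M + 1 = 0 := by
  have hmul := formRoot_mul h
  have hnorm : (L : ZMod p) ^ 2 + 27 * M ^ 2 = 0 := by
    have := congrArg (Int.cast (R := ZMod p)) h
    push_cast at this
    rw [← this, ZMod.natCast_self, mul_zero]
  refine (mul_eq_zero_iff_left (pow_ne_zero 2 (six_mul_ne_zero_of_form h))).mp ?_
  push_cast at hmul ⊢
  linear_combination (formRoot p L M * (6 * M) - L + 3 * M) * hmul + hnorm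

lemma eval_ofForm (h : (4 * p : ℤ) = L ^ 2 + 27 * M ^ 2) :
    eval (formRoot_sq_add_add_one h) (ofForm L M) = 0 := by
  rw [eval_apply, mul_comm]
  linear_combination (norm := (simp only [ofForm]; push_cast; ring)) formRoot_mul h

/-- The imaginary part of `x * star y` is divisible by `3 * p`, hence vanishes because the norm of
`x * star y` is only `4 * p ^ 2`. -/
lemma mul_star_comm_of_eval_eq_zero {r : ZMod p} (h3 : (3 : ZMod p) ≠ 0) (hr : r ^ 2 + r + 1 = 0)
    {x y : EisensteinInt} (hx : eval hr x = 0) (hy : eval hr y = 0) (hx3 : 3 ∣ x.im)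
    (hy3 : 3 ∣ y.im) (hnx : norm x = p) (hny : norm y = 4 * p) : x * star y = star x * y := by
  have him : (x * star y).im = x.im * y.re - x.re * y.im := by
    simp only [QuadraticAlgebra.im_mul, QuadraticAlgebra.re_star, QuadraticAlgebra.im_star]
    ring
  have hp3 : IsCoprime (p : ℤ) 3 := by
    refine (Nat.prime_iff_prime_int.mp Fact.out).coprime_iff_not_dvd.mpr fun hdvd ↦ h3 ?_
    exact_mod_cast (ZMod.intCast_zmod_eq_zero_iff_dvd 3 p).mpr hdvd
  obtain ⟨k, hk⟩ : (p : ℤ) * 3 ∣ (x * star y).im := by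
    rw [him]
    refine hp3.mul_dvd ?_ (dvd_sub (hx3.mul_right _) (hy3.mul_left _))
    rw [← ZMod.intCast_zmod_eq_zero_iff_dvd]
    rw [eval_apply] at hx hy
    push_cast
    linear_combination (x.im : ZMod p) * hy - (y.im : ZMod p) * hx
  have hk0 : k = 0 := by
    have h4 := four_mul_norm (x * star y)
    rw [map_mul, QuadraticAlgebra.norm_star, hnx, hny, hk] at h4
    have hp0 : (0 : ℤ) < p ^ 2 := pow_pos (by exact_mod_cast (Fact.out (p := p.Prime)).pos) 2
    by_contra hk0
    have hk2 : 0 < k ^ 2 := by positivity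
    nlinarith [sq_nonneg (2 * (x * star y).re - p * 3 * k), mul_le_mul_of_nonneg_left hk2 hp0.le]
  have hstar : star (x * star y) = x * star y :=
    star_eq_self_of_im_eq_zero (by rw [hk, hk0, mul_zero])
  rw [← hstar, star_mul', star_star]

end QuadraticForm

section Reciprocity

lemma zpow_three_mul_mul_self {K : Type*} [DivisionRing K] {q : ℕ} {k : ℤ}
    (hk : (q : ℤ) = 3 * k + 1) {v : K} (hv : v ≠ 0) : v ^ (3 * k) * v = v ^ q := by
  rw [← zpow_add_one₀ hv, ← hk, zpow_natCast]

lemma zpow_three_mul_mul_self_mul_pow {K : Type*} [DivisionRing K] {q : ℕ} {k : ℤ}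
    (hk : (q : ℤ) = -(3 * k + 1)) {v : K} (hv : v ≠ 0) : v ^ (3 * k) * v * v ^ q = 1 := by
  rw [← zpow_add_one₀ hv, ← zpow_natCast v q, hk, ← zpow_add₀ hv, add_neg_cancel, zpow_zero]

lemma gaussSum_pow_char {R R' : Type*} [CommRing R] [Fintype R] [CommRing R'] {q : ℕ}
    [Fact q.Prime] [CharP R' q] (hq : IsUnit (q : R)) (χ : MulChar R R') (ψ : AddChar R R') :
    (χ ^ q) q * gaussSum χ ψ ^ q = gaussSum (χ ^ q) ψ := by
  rw [gaussSum_frob, AddChar.pow_mulShift, ← gaussSum_mulShift _ ψ hq.unit, hq.unit_spec]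

lemma natCast_card_ne_zero {F K : Type*} [Field F] [Fintype F] [Field K] {q : ℕ} [Fact q.Prime]
    [CharP K q] (hq : (q : F) ≠ 0) : (Fintype.card F : K) ≠ 0 := by
  intro h
  obtain ⟨n, hp, hcard⟩ := FiniteField.card F (ringChar F)
  rw [CharP.cast_eq_zero_iff K q, hcard] at h
  refine hq ((CharP.cast_eq_zero_iff F (ringChar F) q).mpr ?_)
  exact ((Nat.prime_dvd_prime_iff_eq Fact.out hp).mp
    (Nat.Prime.dvd_of_dvd_pow Fact.out h)).symm.dvd

namespace IsCubicResidueChar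

variable {F K : Type*} [Field F] [Fintype F] [Field K] {r : F} {hr : r ^ 2 + r + 1 = 0}
  {χ : MulChar F EisensteinInt} {w : K} {ψ : AddChar F K}

lemma orderOf_ringHomComp (hχ : IsCubicResidueChar hr χ) (h3F : (3 : F) ≠ 0) (h3K : (3 : K) ≠ 0)
    (hw : w ^ 2 + w + 1 = 0) : orderOf (χ.ringHomComp (eval hw)) = 3 := by
  refine orderOf_eq_prime ?_ fun h ↦ hχ.ne_one h3F (MulChar.ext fun x ↦ ?_)
  · rw [MulChar.ringHomComp_pow, hχ.pow_three, MulChar.ringHomComp_one]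
  · refine eq_of_eval_eq_of_pow_three h3K hw (hχ.apply_pow_three x.ne_zero) ?_ ?_
    · rw [MulChar.one_apply_coe, one_pow]
    · rw [← MulChar.ringHomComp_apply, h, MulChar.one_apply_coe, MulChar.one_apply_coe, map_one]

lemma eval_jacobiSum_mul_eval_star (hχ : IsCubicResidueChar hr χ) (h3F : (3 : F) ≠ 0)
    (hw : w ^ 2 + w + 1 = 0) :
    eval hw (jacobiSum χ χ) * eval hw (star (jacobiSum χ χ)) = Fintype.card F := by
  rw [eval_mul_eval_star, hχ.norm_jacobiSum h3F, Int.cast_natCast]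

lemma gaussSum_pow_three (hχ : IsCubicResidueChar hr χ) (h3F : (3 : F) ≠ 0) (h3K : (3 : K) ≠ 0)
    (hw : w ^ 2 + w + 1 = 0) (hψ : ψ.IsPrimitive) :
    gaussSum (χ.ringHomComp (eval hw)) ψ ^ 3 =
      eval hw (jacobiSum χ χ) ^ 2 * eval hw (star (jacobiSum χ χ)) := by
  have hord := hχ.orderOf_ringHomComp h3F h3K hw
  have hpow := gaussSum_pow_eq_prod_jacobiSum (by rw [hord]; simp) hψ
  rw [hord, Nat.Ico_succ_singleton, Finset.prod_singleton, pow_one, jacobiSum_ringHomComp,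
    MulChar.ringHomComp_apply, hχ.apply_neg_one, map_one,
    ← hχ.eval_jacobiSum_mul_eval_star h3F hw] at hpow
  rw [hpow]
  ring

lemma gaussSum_mul_gaussSum_sq (hχ : IsCubicResidueChar hr χ) (h3F : (3 : F) ≠ 0)
    (h3K : (3 : K) ≠ 0) (hw : w ^ 2 + w + 1 = 0) (hψ : ψ.IsPrimitive) :
    gaussSum (χ.ringHomComp (eval hw)) ψ * gaussSum (χ.ringHomComp (eval hw) ^ 2) ψ =
      eval hw (jacobiSum χ χ) * eval hw (star (jacobiSum χ χ)) := by
  have hord := hχ.orderOf_ringHomComp h3F h3K hw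
  have hne : χ.ringHomComp (eval hw) ≠ 1 := by
    rw [Ne, ← orderOf_eq_one_iff, hord]
    simp
  have hmul := gaussSum_mul_gaussSum_pow_orderOf_sub_one hne hψ
  rw [hord, MulChar.ringHomComp_apply, hχ.apply_neg_one, map_one, one_mul] at hmul
  rw [hmul, hχ.eval_jacobiSum_mul_eval_star h3F hw]

variable {q : ℕ} [Fact q.Prime] [CharP K q]

lemma eval_apply_natCast_mul_gaussSum_pow (hχ : IsCubicResidueChar hr χ)
    (hw : w ^ 2 + w + 1 = 0) (hq : (q : F) ≠ 0) (hq3 : q % 3 = 1) :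
    eval hw (χ q) * gaussSum (χ.ringHomComp (eval hw)) ψ ^ q =
      gaussSum (χ.ringHomComp (eval hw)) ψ := by
  have hfrob := gaussSum_pow_char (q := q) hq.isUnit (χ.ringHomComp (eval hw)) ψ
  rwa [MulChar.ringHomComp_pow, pow_eq_pow_mod q hχ.pow_three, hq3, pow_one,
    MulChar.ringHomComp_apply] at hfrob

lemma eval_apply_natCast_sq_mul_gaussSum_pow (hχ : IsCubicResidueChar hr χ)
    (hw : w ^ 2 + w + 1 = 0) (hq : (q : F) ≠ 0) (hq3 : q % 3 = 2) :
    eval hw (χ q) ^ 2 * gaussSum (χ.ringHomComp (eval hw)) ψ ^ q =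
      gaussSum (χ.ringHomComp (eval hw) ^ 2) ψ := by
  have hfrob := gaussSum_pow_char (q := q) hq.isUnit (χ.ringHomComp (eval hw)) ψ
  rwa [MulChar.ringHomComp_pow, pow_eq_pow_mod q hχ.pow_three, hq3, ← MulChar.ringHomComp_pow,
    MulChar.pow_apply' _ (by simp), MulChar.ringHomComp_apply] at hfrob

lemma eval_apply_natCast_mul_gaussSum_zpow (hχ : IsCubicResidueChar hr χ) (h3F : (3 : F) ≠ 0)
    (h3K : (3 : K) ≠ 0) (hw : w ^ 2 + w + 1 = 0) (hψ : ψ.IsPrimitive) (hq : (q : F) ≠ 0) {k : ℤ}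
    (hk : (q : ℤ) = 3 * k + 1 ∨ (q : ℤ) = -(3 * k + 1)) :
    eval hw (χ q) * gaussSum (χ.ringHomComp (eval hw)) ψ ^ (3 * k) =
      eval hw (jacobiSum χ χ) ^ (3 * k) := by
  have hJJ := hχ.eval_jacobiSum_mul_eval_star h3F hw
  have hGG := hχ.gaussSum_mul_gaussSum_sq h3F h3K hw hψ
  have hcard : (Fintype.card F : K) ≠ 0 := natCast_card_ne_zero hq
  set G := gaussSum (χ.ringHomComp (eval hw)) ψ
  set J := eval hw (jacobiSum χ χ)
  set J' := eval hw (star (jacobiSum χ χ))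
  have hJ' : J * J' ≠ 0 := hJJ ▸ hcard
  have hJ : J ≠ 0 := left_ne_zero_of_mul hJ'
  have hG : G ≠ 0 := left_ne_zero_of_mul (hGG ▸ hJ')
  rcases hk with hk | hk
  · have hq3 : q % 3 = 1 := by lia
    have hJq : J ^ q = J := eval_pow_char_of_mod_three_eq_one hq3 hw _
    refine mul_right_cancel₀ (mul_ne_zero hJ hG) ?_
    linear_combination eval hw (χ q) * J * zpow_three_mul_mul_self hk hG
      - G * zpow_three_mul_mul_self hk hJ - G * hJq
      + J * hχ.eval_apply_natCast_mul_gaussSum_pow (ψ := ψ) hw hq hq3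
  · have hq3 : q % 3 = 2 := by lia
    have hJq : J ^ q = J' := eval_pow_char_of_mod_three_eq_two hq3 hw _
    have hcube : eval hw (χ q) ^ 3 = 1 := by rw [← map_pow, hχ.apply_pow_three hq, map_one]
    have hfrob := hχ.eval_apply_natCast_sq_mul_gaussSum_pow (ψ := ψ) hw hq hq3
    refine mul_right_cancel₀ hJ' ?_
    linear_combination (-(eval hw (χ q) * G ^ (3 * k))) * hGG
      - eval hw (χ q) * G ^ (3 * k) * G * hfrob
      + eval hw (χ q) ^ 3 * zpow_three_mul_mul_self_mul_pow hk hG + hcube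
      - zpow_three_mul_mul_self_mul_pow hk hJ + J ^ (3 * k) * J * hJq

/-- The cubic reciprocity law for a rational prime `q`. -/
theorem eval_apply_natCast (hχ : IsCubicResidueChar hr χ) (h3F : (3 : F) ≠ 0)
    (h3K : (3 : K) ≠ 0) (hw : w ^ 2 + w + 1 = 0) (hψ : ψ.IsPrimitive) (hq : (q : F) ≠ 0) {k : ℤ}
    (hk : (q : ℤ) = 3 * k + 1 ∨ (q : ℤ) = -(3 * k + 1)) :
    eval hw (χ q) = (eval hw (jacobiSum χ χ) / eval hw (star (jacobiSum χ χ))) ^ k := by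
  have hJ := hχ.eval_jacobiSum_mul_eval_star h3F hw
  have hcard : (Fintype.card F : K) ≠ 0 := natCast_card_ne_zero hq
  rw [← hJ] at hcard
  have hzpow := hχ.eval_apply_natCast_mul_gaussSum_zpow h3F h3K hw hψ hq hk
  rw [zpow_mul, zpow_ofNat, hχ.gaussSum_pow_three h3F h3K hw hψ, mul_comm] at hzpow
  have hJ' := right_ne_zero_of_mul hcard
  refine mul_left_cancel₀ (zpow_ne_zero k (mul_ne_zero (pow_ne_zero 2 (left_ne_zero_of_mul hcard))
    hJ')) ?_
  rw [hzpow, ← mul_zpow, zpow_mul, zpow_ofNat]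
  congr 1
  field_simp

end IsCubicResidueChar

end Reciprocity

section Cayley

variable {K : Type*} [Field K] {q : ℕ} [Fact q.Prime] [CharP K q] {w : K} {k : ℤ}

lemma exists_intCast_eq_iff_pow_eq {x : K} : (∃ t : ℤ, (t : K) = x) ↔ x ^ q = x := by
  rw [← Subfield.mem_bot_iff_pow_eq_self K q, mem_bot_iff_intCast q K]

/-- The element `√-3 = 1 + 2ω` of `ℤ[ω]`. -/
def EisensteinInt.sqrtNegThree : EisensteinInt := ⟨1, 2⟩

lemma EisensteinInt.star_sqrtNegThree : star sqrtNegThree = -sqrtNegThree := by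
  ext <;> simp [sqrtNegThree]

lemma EisensteinInt.sqrtNegThree_sq : sqrtNegThree ^ 2 = -3 := by
  decide

lemma EisensteinInt.eval_sqrtNegThree_ne_zero (h3 : (3 : K) ≠ 0) (hw : w ^ 2 + w + 1 = 0) :
    eval hw sqrtNegThree ≠ 0 := by
  refine left_ne_zero_of_mul (b := eval hw sqrtNegThree) ?_
  rw [← sq, ← map_pow, sqrtNegThree_sq, map_neg, map_ofNat, neg_ne_zero]
  exact h3

lemma zpow_three_mul_eq_one_iff (h2 : (2 : K) ≠ 0) (h3 : (3 : K) ≠ 0) (hw : w ^ 2 + w + 1 = 0)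
    (hk : (q : ℤ) = 3 * k + 1 ∨ (q : ℤ) = -(3 * k + 1)) {v : K} (hv0 : v ≠ 0) (hv1 : v ≠ 1) :
    v ^ (3 * k) = 1 ↔
      ∃ t : ℤ, v * (t + eval hw sqrtNegThree) = t - eval hw sqrtNegThree := by
  have hs := eval_sqrtNegThree_ne_zero h3 hw
  have hv : 1 - v ≠ 0 := sub_ne_zero.mpr hv1.symm
  have hvq : 1 - v ^ q ≠ 0 := by
    rw [← one_pow q, ← sub_pow_char]
    exact pow_ne_zero q hv
  have hcayley (t : ℤ) : v * (t + eval hw sqrtNegThree) = t - eval hw sqrtNegThree ↔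
      (t : K) = eval hw sqrtNegThree * (1 + v) / (1 - v) := by
    rw [eq_div_iff hv]
    constructor <;> intro h <;> linear_combination -h
  simp only [hcayley]
  rw [exists_intCast_eq_iff_pow_eq (q := q), div_pow, mul_pow, add_pow_char, sub_pow_char, one_pow,
    div_eq_div_iff hvq hv]
  have h2s := mul_ne_zero h2 hs
  rcases hk with hk | hk
  · rw [eval_pow_char_of_mod_three_eq_one (by lia) hw, ← mul_left_inj' hv0,
      zpow_three_mul_mul_self hk hv0, one_mul]
    refine ⟨fun h ↦ ?_, fun h ↦ mul_left_cancel₀ h2s ?_⟩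
    · linear_combination 2 * eval hw sqrtNegThree * h
    · linear_combination h
  · have hzpow : v ^ (3 * k) * (v * v ^ q) = 1 := by
      rw [← mul_assoc, zpow_three_mul_mul_self_mul_pow hk hv0]
    rw [eval_pow_char_of_mod_three_eq_two (by lia) hw, star_sqrtNegThree, map_neg,
      eq_one_iff_eq_one_of_mul_eq_one hzpow]
    refine ⟨fun h ↦ ?_, fun h ↦ mul_left_cancel₀ h2s ?_⟩
    · linear_combination 2 * eval hw sqrtNegThree * h
    · linear_combination h

lemma zpow_eq_one_iff_exists_cube [IsAlgClosed K] (h2 : (2 : K) ≠ 0) (h3 : (3 : K) ≠ 0)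
    (hw : w ^ 2 + w + 1 = 0) (hk : (q : ℤ) = 3 * k + 1 ∨ (q : ℤ) = -(3 * k + 1)) {y : K}
    (hy : y ≠ 0) :
    y ^ k = 1 ↔
      ∃ t : ℤ, y * (t + eval hw sqrtNegThree) ^ 3 = (t - eval hw sqrtNegThree) ^ 3 := by
  constructor
  · intro hyk
    obtain ⟨v, hv1, rfl⟩ : ∃ v : K, v ≠ 1 ∧ v ^ 3 = y := by
      obtain ⟨v, hv⟩ := IsAlgClosed.exists_pow_nat_eq y (n := 3) (by simp)
      by_cases hv1 : v = 1
      · have hprim := isPrimitiveRoot_three_of_sq_add_add_one h3 hw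
        exact ⟨w, hprim.ne_one (by simp), by rw [hprim.pow_eq_one, ← hv, hv1, one_pow]⟩
      · exact ⟨v, hv1, hv⟩
    have hv0 : v ≠ 0 := by
      rintro rfl
      simp at hy
    rw [← zpow_natCast, ← zpow_mul] at hyk
    obtain ⟨t, ht⟩ := (zpow_three_mul_eq_one_iff h2 h3 hw hk hv0 hv1).mp hyk
    exact ⟨t, by rw [← mul_pow, ht]⟩
  · rintro ⟨t, ht⟩
    have hs := eval_sqrtNegThree_ne_zero h3 hw
    set s := eval hw sqrtNegThree
    have hts : (t : K) + s ≠ 0 := by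
      intro h0
      rw [h0, zero_pow (by simp), mul_zero, eq_comm, pow_eq_zero_iff (by simp)] at ht
      exact mul_ne_zero h2 hs (by linear_combination h0 - ht)
    have hts' : (t : K) - s ≠ 0 := by
      intro h0
      rw [h0, zero_pow (by simp), mul_eq_zero, pow_eq_zero_iff (by simp)] at ht
      exact ht.elim hy hts
    rw [eq_div_of_mul_eq (pow_ne_zero 3 hts) ht, ← div_pow, ← zpow_natCast, ← zpow_mul]
    refine (zpow_three_mul_eq_one_iff h2 h3 hw hk (div_ne_zero hts' hts) ?_).mpr
      ⟨t, div_mul_cancel₀ _ hts⟩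
    rw [Ne, div_eq_one_iff_eq hts]
    exact fun h ↦ mul_ne_zero h2 hs (by linear_combination -h)

end Cayley

section RationalForm

variable {L M L' M' : ℤ}

lemma im_mul_star_mul_cube (L M L' M' t : ℤ) :
    (ofForm L M * star (ofForm L' M') * (t + sqrtNegThree) ^ 3).im =
      6 * ((L' * t ^ 3 + 27 * M' * t ^ 2 - 9 * L' * t - 27 * M') * M -
        (M' * t ^ 3 - L' * t ^ 2 - 9 * M' * t + L') * L) := by
  simp only [ofForm, sqrtNegThree, pow_succ, pow_zero, one_mul, QuadraticAlgebra.star_mk,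
    QuadraticAlgebra.im_mul, QuadraticAlgebra.re_mul, QuadraticAlgebra.re_add,
    QuadraticAlgebra.im_add, QuadraticAlgebra.re_intCast, QuadraticAlgebra.im_intCast, Int.cast_id]
  ring

variable {K : Type*} [Field K] {q : ℕ} [CharP K q] {w : K}

lemma eval_eq_eval_star_iff (h3 : (3 : K) ≠ 0) (hw : w ^ 2 + w + 1 = 0) {z : EisensteinInt} :
    eval hw z = eval hw (star z) ↔ (q : ℤ) ∣ z.im := by
  have hs := eval_sqrtNegThree_ne_zero h3 hw
  have hsub : eval hw z - eval hw (star z) = z.im * eval hw sqrtNegThree := by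
    simp only [eval_apply, sqrtNegThree, QuadraticAlgebra.re_star, QuadraticAlgebra.im_star]
    push_cast
    ring
  rw [← sub_eq_zero, hsub, mul_eq_zero_iff_right hs, CharP.intCast_eq_zero_iff K q]

lemma eval_cube_eq_iff_modEq (h2 : (2 : K) ≠ 0) (h3 : (3 : K) ≠ 0) (hw : w ^ 2 + w + 1 = 0)
    (t : ℤ) :
    eval hw (ofForm L M) * eval hw (star (ofForm L' M')) * (t + eval hw sqrtNegThree) ^ 3 =
        eval hw (star (ofForm L M)) * eval hw (ofForm L' M') * (t - eval hw sqrtNegThree) ^ 3 ↔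
      (M' * t ^ 3 - L' * t ^ 2 - 9 * M' * t + L') * L ≡
        (L' * t ^ 3 + 27 * M' * t ^ 2 - 9 * L' * t - 27 * M') * M [ZMOD (q : ℤ)] := by
  have hz := eval_eq_eval_star_iff (q := q) h3 hw
    (z := ofForm L M * star (ofForm L' M') * (t + sqrtNegThree) ^ 3)
  rw [im_mul_star_mul_cube, ← CharP.intCast_eq_zero_iff K q] at hz
  have h6 : (6 : K) ≠ 0 := by
    convert mul_ne_zero h2 h3
    norm_num
  rw [Int.cast_mul, Int.cast_ofNat, mul_eq_zero_iff_left h6] at hz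
  rw [Int.modEq_iff_dvd, ← CharP.intCast_eq_zero_iff K q, ← hz]
  simp only [star_mul', star_pow, star_add, star_star, star_intCast, star_sqrtNegThree,
    ← sub_eq_add_neg, map_mul, map_pow, map_add, map_sub, map_intCast]

variable [Fact q.Prime] {k : ℤ}

lemma div_star_zpow_eq_iff [IsAlgClosed K] (h2 : (2 : K) ≠ 0) (h3 : (3 : K) ≠ 0)
    (hw : w ^ 2 + w + 1 = 0) (hk : (q : ℤ) = 3 * k + 1 ∨ (q : ℤ) = -(3 * k + 1))
    (hN : eval hw (ofForm L M) * eval hw (star (ofForm L M)) ≠ 0)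
    (hN' : eval hw (ofForm L' M') * eval hw (star (ofForm L' M')) ≠ 0) :
    (eval hw (ofForm L M) / eval hw (star (ofForm L M))) ^ k =
        (eval hw (ofForm L' M') / eval hw (star (ofForm L' M'))) ^ k ↔
      ∃ t : ℤ, (M' * t ^ 3 - L' * t ^ 2 - 9 * M' * t + L') * L ≡
        (L' * t ^ 3 + 27 * M' * t ^ 2 - 9 * L' * t - 27 * M') * M [ZMOD (q : ℤ)] := by
  simp only [← eval_cube_eq_iff_modEq h2 h3 hw]
  set a := eval hw (ofForm L M)
  set b := eval hw (star (ofForm L M))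
  set a' := eval hw (ofForm L' M')
  set b' := eval hw (star (ofForm L' M'))
  obtain ⟨ha, hb⟩ := mul_ne_zero_iff.mp hN
  obtain ⟨ha', hb'⟩ := mul_ne_zero_iff.mp hN'
  rw [← div_eq_one_iff_eq (zpow_ne_zero k (div_ne_zero ha' hb')), ← div_zpow,
    div_div_div_eq, zpow_eq_one_iff_exists_cube h2 h3 hw hk (by positivity)]
  refine exists_congr fun t ↦ ?_
  rw [div_mul_eq_mul_div, div_eq_iff (mul_ne_zero hb ha'), mul_comm (_ ^ 3) (b * a')]

end RationalForm

section Main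

variable {p p' q : ℕ} [Fact p.Prime] [Fact p'.Prime] [Fact q.Prime] {L M L' M' : ℤ}

lemma exists_sq_add_add_one_eq_zero (K : Type*) [Field K] [IsAlgClosed K] :
    ∃ w : K, w ^ 2 + w + 1 = 0 := by
  obtain ⟨w, hw⟩ := IsAlgClosed.exists_root (Polynomial.cyclotomic 3 K)
    (by rw [Polynomial.degree_cyclotomic]; decide)
  exact ⟨w, by simpa [Polynomial.cyclotomic_three] using hw⟩

lemma exists_eq_three_mul_add_one_or_neg (hq3 : q ≠ 3) :
    ∃ k : ℤ, (q : ℤ) = 3 * k + 1 ∨ (q : ℤ) = -(3 * k + 1) := by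
  have hdvd : ¬3 ∣ q := fun hdvd ↦
    hq3 ((Nat.prime_dvd_prime_iff_eq Nat.prime_three Fact.out).mp hdvd).symm
  obtain hq | hq : q % 3 = 1 ∨ q % 3 = 2 := by lia
  · exact ⟨q / 3, by lia⟩
  · exact ⟨-((q + 1) / 3), by lia⟩

lemma eval_ofForm_mul_eval_star_ne_zero {K : Type*} [Field K] [CharP K q] {w : K}
    (h : (4 * p : ℤ) = L ^ 2 + 27 * M ^ 2) (h2 : (2 : K) ≠ 0) (hw : w ^ 2 + w + 1 = 0)
    (hq : (q : ZMod p) ≠ 0) : eval hw (ofForm L M) * eval hw (star (ofForm L M)) ≠ 0 := by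
  have hp : (p : K) ≠ 0 := ZMod.card p ▸ natCast_card_ne_zero hq
  rw [eval_mul_eval_star, norm_ofForm, ← h]
  push_cast
  rw [show (4 : K) = 2 ^ 2 by norm_num]
  exact mul_ne_zero (pow_ne_zero 2 h2) hp

lemma exists_isPrimitive_addChar {K : Type*} [Field K] [IsAlgClosed K] (hp : (p : K) ≠ 0) :
    ∃ ψ : AddChar (ZMod p) K, ψ.IsPrimitive := by
  have : NeZero (p : K) := ⟨hp⟩
  obtain ⟨ζ, hζ⟩ := HasEnoughRootsOfUnity.exists_primitiveRoot K p
  exact ⟨_, AddChar.zmodChar_primitive_of_primitive_root p hζ⟩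

namespace IsCubicResidueChar

variable {χ : MulChar (ZMod p) EisensteinInt} {χ' : MulChar (ZMod p') EisensteinInt}

lemma jacobiSum_mul_star_ofForm (h : (4 * p : ℤ) = L ^ 2 + 27 * M ^ 2)
    (hχ : IsCubicResidueChar (formRoot_sq_add_add_one h) χ) :
    jacobiSum χ χ * star (ofForm L M) = star (jacobiSum χ χ) * ofForm L M := by
  have h3 := three_ne_zero_of_form h
  refine mul_star_comm_of_eval_eq_zero h3 _ (hχ.eval_jacobiSum h3) (eval_ofForm h)
    (hχ.three_dvd_im_jacobiSum h3) ⟨2 * M, ?_⟩ ?_ ?_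
  · rw [ofForm]
    ring
  · rw [hχ.norm_jacobiSum h3, ZMod.card]
  · rw [norm_ofForm, h]

lemma eval_apply_natCast_of_form {K : Type*} [Field K] [CharP K q] [IsAlgClosed K] {w : K} {k : ℤ}
    (h : (4 * p : ℤ) = L ^ 2 + 27 * M ^ 2)
    (hχ : IsCubicResidueChar (formRoot_sq_add_add_one h) χ) (h2K : (2 : K) ≠ 0)
    (h3K : (3 : K) ≠ 0) (hw : w ^ 2 + w + 1 = 0) (hq : (q : ZMod p) ≠ 0)
    (hk : (q : ℤ) = 3 * k + 1 ∨ (q : ℤ) = -(3 * k + 1)) :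
    eval hw (χ q) = (eval hw (ofForm L M) / eval hw (star (ofForm L M))) ^ k := by
  have h3 := three_ne_zero_of_form h
  have hcard : (Fintype.card (ZMod p) : K) ≠ 0 := natCast_card_ne_zero hq
  obtain ⟨ψ, hψ⟩ := exists_isPrimitive_addChar (ZMod.card p ▸ hcard)
  have hN := eval_ofForm_mul_eval_star_ne_zero h h2K hw hq
  rw [hχ.eval_apply_natCast h3 h3K hw hψ hq hk]
  rw [← hχ.eval_jacobiSum_mul_eval_star h3 hw] at hcard
  congr 1
  rw [div_eq_div_iff (right_ne_zero_of_mul hcard) (right_ne_zero_of_mul hN), ← map_mul, ← map_mul,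
    hχ.jacobiSum_mul_star_ofForm h, mul_comm]

theorem apply_natCast_eq_iff (hq5 : 5 ≤ q) (h : (4 * p : ℤ) = L ^ 2 + 27 * M ^ 2)
    (h' : (4 * p' : ℤ) = L' ^ 2 + 27 * M' ^ 2)
    (hχ : IsCubicResidueChar (formRoot_sq_add_add_one h) χ)
    (hχ' : IsCubicResidueChar (formRoot_sq_add_add_one h') χ')
    (hq : (q : ZMod p) ≠ 0) (hq' : (q : ZMod p') ≠ 0) :
    χ q = χ' q ↔
      ∃ t : ℤ, (M' * t ^ 3 - L' * t ^ 2 - 9 * M' * t + L') * L ≡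
        (L' * t ^ 3 + 27 * M' * t ^ 2 - 9 * L' * t - 27 * M') * M [ZMOD (q : ℤ)] := by
  let K := AlgebraicClosure (ZMod q)
  have : CharP K q := charP_of_injective_algebraMap (algebraMap (ZMod q) K).injective q
  have h2 : (2 : K) ≠ 0 := CharP.cast_ne_zero_of_ne_of_prime K Nat.prime_two (by lia)
  have h3 : (3 : K) ≠ 0 := CharP.cast_ne_zero_of_ne_of_prime K Nat.prime_three (by lia)
  obtain ⟨w, hw⟩ := exists_sq_add_add_one_eq_zero K
  obtain ⟨k, hk⟩ := exists_eq_three_mul_add_one_or_neg (q := q) (by lia)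
  rw [← div_star_zpow_eq_iff h2 h3 hw hk (eval_ofForm_mul_eval_star_ne_zero h h2 hw hq)
      (eval_ofForm_mul_eval_star_ne_zero h' h2 hw hq'),
    ← hχ.eval_apply_natCast_of_form h h2 h3 hw hq hk,
    ← hχ'.eval_apply_natCast_of_form h' h2 h3 hw hq' hk]
  exact ⟨congrArg (eval hw), eq_of_eval_eq_of_pow_three h3 hw (hχ.apply_pow_three hq)
    (hχ'.apply_pow_three hq')⟩

end IsCubicResidueChar

theorem rule_f_plus_general (hq5 : 5 ≤ q) (hqp : q ≠ p) (h : (4 * p : ℤ) = L ^ 2 + 27 * M ^ 2)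
    (h' : (4 * p' : ℤ) = L' ^ 2 + 27 * M' ^ 2)
    (hroot : (q : ZMod p') ^ ((p' - 1) / 3) = formRoot p' L' M') :
    (q : ZMod p) ^ ((p - 1) / 3) = formRoot p L M ↔
      ∃ t : ℤ, (M' * t ^ 3 - L' * t ^ 2 - 9 * M' * t + L') * L ≡
        (L' * t ^ 3 + 27 * M' * t ^ 2 - 9 * L' * t - 27 * M') * M [ZMOD (q : ℤ)] := by
  have h3 := three_ne_zero_of_form h
  have h3' := three_ne_zero_of_form h'
  obtain ⟨χ, hχ⟩ := exists_isCubicResidueChar h3 (formRoot_sq_add_add_one h)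
  obtain ⟨χ', hχ'⟩ := exists_isCubicResidueChar h3' (formRoot_sq_add_add_one h')
  have hq : (q : ZMod p) ≠ 0 := by
    rw [Ne, ZMod.natCast_eq_zero_iff, Nat.prime_dvd_prime_iff_eq Fact.out Fact.out]
    exact hqp.symm
  replace hroot : (q : ZMod p') ^ ((Fintype.card (ZMod p') - 1) / 3) = formRoot p' L' M' := by
    rwa [ZMod.card]
  have hω := hχ.apply_eq_omega_iff h3 hq
  have hω' := (hχ'.apply_eq_omega_iff h3' (hχ'.ne_zero_of_pow_eq_root hroot)).mpr hroot
  rw [ZMod.card] at hω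
  rw [← hω, ← hω', hχ.apply_natCast_eq_iff hq5 h h' hχ' hq (hχ'.ne_zero_of_pow_eq_root hroot)]

end Main

lemma natCast_pow_four_eq_formRoot_thirteen {q : ℕ} (hq : q % 13 ∈ ({2, 3, 10, 11} : Finset ℕ)) :
    (q : ZMod 13) ^ 4 = formRoot 13 5 1 := by
  have : Fact (Nat.Prime 13) := ⟨by norm_num⟩
  rw [formRoot, eq_mul_inv_iff_mul_eq₀ (six_mul_ne_zero_of_form (p := 13) (L := 5) (by norm_num)),
    ← ZMod.natCast_mod]
  generalize q % 13 = m at hq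
  fin_cases hq <;> rfl

/-- Rule (f) with the plus sign: for a prime `q ≥ 5`, `q ≡ ±2, ±3 (mod 13)`, `q ≠ p`,
`F_q(L,M) = ω` iff `(t³−5t²−9t+5)L ≡ (5t³+27t²−45t−27)M (mod q)` for some `t`. -/
theorem rule_f_plus (p : ℕ) (hp : p.Prime) (hp3 : p % 3 = 1)
    (L M : ℤ) (hL : 0 < L) (hM : 0 < M) (h : (4 * p : ℤ) = L ^ 2 + 27 * M ^ 2)
    (q : ℕ) (hq : q.Prime) (hq5 : 5 ≤ q) (hqp : q ≠ p)
    (hq13 : q % 13 ∈ ({2, 3, 10, 11} : Finset ℕ)) :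
    ((q : ZMod p) ^ ((p - 1) / 3) =
        ((-(L + 3 * M) : ℤ) : ZMod p) * (((6 * M : ℤ) : ZMod p))⁻¹) ↔
      ∃ t : ℤ, (t ^ 3 - 5 * t ^ 2 - 9 * t + 5) * L ≡
        (5 * t ^ 3 + 27 * t ^ 2 - 45 * t - 27) * M [ZMOD (q : ℤ)] := by
  have := Fact.mk hp
  have := Fact.mk hq
  have : Fact (Nat.Prime 13) := ⟨by norm_num⟩
  have hrule := rule_f_plus_general hq5 hqp h (p' := 13) (L' := 5) (M' := 1) (by norm_num)
    (natCast_pow_four_eq_formRoot_thirteen hq13)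
  simpa only [formRoot, one_mul, mul_one, ← mul_assoc, Int.reduceMul] using hrule
end

section
/- Let q be a prime. If q ≡ 1 or 6 (mod 7), then the polynomial X³ − 7X − 7 over ℤ/qℤ splits into a product of linear factors with three distinct roots; if q = 7, it has the triple root 0; and if q is not congruent to 0, 1, or 6 modulo 7, then X³ − 7X − 7 is irreducible over ℤ/qℤ. -/
/-!
For a primitive seventh root of unity `ζ`, the element `t = ζ + ζ⁻¹` is a root of
`T ^ 3 + T ^ 2 - 2 * T - 1`, whose other roots are `t ^ 2 - 2 = ζ ^ 2 + ζ⁻²` and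
`1 - t - t ^ 2 = ζ ^ 4 + ζ⁻⁴`. The differences of cyclically consecutive roots are the roots of
`X ^ 3 - 7 * X - 7`, and conversely a root of the latter recovers such a `t`; so over a field the
two cubics have roots simultaneously, and a single root brings all the others with it. For a field
with `q` elements, `ζ + ζ⁻¹` lies in the field iff the Frobenius `x ↦ x ^ q` maps `ζ` to `ζ` or
`ζ⁻¹`, that is, iff `q ≡ ±1 (mod 7)`.
-/

open Polynomial

section Frobenius

theorem add_inv_eq_add_inv_iff {K : Type*} [Field K] {w z : K} (hw : w ≠ 0) (hz : z ≠ 0) :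
    w + w⁻¹ = z + z⁻¹ ↔ w = z ∨ w = z⁻¹ := by
  have key : w + w⁻¹ - (z + z⁻¹) = w⁻¹ * ((w - z) * (w - z⁻¹)) := by
    field_simp
    ring
  rw [← sub_eq_zero, key, mul_eq_zero_iff_left (inv_ne_zero hw), mul_eq_zero, sub_eq_zero,
    sub_eq_zero]

theorem exists_add_inv_eq {K : Type*} [Field K] [IsAlgClosed K] (t : K) :
    ∃ z : K, z ≠ 0 ∧ z + z⁻¹ = t := by
  have hdeg : (X ^ 2 - C t * X + 1 : K[X]).degree = 2 := by compute_degree!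
  obtain ⟨z, hz⟩ := IsAlgClosed.exists_root _ (by rw [hdeg]; exact two_ne_zero)
  replace hz : z ^ 2 - t * z + 1 = 0 := by simpa [IsRoot] using hz
  have hz0 : z ≠ 0 := by
    rintro rfl
    simp at hz
  refine ⟨z, hz0, ?_⟩
  field_simp
  linear_combination hz

variable {F K : Type*} [Field F] [Fintype F]

theorem natCast_prime_eq_zero_iff_dvd_card {p : ℕ} (hp : p.Prime) :
    (p : F) = 0 ↔ p ∣ Fintype.card F := by
  have : Fact p.Prime := ⟨hp⟩
  rw [← prime_dvd_char_iff_dvd_card, ← not_iff_not, ← isUnit_iff_not_dvd_char, isUnit_iff_ne_zero]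

variable [Field K] [Algebra F K]

theorem mem_range_algebraMap_iff_pow_card_eq_self {x : K} :
    x ∈ Set.range (algebraMap F K) ↔ x ^ Fintype.card F = x := by
  constructor
  · rintro ⟨a, rfl⟩
    rw [← map_pow, FiniteField.pow_card]
  · intro hx
    have hsplits : (X ^ Fintype.card F - X : F[X]).Splits := by
      rw [splits_iff_card_roots, FiniteField.roots_X_pow_card_sub_X,
        FiniteField.X_pow_card_sub_X_natDegree_eq F Fintype.one_lt_card]
      rfl
    refine hsplits.mem_range_of_isRoot
      (FiniteField.X_pow_card_sub_X_ne_zero F Fintype.one_lt_card) ?_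
    simp [hx]

theorem add_inv_mem_range_algebraMap_iff {n : ℕ} [NeZero n] {ζ : K} (hζ : IsPrimitiveRoot ζ n) :
    ζ + ζ⁻¹ ∈ Set.range (algebraMap F K) ↔
      Fintype.card F ≡ 1 [MOD n] ∨ n ∣ Fintype.card F + 1 := by
  have hζ0 : ζ ≠ 0 := hζ.ne_zero (NeZero.ne n)
  have hfrob : (ζ + ζ⁻¹) ^ Fintype.card F = ζ ^ Fintype.card F + (ζ ^ Fintype.card F)⁻¹ := by
    simpa only [FiniteField.coe_frobeniusAlgHom, inv_pow] using
      map_add (FiniteField.frobeniusAlgHom F K) ζ ζ⁻¹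
  have hfix : ζ ^ Fintype.card F = ζ ↔ Fintype.card F ≡ 1 [MOD n] := by
    rw [hζ.eq_orderOf, ← (hζ.isOfFinOrder (NeZero.ne n)).pow_eq_pow_iff_modEq, pow_one]
  have hinv : ζ ^ Fintype.card F = ζ⁻¹ ↔ n ∣ Fintype.card F + 1 := by
    rw [← mul_eq_one_iff_eq_inv₀ hζ0, ← pow_succ, hζ.pow_eq_one_iff_dvd]
  rw [mem_range_algebraMap_iff_pow_card_eq_self, hfrob,
    add_inv_eq_add_inv_iff (pow_ne_zero _ hζ0) hζ0, hfix, hinv]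

end Frobenius

/-- `t` is a root of `T ^ 3 + T ^ 2 - 2 * T - 1`, the minimal polynomial of `2 cos (2π / 7)` over
`ℚ`. Away from characteristic `7` this says that `t = ζ + ζ⁻¹` for a primitive seventh root of
unity `ζ` in an extension. -/
def IsHeptagonalPeriod {R : Type*} [CommRing R] (t : R) : Prop :=
  t ^ 3 + t ^ 2 - 2 * t - 1 = 0

section CommRing

variable {R : Type*} [CommRing R]

theorem isHeptagonalPeriod_map_iff {S : Type*} [CommRing S] {f : R →+* S}
    (hf : Function.Injective f) {t : R} : IsHeptagonalPeriod (f t) ↔ IsHeptagonalPeriod t := by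
  rw [IsHeptagonalPeriod, IsHeptagonalPeriod, ← map_eq_zero_iff f hf]
  simp only [map_sub, map_add, map_mul, map_pow, map_one, map_ofNat]

namespace IsHeptagonalPeriod

variable {t : R}

theorem sq_sub_two (ht : IsHeptagonalPeriod t) : IsHeptagonalPeriod (t ^ 2 - 2) := by
  unfold IsHeptagonalPeriod at *
  linear_combination (t ^ 3 - t ^ 2 - 2 * t + 1) * ht

theorem sq_sub_two_sq_sub_two (ht : IsHeptagonalPeriod t) :
    (t ^ 2 - 2) ^ 2 - 2 = 1 - t - t ^ 2 := by
  unfold IsHeptagonalPeriod at ht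
  linear_combination (t - 1) * ht

theorem three_mul_add_one_ne_zero (h7 : (7 : R) ≠ 0) (ht : IsHeptagonalPeriod t) :
    3 * t + 1 ≠ 0 := by
  unfold IsHeptagonalPeriod at ht
  intro h
  apply h7
  linear_combination (-27) * ht + (9 * t ^ 2 + 6 * t - 20) * h

theorem X_pow_three_sub_seven_mul_X_sub_seven_eq (ht : IsHeptagonalPeriod t) :
    (X ^ 3 - 7 * X - 7 : R[X]) =
      (X - C (t ^ 2 - 2 - t)) * (X - C (1 - t - t ^ 2 - (t ^ 2 - 2))) *
        (X - C (t - (1 - t - t ^ 2))) := by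
  have hC : C t ^ 3 + C t ^ 2 - 2 * C t - 1 = (0 : R[X]) := by
    simpa only [map_sub, map_add, map_mul, map_pow, map_one, map_ofNat, map_zero] using
      congrArg C ht
  simp only [map_sub, map_pow, map_one, map_ofNat]
  linear_combination (3 * C t * X + (-2 * C t ^ 3 - C t ^ 2 + 9 * C t + 1)) * hC

theorem exists_eq_prod_X_sub_C (h7 : (7 : R) ≠ 0) (ht : IsHeptagonalPeriod t) :
    ∃ a b c : R, a ≠ b ∧ a ≠ c ∧ b ≠ c ∧
      (X ^ 3 - 7 * X - 7 : R[X]) = (X - C a) * (X - C b) * (X - C c) := by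
  have hs : IsHeptagonalPeriod (t ^ 2 - 2) := ht.sq_sub_two
  have hu : IsHeptagonalPeriod (1 - t - t ^ 2) := ht.sq_sub_two_sq_sub_two ▸ hs.sq_sub_two
  -- As the three periods sum to `-1`, differences of the roots have the form `±(3 * p + 1)`.
  refine ⟨_, _, _, fun hab ↦ ?_, fun hac ↦ ?_, fun hbc ↦ ?_,
    ht.X_pow_three_sub_seven_mul_X_sub_seven_eq⟩
  · exact hs.three_mul_add_one_ne_zero h7 (by linear_combination hab)
  · exact ht.three_mul_add_one_ne_zero h7 (by linear_combination -hac)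
  · exact hu.three_mul_add_one_ne_zero h7 (by linear_combination hbc)

-- For `r = s - t` with periods `t` and `s = t ^ 2 - 2`, this polynomial expression in `r` is `s`.
theorem of_root {r : R} (hr : r ^ 3 - 7 * r - 7 = 0) : IsHeptagonalPeriod (r ^ 2 - r - 5) := by
  unfold IsHeptagonalPeriod
  linear_combination (r ^ 3 - 3 * r ^ 2 - 4 * r + 13) * hr

end IsHeptagonalPeriod

theorem rootMultiplicity_zero_X_pow_three_sub_seven_mul_X_sub_seven [Nontrivial R]
    (h7 : (7 : R) = 0) : (X ^ 3 - 7 * X - 7 : R[X]).rootMultiplicity 0 = 3 := by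
  have h7' : (7 : R[X]) = 0 := by simpa only [map_ofNat, map_zero] using congrArg C h7
  have hcube : (X ^ 3 - 7 * X - 7 : R[X]) = (X - C 0) ^ 3 := by simp [h7']
  rw [hcube, rootMultiplicity_X_sub_C_pow]

end CommRing

section Field

variable {F : Type*} [Field F]

theorem irreducible_X_pow_three_sub_seven_mul_X_sub_seven
    (h : ∀ t : F, ¬ IsHeptagonalPeriod t) : Irreducible (X ^ 3 - 7 * X - 7 : F[X]) := by
  have hdeg : (X ^ 3 - 7 * X - 7 : F[X]).natDegree = 3 := by compute_degree!
  rw [irreducible_iff_roots_eq_zero_of_degree_le_three (by lia) (by lia),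
    Multiset.eq_zero_iff_forall_notMem]
  intro r hr
  exact h _ (.of_root (by simpa [IsRoot] using isRoot_of_mem_roots hr))

theorem isHeptagonalPeriod_add_inv_iff (h7 : (7 : F) ≠ 0) {z : F} (hz : z ≠ 0) :
    IsHeptagonalPeriod (z + z⁻¹) ↔ IsPrimitiveRoot z 7 := by
  have : NeZero ((7 : ℕ) : F) := ⟨mod_cast h7⟩
  have : Fact (Nat.Prime 7) := ⟨by norm_num⟩
  have key : (z + z⁻¹) ^ 3 + (z + z⁻¹) ^ 2 - 2 * (z + z⁻¹) - 1 =
      (cyclotomic 7 F).eval z / z ^ 3 := by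
    rw [cyclotomic_prime, eval_geom_sum]
    simp only [Finset.sum_range_succ, Finset.sum_range_zero]
    field_simp
    ring
  rw [IsHeptagonalPeriod, key, div_eq_zero_iff, or_iff_left (pow_ne_zero 3 hz), ← IsRoot.def,
    isRoot_cyclotomic_iff]

theorem exists_isHeptagonalPeriod_iff [Fintype F] (h7 : (7 : F) ≠ 0) :
    (∃ t : F, IsHeptagonalPeriod t) ↔ Fintype.card F ≡ 1 [MOD 7] ∨ 7 ∣ Fintype.card F + 1 := by
  let φ := algebraMap F (AlgebraicClosure F)
  have h7' : (7 : AlgebraicClosure F) ≠ 0 := by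
    simpa only [map_ofNat] using (map_ne_zero φ).2 h7
  constructor
  · rintro ⟨t, ht⟩
    obtain ⟨z, hz0, hz⟩ := exists_add_inv_eq (φ t)
    have hζ : IsPrimitiveRoot z 7 := by
      rwa [← isHeptagonalPeriod_add_inv_iff h7' hz0, hz, isHeptagonalPeriod_map_iff φ.injective]
    exact (add_inv_mem_range_algebraMap_iff hζ).1 ⟨t, hz.symm⟩
  · intro hcard
    have : NeZero ((7 : ℕ) : AlgebraicClosure F) := ⟨mod_cast h7'⟩
    obtain ⟨ζ, hζ⟩ := HasEnoughRootsOfUnity.exists_primitiveRoot (AlgebraicClosure F) 7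
    obtain ⟨t, ht⟩ := (add_inv_mem_range_algebraMap_iff (F := F) hζ).2 hcard
    refine ⟨t, ?_⟩
    rwa [← isHeptagonalPeriod_map_iff φ.injective, ht,
      isHeptagonalPeriod_add_inv_iff h7' (hζ.ne_zero (by norm_num))]

end Field

theorem cubic_seven_factorization_general (F : Type*) [Field F] [Fintype F] :
    ((Fintype.card F % 7 = 1 ∨ Fintype.card F % 7 = 6) →
        ∃ a b c : F, a ≠ b ∧ a ≠ c ∧ b ≠ c ∧
          (X ^ 3 - 7 * X - 7 : F[X]) = (X - C a) * (X - C b) * (X - C c)) ∧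
      (Fintype.card F % 7 = 0 → (X ^ 3 - 7 * X - 7 : F[X]).rootMultiplicity 0 = 3) ∧
      (¬ (Fintype.card F % 7 = 0 ∨ Fintype.card F % 7 = 1 ∨ Fintype.card F % 7 = 6) →
        Irreducible (X ^ 3 - 7 * X - 7 : F[X])) := by
  have h7 : (7 : F) = 0 ↔ Fintype.card F % 7 = 0 := by
    rw [← Nat.dvd_iff_mod_eq_zero]
    exact mod_cast natCast_prime_eq_zero_iff_dvd_card (F := F) (p := 7) (by norm_num)
  have hperiod (h : Fintype.card F % 7 ≠ 0) :
      (∃ t : F, IsHeptagonalPeriod t) ↔ Fintype.card F % 7 = 1 ∨ Fintype.card F % 7 = 6 := by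
    rw [exists_isHeptagonalPeriod_iff (h7.not.2 h), Nat.ModEq]
    lia
  refine ⟨fun h ↦ ?_, fun h ↦ ?_, fun h ↦ ?_⟩
  · have h0 : Fintype.card F % 7 ≠ 0 := by lia
    obtain ⟨t, ht⟩ := (hperiod h0).2 h
    exact ht.exists_eq_prod_X_sub_C (h7.not.2 h0)
  · exact rootMultiplicity_zero_X_pow_three_sub_seven_mul_X_sub_seven (h7.2 h)
  · obtain ⟨h0, h⟩ := not_or.1 h
    exact irreducible_X_pow_three_sub_seven_mul_X_sub_seven
      (not_exists.1 ((hperiod h0).not.2 h))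

open Polynomial in
/-- The factorization behavior of `X³ − 7X − 7` modulo a prime `q`: it splits with three
distinct roots when `q ≡ ±1 (mod 7)`, has `0` as a triple root when `q = 7`, and is
irreducible otherwise. -/
theorem cubic_seven_factorization (q : ℕ) (hq : q.Prime) :
    ((q % 7 = 1 ∨ q % 7 = 6) →
        ∃ a b c : ZMod q, a ≠ b ∧ a ≠ c ∧ b ≠ c ∧
          (X ^ 3 - 7 * X - 7 : (ZMod q)[X]) = (X - C a) * (X - C b) * (X - C c)) ∧
      (q = 7 → (X ^ 3 - 7 * X - 7 : (ZMod q)[X]).rootMultiplicity 0 = 3) ∧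
      (¬ (q % 7 = 0 ∨ q % 7 = 1 ∨ q % 7 = 6) →
        Irreducible (X ^ 3 - 7 * X - 7 : (ZMod q)[X])) := by
  have : Fact q.Prime := ⟨hq⟩
  obtain ⟨hsplit, htriple, hirr⟩ := ZMod.card q ▸ cubic_seven_factorization_general (ZMod q)
  exact ⟨hsplit, fun h ↦ htriple (by lia), hirr⟩
end

section
/- Let K = ℚ(ζ) be the third cyclotomic field with ζ a primitive cube root of unity in its ring of integers 𝒪_K = ℤ[ζ], let q ≠ 3 be a rational prime, and let a, b be integers such that (q : 𝒪_K) is coprime to α := a + b·ζ in 𝒪_K. Then there exists λ ∈ 𝒪_K and integers a′, b′ with λ = a′ + b′·ζ, 3 ∣ b′, λ prime in 𝒪_K, and q dividing λ − α in 𝒪_K. -/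
/-!
Dirichlet's argument, carried out for ray classes of an imaginary quadratic principal ideal domain.
Multiplication by a suitable integer turns the ring into a rectangular lattice, so for a ray class
character `χ` the series `L(s, χ)` is a combination of Mellin transforms of theta functions of
shifted rectangular lattices, and `(s - 1) L(s, χ)` is entire with a trivial zero at `s = -1`. The
product of all these `L`-functions is a Dirichlet series with nonnegative coefficients. If some
`L(1, χ)` vanished, the product would be entire and vanish at `-1`, whereas such a series, once
entire, is positive on the whole real axis. Orthogonality of characters then yields a prime in
every class; in `ℤ[ζ]` one applies this to the class modulo `3 m` of an element congruent to `1`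
modulo `3` and to `α` modulo `m`.
-/

section RapidConvergence

open Filter Asymptotics

/-- `F` converges to `c` at infinity faster than any power, the kind of convergence a `WeakFEPair`
asks of its two functions. -/
def RapidlyTendsto (F : ℝ → ℂ) (c : ℂ) : Prop :=
  ∀ r : ℝ, (fun x => F x - c) =O[atTop] (fun x => x ^ r)

lemma RapidlyTendsto.mul {F G : ℝ → ℂ} {c d : ℂ} (hF : RapidlyTendsto F c)
    (hG : RapidlyTendsto G d) : RapidlyTendsto (fun x => F x * G x) (c * d) := by
  intro r
  have h : (fun x => (F x - c) * (G x - d)) =O[atTop] (fun x => x ^ r) := by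
    simpa only [Real.rpow_zero, mul_one] using (hF r).mul (hG 0)
  refine ((h.add ((hG r).const_mul_left c)).add ((hF r).const_mul_left d)).congr_left fun x => ?_
  ring

lemma RapidlyTendsto.comp_mul_left {F : ℝ → ℂ} {c : ℂ} (hF : RapidlyTendsto F c) {k : ℝ}
    (hk : 0 < k) : RapidlyTendsto (fun x => F (k * x)) c := by
  intro r
  refine ((hF r).comp_tendsto (tendsto_id.const_mul_atTop hk)).trans ?_
  refine ((isBigO_refl (fun x : ℝ => x ^ r) atTop).const_mul_left (k ^ r)).congr' ?_ .rfl
  filter_upwards [eventually_gt_atTop 0] with x hx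
  exact (Real.mul_rpow hk.le hx.le).symm

end RapidConvergence

section ShiftedLattice

open Complex HurwitzZeta MeasureTheory Set

variable (a b : ℝ) {ω₁ ω₂ : ℝ}

lemma continuousOn_ofReal_mul_comp_mul_left {φ ψ : ℝ → ℝ} (hφ : ContinuousOn φ (Ioi 0))
    (hψ : ContinuousOn ψ (Ioi 0)) {k l : ℝ} (hk : 0 < k) (hl : 0 < l) :
    ContinuousOn (fun t => (φ (k * t) * ψ (l * t) : ℂ)) (Ioi 0) :=
  (continuous_ofReal.comp_continuousOn
    (hφ.comp (by fun_prop) fun _ ht => mul_pos hk ht)).mul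
  (continuous_ofReal.comp_continuousOn
    (hψ.comp (by fun_prop) fun _ ht => mul_pos hl ht))

lemma evenKernel_sq_mul_one_div (a : UnitAddCircle) {ω t : ℝ} (hω : 0 < ω) (ht : 0 < t) :
    evenKernel a (ω ^ 2 * (1 / t)) = √t / ω * cosKernel a ((ω ^ 2)⁻¹ * t) := by
  rw [evenKernel_functional_equation, ← Real.sqrt_eq_rpow, mul_one_div,
    Real.sqrt_div' _ ht.le, Real.sqrt_sq hω.le, one_div_div, one_div_div, inv_mul_eq_div]

/-- The theta function `∑ exp (-π t Q(m, n))` of the shifted rectangular lattice, where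
`Q(m, n) = ω₁² (m + a)² + ω₂² (n + b)²`, together with its dual under `t ↦ 1 / t`. -/
noncomputable def shiftedLatticeFEPair (hω₁ : 0 < ω₁) (hω₂ : 0 < ω₂)
    (hab : (a : UnitAddCircle) ≠ 0 ∨ (b : UnitAddCircle) ≠ 0) : WeakFEPair ℂ where
  f t := evenKernel a (ω₁ ^ 2 * t) * evenKernel b (ω₂ ^ 2 * t)
  g t := cosKernel a ((ω₁ ^ 2)⁻¹ * t) * cosKernel b ((ω₂ ^ 2)⁻¹ * t)
  k := 1
  ε := (ω₁ * ω₂ : ℂ)⁻¹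
  f₀ := 0
  g₀ := 1
  hf_int := (continuousOn_ofReal_mul_comp_mul_left (continuousOn_evenKernel a)
    (continuousOn_evenKernel b) (by positivity) (by positivity)).locallyIntegrableOn
    measurableSet_Ioi
  hg_int := (continuousOn_ofReal_mul_comp_mul_left (continuousOn_cosKernel a)
    (continuousOn_cosKernel b) (by positivity) (by positivity)).locallyIntegrableOn
    measurableSet_Ioi
  hk := one_pos
  hε := inv_ne_zero (mul_ne_zero (ofReal_ne_zero.2 hω₁.ne') (ofReal_ne_zero.2 hω₂.ne'))
  h_feq t ht := by
    have hsq : (√t : ℂ) * √t = t := by rw [← ofReal_mul, Real.mul_self_sqrt (le_of_lt ht)]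
    simp only [evenKernel_sq_mul_one_div _ hω₁ ht, evenKernel_sq_mul_one_div _ hω₂ ht,
      Real.rpow_one, ofReal_mul, ofReal_div, smul_eq_mul]
    linear_combination (ω₁ * ω₂ : ℂ)⁻¹ * cosKernel a ((ω₁ ^ 2)⁻¹ * t) *
      cosKernel b ((ω₂ ^ 2)⁻¹ * t) * hsq
  hf_top := by
    have h (c : UnitAddCircle) {ω : ℝ} (hω : 0 < ω) :=
      RapidlyTendsto.comp_mul_left (hurwitzEvenFEPair c).hf_top (sq_pos_of_pos hω)
    have hlim : (hurwitzEvenFEPair a).f₀ * (hurwitzEvenFEPair b).f₀ = 0 := by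
      simpa only [hurwitzEvenFEPair, mul_ite, mul_one, mul_zero, ← ite_and, ite_eq_right_iff,
        one_ne_zero, imp_false, not_and_or, or_comm] using hab
    exact hlim ▸ (h a hω₁).mul (h b hω₂)
  hg_top := by
    have h (c : UnitAddCircle) {ω : ℝ} (hω : 0 < ω) :=
      RapidlyTendsto.comp_mul_left (hurwitzEvenFEPair c).hg_top (inv_pos.2 (sq_pos_of_pos hω))
    exact mul_one (1 : ℂ) ▸ (h a hω₁).mul (h b hω₂)

lemma hasSum_shiftedLatticeFEPair_f (hω₁ : 0 < ω₁) (hω₂ : 0 < ω₂)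
    (hab : (a : UnitAddCircle) ≠ 0 ∨ (b : UnitAddCircle) ≠ 0) {t : ℝ} (ht : 0 < t) :
    HasSum (fun p : ℤ × ℤ => (Real.exp
        (-Real.pi * ((ω₁ * (p.1 + a)) ^ 2 + (ω₂ * (p.2 + b)) ^ 2) * t) : ℂ))
      ((shiftedLatticeFEPair a b hω₁ hω₂ hab).f t) := by
  have h (c : ℝ) {ω : ℝ} (hω : 0 < ω) := hasSum_int_evenKernel c (mul_pos (sq_pos_of_pos hω) ht)
  have hprod := (h a hω₁).mul (h b hω₂)
    ((h a hω₁).summable.mul_of_nonneg (h b hω₂).summable (fun _ => Real.exp_nonneg _)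
      fun _ => Real.exp_nonneg _)
  rw [show (shiftedLatticeFEPair a b hω₁ hω₂ hab).f t
    = ((evenKernel a (ω₁ ^ 2 * t) * evenKernel b (ω₂ ^ 2 * t) : ℝ) : ℂ) from
      (ofReal_mul _ _).symm]
  refine hasSum_ofReal.2 ?_
  convert! hprod using 2 with p
  rw [← Real.exp_add]
  ring_nf

lemma eventually_sq_norm_le_shiftedLatticeForm (hω₁ : 0 < ω₁) (hω₂ : 0 < ω₂) :
    ∀ᶠ x : Fin 2 → ℤ in Filter.cofinite,
      (min ω₁ ω₂ / 2 * ‖x‖) ^ 2 ≤ (ω₁ * (x 0 + a)) ^ 2 + (ω₂ * (x 1 + b)) ^ 2 := by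
  have key {ω : ℝ} (hω : 0 < ω) (hle : min ω₁ ω₂ ≤ ω) {c : ℝ} {m : ℤ} (hm : 2 * |c| ≤ ‖m‖) :
      (min ω₁ ω₂ / 2 * ‖m‖) ^ 2 ≤ (ω * (m + c)) ^ 2 := by
    have hmc : ‖m‖ / 2 ≤ |m + c| := by
      have := abs_sub_abs_le_abs_sub (m : ℝ) (-c)
      rw [abs_neg, sub_neg_eq_add] at this
      rw [Int.norm_eq_abs] at hm ⊢
      linarith
    rw [sq_le_sq, abs_mul, abs_mul, abs_norm, abs_of_pos hω, abs_of_pos (by positivity)]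
    calc min ω₁ ω₂ / 2 * ‖m‖ = min ω₁ ω₂ * (‖m‖ / 2) := by ring
      _ ≤ ω * |m + c| := by gcongr
  have hlarge := (tendsto_norm_cocompact_atTop (E := Fin 2 → ℤ)).eventually_ge_atTop
    (2 * max |a| |b|)
  rw [Filter.cocompact_eq_cofinite] at hlarge
  filter_upwards [hlarge] with x hx
  have ha := le_max_left |a| |b|
  have hb := le_max_right |a| |b|
  rcases le_total (x 1).natAbs (x 0).natAbs with h | h
  · have hx0 : ‖x‖ = ‖x 0‖ := by
      rw [EisensteinSeries.norm_eq_max_natAbs, max_eq_left h, Nat.cast_natAbs,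
        Int.cast_abs, ← Int.norm_eq_abs]
    rw [hx0] at hx ⊢
    nlinarith [key hω₁ (min_le_left _ _) (c := a) (m := x 0) (by linarith)]
  · have hx1 : ‖x‖ = ‖x 1‖ := by
      rw [EisensteinSeries.norm_eq_max_natAbs, max_eq_right h, Nat.cast_natAbs,
        Int.cast_abs, ← Int.norm_eq_abs]
    rw [hx1] at hx ⊢
    nlinarith [key hω₂ (min_le_right _ _) (c := b) (m := x 1) (by linarith)]

lemma summable_one_div_shiftedLattice_rpow (hω₁ : 0 < ω₁) (hω₂ : 0 < ω₂) {σ : ℝ}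
    (hσ : 1 < σ) :
    Summable fun p : ℤ × ℤ => 1 / ((ω₁ * (p.1 + a)) ^ 2 + (ω₂ * (p.2 + b)) ^ 2) ^ σ := by
  refine (finTwoArrowEquiv ℤ).summable_iff.1 (EisensteinSeries.summable_of_isBigO_rpow_norm
    (show 2 < 2 * σ by linarith) (Asymptotics.IsBigO.of_bound ((min ω₁ ω₂ / 2) ^ (2 * σ))⁻¹ ?_))
  filter_upwards [eventually_sq_norm_le_shiftedLatticeForm a b hω₁ hω₂,
    Filter.eventually_cofinite_ne 0] with x hx hx0
  have hpos : 0 < min ω₁ ω₂ / 2 * ‖x‖ := by positivity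
  have hpow : (min ω₁ ω₂ / 2) ^ (2 * σ) * ‖x‖ ^ (2 * σ)
      ≤ ((ω₁ * (x 0 + a)) ^ 2 + (ω₂ * (x 1 + b)) ^ 2) ^ σ := by
    rw [← Real.mul_rpow (by positivity) (by positivity), Real.rpow_mul hpos.le, Real.rpow_two]
    gcongr
  simp only [Function.comp_apply, finTwoArrowEquiv_apply, one_div]
  rw [Real.norm_of_nonneg (by positivity), Real.norm_of_nonneg (by positivity), ← mul_inv]
  exact inv_anti₀ (by positivity) hpow

variable {a b}

lemma shiftedLatticeForm_pos (hω₁ : 0 < ω₁) (hω₂ : 0 < ω₂)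
    (hab : (a : UnitAddCircle) ≠ 0 ∨ (b : UnitAddCircle) ≠ 0) (p : ℤ × ℤ) :
    0 < (ω₁ * (p.1 + a)) ^ 2 + (ω₂ * (p.2 + b)) ^ 2 := by
  have add_ne {c : ℝ} (hc : (c : UnitAddCircle) ≠ 0) (m : ℤ) : (m + c : ℝ) ≠ 0 := fun h =>
    hc ((AddCircle.coe_eq_zero_iff 1).2 ⟨-m, by
      rw [zsmul_one, Int.cast_neg]; linear_combination -h⟩)
  rcases hab with ha | hb
  · have := mul_ne_zero hω₁.ne' (add_ne ha p.1)
    positivity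
  · have := mul_ne_zero hω₂.ne' (add_ne hb p.2)
    positivity

lemma mellin_shiftedLatticeFEPair_f (hω₁ : 0 < ω₁) (hω₂ : 0 < ω₂)
    (hab : (a : UnitAddCircle) ≠ 0 ∨ (b : UnitAddCircle) ≠ 0) {s : ℂ} (hs : 1 < s.re) :
    mellin (shiftedLatticeFEPair a b hω₁ hω₂ hab).f s =
      (shiftedLatticeFEPair a b hω₁ hω₂ hab).Λ₀ s + (ω₁ * ω₂ : ℂ)⁻¹ / (s - 1) := by
  let P := shiftedLatticeFEPair a b hω₁ hω₂ hab
  have hmellin : mellin P.f s = P.Λ s := by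
    simpa only [show P.f₀ = 0 from rfl, sub_zero] using (P.hasMellin hs).2
  rw [hmellin, WeakFEPair.Λ, show P.f₀ = 0 from rfl, show P.g₀ = 1 from rfl,
    show P.ε = (ω₁ * ω₂ : ℂ)⁻¹ from rfl, show P.k = 1 from rfl, ofReal_one, smul_zero, sub_zero,
    smul_eq_mul, mul_one, sub_eq_add_neg, ← div_neg, neg_sub]

lemma sub_one_ne_zero_of_one_lt_re {s : ℂ} (hs : 1 < s.re) : s - 1 ≠ 0 := fun h => by
  rw [sub_eq_zero.1 h, one_re] at hs
  exact lt_irrefl _ hs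

lemma exists_entire_hasSum_shiftedLattice (hω₁ : 0 < ω₁) (hω₂ : 0 < ω₂)
    (hab : (a : UnitAddCircle) ≠ 0 ∨ (b : UnitAddCircle) ≠ 0) :
    ∃ H : ℂ → ℂ, Differentiable ℂ H ∧ H (-1) = 0 ∧ H 1 = Real.pi / (ω₁ * ω₂) ∧
      ∀ s : ℂ, 1 < s.re → HasSum (fun p : ℤ × ℤ =>
        1 / (((ω₁ * (p.1 + a)) ^ 2 + (ω₂ * (p.2 + b)) ^ 2 : ℝ) : ℂ) ^ s) (H s / (s - 1)) := by
  have hpi : (Real.pi : ℂ) ≠ 0 := ofReal_ne_zero.2 Real.pi_ne_zero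
  let P := shiftedLatticeFEPair a b hω₁ hω₂ hab
  refine ⟨fun s => Real.pi ^ s * (Gamma s)⁻¹ * ((s - 1) * P.Λ₀ s + (ω₁ * ω₂ : ℂ)⁻¹),
    ?_, ?_, ?_, fun s hs => ?_⟩
  · have hΛ₀ := P.differentiable_Λ₀
    have hΓ := differentiable_one_div_Gamma
    have hpow : Differentiable ℂ fun s : ℂ => (Real.pi : ℂ) ^ s :=
      differentiable_id.const_cpow (Or.inl hpi)
    fun_prop
  · have hΓ : Gamma (-1) = 0 := by simpa using Gamma_neg_nat_eq_zero 1
    simp only [hΓ, inv_zero, mul_zero, zero_mul]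
  · simp only [cpow_one, Gamma_one, inv_one, sub_self, zero_mul, zero_add, mul_one, div_eq_mul_inv]
  · have hs0 : 0 < s.re := one_pos.trans hs
    have hs1 : s - 1 ≠ 0 := sub_one_ne_zero_of_one_lt_re hs
    have hpis : (Real.pi : ℂ) ^ s ≠ 0 := mt (fun h => ((cpow_eq_zero_iff _ _).1 h).1) hpi
    have hmellin := hasSum_mellin_pi_mul (a := fun _ => 1)
      (fun p => Or.inr (shiftedLatticeForm_pos hω₁ hω₂ hab p)) hs0
      (fun t ht => by
        simpa only [one_mul] using hasSum_shiftedLatticeFEPair_f a b hω₁ hω₂ hab ht)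
      (by simpa only [norm_one] using summable_one_div_shiftedLattice_rpow a b hω₁ hω₂ hs)
    rw [mellin_shiftedLatticeFEPair_f hω₁ hω₂ hab hs] at hmellin
    convert! hmellin.mul_left (Real.pi ^ s * (Gamma s)⁻¹ : ℂ) using 1
    · have hΓ := Gamma_ne_zero_of_re_pos hs0
      ext p
      rw [cpow_neg]
      field_simp
    · change Real.pi ^ s * (Gamma s)⁻¹ * ((s - 1) * P.Λ₀ s + (ω₁ * ω₂ : ℂ)⁻¹) / (s - 1) = _
      rw [mul_div_assoc, add_div, mul_div_cancel_left₀ _ hs1]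

end ShiftedLattice

section PeriodicCoefficients

open Complex

variable {A : Type*} [AddCommGroup A] {e : A →+ ℂ} {ι : ℤ × ℤ →+ A} {ω₁ ω₂ : ℝ}

lemma exists_entire_hasSum_coset (he : Function.Injective e) (hω₁ : 0 < ω₁) (hω₂ : 0 < ω₂)
    (hι : ∀ p, e (ι p) = p.1 * ω₁ + p.2 * ω₂ * I) {x : A} (hx : x ∉ ι.range) :
    ∃ H : ℂ → ℂ, Differentiable ℂ H ∧ H (-1) = 0 ∧ H 1 = Real.pi / (ω₁ * ω₂) ∧
      ∀ s : ℂ, 1 < s.re →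
        HasSum (fun p => 1 / (normSq (e (x + ι p)) : ℂ) ^ s) (H s / (s - 1)) := by
  have hab : ((e x).re / ω₁ : UnitAddCircle) ≠ 0 ∨ ((e x).im / ω₂ : UnitAddCircle) ≠ 0 := by
    by_contra! h
    obtain ⟨m, hm⟩ := (AddCircle.coe_eq_zero_iff 1).1 h.1
    obtain ⟨n, hn⟩ := (AddCircle.coe_eq_zero_iff 1).1 h.2
    rw [zsmul_one, eq_div_iff hω₁.ne'] at hm
    rw [zsmul_one, eq_div_iff hω₂.ne'] at hn
    refine hx ⟨(m, n), he ?_⟩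
    rw [hι]
    apply Complex.ext <;> simp [hm, hn]
  obtain ⟨H, hH, hH0, hH1, hsum⟩ := exists_entire_hasSum_shiftedLattice hω₁ hω₂ hab
  refine ⟨H, hH, hH0, hH1, fun s hs => ?_⟩
  convert! hsum s hs using 5 with p
  rw [map_add, hι, normSq_apply]
  simp only [add_re, add_im, mul_re, mul_im, intCast_re, intCast_im, ofReal_re, ofReal_im, I_re,
    I_im, mul_zero, zero_mul, mul_one, sub_zero, sub_self, add_zero, zero_add]
  field_simp
  ring

open Classical in
lemma exists_entire_hasSum_mk_eq (he : Function.Injective e) (hω₁ : 0 < ω₁) (hω₂ : 0 < ω₂)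
    (hι : ∀ p, e (ι p) = p.1 * ω₁ + p.2 * ω₂ * I) {r : A ⧸ ι.range} (hr : r ≠ 0) :
    ∃ H : ℂ → ℂ, Differentiable ℂ H ∧ H (-1) = 0 ∧ H 1 = Real.pi / (ω₁ * ω₂) ∧
      ∀ s : ℂ, 1 < s.re →
        HasSum (fun x : A => if (x : A ⧸ ι.range) = r then 1 / (normSq (e x) : ℂ) ^ s else 0)
          (H s / (s - 1)) := by
  have hout : r.out ∉ ι.range := by
    rwa [← QuotientAddGroup.eq_zero_iff, QuotientAddGroup.out_eq']
  obtain ⟨H, hH, hH0, hH1, hsum⟩ := exists_entire_hasSum_coset he hω₁ hω₂ hι hout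
  refine ⟨H, hH, hH0, hH1, fun s hs => ?_⟩
  have hinj : Function.Injective fun p => r.out + ι p := by
    refine (add_right_injective _).comp fun p p' h => ?_
    have h' := congrArg e h
    simpa [hι, Complex.ext_iff, hω₁.ne', hω₂.ne', Prod.ext_iff] using h'
  have hmk (x : A) : (x : A ⧸ ι.range) = r ↔ x ∈ Set.range fun p => r.out + ι p := by
    rw [← QuotientAddGroup.out_eq' r, eq_comm, QuotientAddGroup.eq, QuotientAddGroup.out_eq']
    simp only [AddMonoidHom.mem_range, Set.mem_range, eq_neg_add_iff_add_eq]
  rw [← hinj.hasSum_iff fun x hx => if_neg (mt (hmk x).1 hx)]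
  convert! hsum s hs using 2 with p
  exact if_pos ((hmk _).2 ⟨p, rfl⟩)

lemma exists_entire_hasSum_periodic [Finite (A ⧸ ι.range)] (he : Function.Injective e)
    (hω₁ : 0 < ω₁) (hω₂ : 0 < ω₂) (hι : ∀ p, e (ι p) = p.1 * ω₁ + p.2 * ω₂ * I)
    {f : A ⧸ ι.range → ℂ} (hf : f 0 = 0) :
    ∃ H : ℂ → ℂ, Differentiable ℂ H ∧ H (-1) = 0 ∧
      H 1 = Real.pi / (ω₁ * ω₂) * ∑ᶠ r, f r ∧
      ∀ s : ℂ, 1 < s.re →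
        HasSum (fun x : A => f x / (normSq (e x) : ℂ) ^ s) (H s / (s - 1)) := by
  classical
  have := Fintype.ofFinite (A ⧸ ι.range)
  have hcoset (r : A ⧸ ι.range) : ∃ H : ℂ → ℂ, Differentiable ℂ H ∧ H (-1) = 0 ∧
      H 1 = f r * (Real.pi / (ω₁ * ω₂)) ∧ ∀ s : ℂ, 1 < s.re →
        HasSum (fun x : A => if (x : A ⧸ ι.range) = r then f r / (normSq (e x) : ℂ) ^ s else 0)
          (H s / (s - 1)) := by
    rcases eq_or_ne r 0 with rfl | hr
    · exact ⟨0, differentiable_const 0, rfl, by simp [hf], fun s _ => by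
        simp [hf, hasSum_zero]⟩
    obtain ⟨H, hH, hH0, hH1, hsum⟩ := exists_entire_hasSum_mk_eq he hω₁ hω₂ hι hr
    refine ⟨fun s => f r * H s, hH.const_mul _, by simp only [hH0, mul_zero], by simp only [hH1],
      fun s hs => ?_⟩
    simpa only [mul_ite, mul_one_div, mul_zero, mul_div_assoc] using (hsum s hs).mul_left (f r)
  choose H hH hH0 hH1 hsum using hcoset
  refine ⟨fun s => ∑ r, H r s, by fun_prop, by simp only [hH0, Finset.sum_const_zero], ?_,
    fun s hs => ?_⟩
  · simp only [hH1, ← Finset.sum_mul, finsum_eq_sum_of_fintype, mul_comm]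
  · rw [Finset.sum_div]
    simpa only [Finset.sum_ite_eq, Finset.mem_univ, if_true] using
      hasSum_sum fun r (_ : r ∈ Finset.univ) => hsum r s hs

end PeriodicCoefficients

section PrincipalIdeals

variable {R : Type*} [CommRing R] [IsDomain R]

lemma card_preimage_span_singleton {x : R} (hx : x ≠ 0) :
    Nat.card ((fun y : R => Ideal.span {y}) ⁻¹' {Ideal.span {x}}) = Nat.card Rˣ := by
  let f (u : Rˣ) : (fun y : R => Ideal.span {y}) ⁻¹' {Ideal.span {x}} :=
    ⟨x * u, by simp [Ideal.span_singleton_eq_span_singleton, Associated.comm]⟩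
  refine (Nat.card_congr (Equiv.ofBijective f ⟨fun u v h => ?_, ?_⟩)).symm
  · exact Units.ext (mul_left_cancel₀ hx (congrArg Subtype.val h))
  · rintro ⟨y, hy⟩
    obtain ⟨u, hu⟩ := Ideal.span_singleton_eq_span_singleton.1 (Set.mem_singleton_iff.1 hy).symm
    exact ⟨u, Subtype.ext hu⟩

lemma hasSum_ideal_of_hasSum_span [IsPrincipalIdealRing R] [Finite Rˣ] {F : Ideal R → ℂ}
    (hF : F ⊥ = 0) {V : ℂ} (h : HasSum (fun x : R => F (Ideal.span {x})) V) :
    HasSum F (V / Nat.card Rˣ) := by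
  convert! (h.tsum_fiberwise fun x : R => Ideal.span {x}).div_const (Nat.card Rˣ : ℂ) using 2 with I
  have hconst (x : (fun y : R => Ideal.span {y}) ⁻¹' {I}) : F (Ideal.span {(x : R)}) = F I :=
    congrArg F x.2
  simp only [hconst, tsum_const]
  obtain ⟨x, rfl⟩ := (IsPrincipalIdealRing.principal I).principal
  rcases eq_or_ne x 0 with rfl | hx
  · simp [hF]
  · rw [← Ideal.span, card_preimage_span_singleton hx, nsmul_eq_mul,
      mul_div_cancel_left₀ _ (Nat.cast_ne_zero.2 Nat.card_pos.ne')]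

end PrincipalIdeals

section IdealDirichletSeries

open NumberField Filter

variable {K : Type*} [Field K] [NumberField K]

lemma sum_card_absNorm_eq_isBigO :
    (fun n : ℕ => ∑ k ∈ Finset.Icc 1 n,
      (Nat.card {I : Ideal (𝓞 K) // Ideal.absNorm I = k} : ℝ)) =O[atTop]
        fun n => (n : ℝ) ^ (1 : ℝ) := by
  have hcount : (fun n : ℕ => (Nat.card {I : Ideal (𝓞 K) // Ideal.absNorm I ≤ n} : ℝ))
      =O[atTop] fun n => (n : ℝ) := by
    have := ((NumberField.Ideal.tendsto_norm_le_div_atTop K).comp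
      tendsto_natCast_atTop_atTop).isBigO_one ℝ
    refine (this.mul (Asymptotics.isBigO_refl (fun n : ℕ => (n : ℝ)) atTop)).congr' ?_
      (.of_forall fun n => one_mul _)
    filter_upwards [eventually_ne_atTop 0] with n hn
    simp [hn]
  simp only [Real.rpow_one]
  refine (Asymptotics.IsBigO.of_norm_le fun n => ?_).trans hcount
  rw [← Nat.cast_sum, Real.norm_natCast, Nat.cast_le]
  have := Finset.card_preimage_eq_sum_card_image_eq (f := fun I : Ideal (𝓞 K) => Ideal.absNorm I)
    (s := Finset.Icc 1 n) (fun k _ => Ideal.finite_setOfPred_absNorm_eq k)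
  have hfin : {I : Ideal (𝓞 K) | Ideal.absNorm I ≤ n}.Finite := Ideal.finite_setOfPred_absNorm_le n
  calc _ = _ := this.symm
    _ ≤ _ := Nat.card_mono hfin fun I hI => (Finset.mem_Icc.1 (Set.mem_preimage.1 hI)).2

theorem summable_one_div_absNorm_rpow {σ : ℝ} (hσ : 1 < σ) :
    Summable fun I : Ideal (𝓞 K) => 1 / (Ideal.absNorm I : ℝ) ^ σ := by
  rw [← (Equiv.sigmaFiberEquiv fun I : Ideal (𝓞 K) => Ideal.absNorm I).summable_iff]
  have hfin (n : ℕ) : Finite {I : Ideal (𝓞 K) // Ideal.absNorm I = n} :=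
    Ideal.finite_setOfPred_absNorm_eq n
  refine (summable_sigma_of_nonneg fun _ => one_div_nonneg.2 (by positivity)).2
    ⟨fun n => .of_finite, ?_⟩
  have hsum := LSeriesSummable_of_sum_norm_bigO_and_nonneg (sum_card_absNorm_eq_isBigO (K := K))
    (fun _ => Nat.cast_nonneg _) zero_le_one (s := σ) hσ
  refine hsum.norm.congr fun n => ?_
  have hconst (I : {I : Ideal (𝓞 K) // Ideal.absNorm I = n}) :
      1 / (Ideal.absNorm I.1 : ℝ) ^ σ = 1 / (n : ℝ) ^ σ := by rw [I.2]
  simp only [Equiv.sigmaFiberEquiv_apply, hconst, tsum_const, nsmul_eq_mul]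
  rcases eq_or_ne n 0 with rfl | hn
  · simp [Real.zero_rpow (one_pos.trans hσ).ne']
  · simp [hn, div_eq_mul_inv]

end IdealDirichletSeries

section IdealArithmetic

open NumberField

variable {K : Type*} [Field K] [NumberField K]

variable (K) in
/-- The finite set of ideals of norm `n` in the ring of integers of `K`. -/
noncomputable def idealsOfNorm (n : ℕ) : Finset (Ideal (𝓞 K)) :=
  (Ideal.finite_setOfPred_absNorm_eq n).toFinset

lemma mem_idealsOfNorm {n : ℕ} {I : Ideal (𝓞 K)} :
    I ∈ idealsOfNorm K n ↔ Ideal.absNorm I = n := by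
  simp [idealsOfNorm]

lemma ne_zero_of_mem_idealsOfNorm {n : ℕ} (hn : n ≠ 0) {I : Ideal (𝓞 K)}
    (hI : I ∈ idealsOfNorm K n) : I ≠ 0 := fun h =>
  hn ((mem_idealsOfNorm.1 hI).symm.trans (by simp [h]))

open Classical in
/-- The finite set of divisors of a nonzero ideal; it is empty for the zero ideal. -/
noncomputable def idealDivisors (I : Ideal (𝓞 K)) : Finset (Ideal (𝓞 K)) :=
  {J ∈ (Ideal.absNorm I).divisors.biUnion (idealsOfNorm K) | J ∣ I}

lemma mem_idealDivisors {I J : Ideal (𝓞 K)} (hI : I ≠ 0) : J ∈ idealDivisors I ↔ J ∣ I := by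
  simp only [idealDivisors, Finset.mem_filter, Finset.mem_biUnion, Nat.mem_divisors,
    mem_idealsOfNorm, exists_eq_right', and_iff_right_iff_imp]
  exact fun h => ⟨map_dvd Ideal.absNorm h, mt Ideal.absNorm_eq_zero_iff.1 hI⟩

open Classical in
/-- The von Mangoldt function on ideals: `log N(P)` on the powers of a prime `P`, and `0` elsewhere.
The prime is recovered as the radical. -/
noncomputable def idealVonMangoldt (I : Ideal (𝓞 K)) : ℝ :=
  if IsPrimePow I then Real.log (Ideal.absNorm I.radical) else 0

lemma idealVonMangoldt_prime_pow {P : Ideal (𝓞 K)} (hP : Prime P) {k : ℕ} (hk : k ≠ 0) :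
    idealVonMangoldt (P ^ k) = Real.log (Ideal.absNorm P) := by
  rw [idealVonMangoldt, if_pos (hP.isPrimePow.pow hk), Ideal.radical_pow P hk,
    (Ideal.isPrime_of_prime hP).radical]

lemma idealVonMangoldt_nonneg (I : Ideal (𝓞 K)) : 0 ≤ idealVonMangoldt I := by
  rw [idealVonMangoldt]
  split_ifs
  exacts [Real.log_natCast_nonneg _, le_rfl]

/-- Passing from `I` to `P * I` creates exactly one new prime power divisor. -/
lemma isPrimePow_and_dvd_mul_and_not_dvd_iff {M : Type*} [CommMonoidWithZero M]
    [IsCancelMulZero M] [Subsingleton Mˣ] {P I J : M} (hP : Prime P)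
    (hfin : FiniteMultiplicity P I) :
    IsPrimePow J ∧ J ∣ P * I ∧ ¬J ∣ I ↔ J = P ^ (multiplicity P I + 1) := by
  constructor
  · rintro ⟨⟨Q, k, hQ, hk, rfl⟩, hdvd, hndvd⟩
    obtain rfl : Q = P := by
      by_contra hne
      refine hndvd (hQ.pow_dvd_of_dvd_mul_left k (fun h => hne ?_) hdvd)
      exact associated_iff_eq.1 ((hQ.dvd_prime_iff_associated hP).1 h)
    obtain ⟨j, rfl⟩ := Nat.exists_eq_add_one.2 hk
    have hj : Q ^ j ∣ I := by
      rwa [pow_succ', mul_dvd_mul_iff_left hQ.ne_zero] at hdvd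
    have hle : j ≤ multiplicity Q I := hfin.le_multiplicity_of_pow_dvd hj
    have hlt : multiplicity Q I < j + 1 := lt_of_not_ge (mt pow_dvd_of_le_multiplicity hndvd)
    rw [le_antisymm hle (Nat.lt_succ_iff.1 hlt)]
  · rintro rfl
    refine ⟨hP.isPrimePow.pow (Nat.succ_ne_zero _), ?_, ?_⟩
    · rw [pow_succ']
      exact mul_dvd_mul_left P (pow_multiplicity_dvd P I)
    · exact hfin.not_pow_dvd_of_multiplicity_lt (Nat.lt_succ_self _)

lemma idealVonMangoldt_of_not_isPrimePow {I : Ideal (𝓞 K)} (hI : ¬IsPrimePow I) :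
    idealVonMangoldt I = 0 :=
  if_neg hI

lemma sum_idealVonMangoldt {I : Ideal (𝓞 K)} (hI : I ≠ 0) :
    ∑ J ∈ idealDivisors I, idealVonMangoldt J = Real.log (Ideal.absNorm I) := by
  classical
  induction I using UniqueFactorizationMonoid.induction_on_prime with
  | h₁ => exact absurd rfl hI
  | h₂ U hU =>
    have hunit : ∀ J ∈ idealDivisors U, ¬IsPrimePow J := fun J hJ hpp =>
      hpp.not_isUnit (isUnit_of_dvd_unit ((mem_idealDivisors hI).1 hJ) hU)
    rw [Finset.sum_eq_zero fun J hJ => idealVonMangoldt_of_not_isPrimePow (hunit J hJ),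
      Ideal.isUnit_iff.1 hU]
    simp
  | h₃ I P hI' hP ih =>
    have hsub : idealDivisors I ⊆ idealDivisors (P * I) := fun J hJ =>
      (mem_idealDivisors hI).2 (((mem_idealDivisors hI').1 hJ).mul_left P)
    have hnew := isPrimePow_and_dvd_mul_and_not_dvd_iff (J := P ^ (multiplicity P I + 1)) hP
      (FiniteMultiplicity.of_prime_left hP hI')
    have hsum : ∑ J ∈ idealDivisors (P * I) \ idealDivisors I, idealVonMangoldt J =
        Real.log (Ideal.absNorm P) := by
      rw [Finset.sum_eq_single (P ^ (multiplicity P I + 1)),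
        idealVonMangoldt_prime_pow hP (Nat.succ_ne_zero _)]
      · intro J hJ hne
        rw [Finset.mem_sdiff, mem_idealDivisors hI, mem_idealDivisors hI'] at hJ
        exact idealVonMangoldt_of_not_isPrimePow fun hpp => hne
          ((isPrimePow_and_dvd_mul_and_not_dvd_iff hP
            (FiniteMultiplicity.of_prime_left hP hI')).1 ⟨hpp, hJ⟩)
      · rw [Finset.mem_sdiff, mem_idealDivisors hI, mem_idealDivisors hI']
        exact fun h => absurd (hnew.2 rfl).2 h
    rw [← Finset.sum_sdiff hsub, ih hI', hsum, map_mul, Nat.cast_mul, Real.log_mul]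
    · exact Nat.cast_ne_zero.2 (mt Ideal.absNorm_eq_zero_iff.1 hP.ne_zero)
    · exact Nat.cast_ne_zero.2 (mt Ideal.absNorm_eq_zero_iff.1 hI')

lemma idealVonMangoldt_le_log {I : Ideal (𝓞 K)} (hI : I ≠ 0) :
    idealVonMangoldt I ≤ Real.log (Ideal.absNorm I) := by
  rw [← sum_idealVonMangoldt hI]
  exact Finset.single_le_sum (fun J _ => idealVonMangoldt_nonneg J)
    ((mem_idealDivisors hI).2 dvd_rfl)

lemma summable_idealVonMangoldt_div_rpow {σ : ℝ} (hσ : 1 < σ) :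
    Summable fun I : Ideal (𝓞 K) => idealVonMangoldt I / (Ideal.absNorm I : ℝ) ^ σ := by
  obtain ⟨τ, hτ, hτσ⟩ := exists_between hσ
  have hε : 0 < σ - τ := sub_pos.2 hτσ
  refine .of_nonneg_of_le (fun I => div_nonneg (idealVonMangoldt_nonneg I) (by positivity)) ?_
    ((summable_one_div_absNorm_rpow hτ).mul_left (1 / (σ - τ)))
  intro I
  rcases eq_or_ne I 0 with rfl | hI
  · simp [Real.zero_rpow (one_pos.trans hσ).ne', Real.zero_rpow (one_pos.trans hτ).ne']
  have hN : (0 : ℝ) < Ideal.absNorm I :=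
    Nat.cast_pos.2 (Nat.pos_of_ne_zero (mt Ideal.absNorm_eq_zero_iff.1 hI))
  have hσ' : (Ideal.absNorm I : ℝ) ^ σ =
      (Ideal.absNorm I : ℝ) ^ τ * (Ideal.absNorm I : ℝ) ^ (σ - τ) := by
    rw [← Real.rpow_add hN, add_sub_cancel]
  rw [hσ', div_le_iff₀ (by positivity)]
  calc idealVonMangoldt I ≤ Real.log (Ideal.absNorm I) := idealVonMangoldt_le_log hI
    _ ≤ (Ideal.absNorm I : ℝ) ^ (σ - τ) / (σ - τ) := Real.log_le_rpow_div hN.le hε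
    _ = _ := by field_simp

/-- The arithmetic function `n ↦ ∑ f(I)` over the ideals `I` of norm `n`, that is, the
coefficients of the Dirichlet series `∑ f(I) / N(I)^s` over the nonzero ideals. -/
noncomputable def idealCoeff (f : Ideal (𝓞 K) → ℂ) : ArithmeticFunction ℂ where
  toFun n := if n = 0 then 0 else ∑ I ∈ idealsOfNorm K n, f I
  map_zero' := if_pos rfl

lemma idealCoeff_apply (f : Ideal (𝓞 K) → ℂ) {n : ℕ} (hn : n ≠ 0) :
    idealCoeff f n = ∑ I ∈ idealsOfNorm K n, f I :=
  if_neg hn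

lemma idealCoeff_one (f : Ideal (𝓞 K) → ℂ) : idealCoeff f 1 = f 1 := by
  have h : idealsOfNorm K 1 = {1} := by
    ext I
    rw [mem_idealsOfNorm, Ideal.absNorm_eq_one_iff, Finset.mem_singleton, Ideal.one_eq_top]
  rw [idealCoeff_apply f one_ne_zero, h, Finset.sum_singleton]

lemma lseriesHasSum_idealCoeff {f : Ideal (𝓞 K) → ℂ} {s V : ℂ} (hs : s ≠ 0)
    (h : HasSum (fun I => f I / (Ideal.absNorm I : ℂ) ^ s) V) :
    LSeriesHasSum (idealCoeff f) s V := by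
  rw [LSeriesHasSum]
  convert! h.tsum_fiberwise fun I => Ideal.absNorm I using 2 with n
  have hfiber : (fun I : Ideal (𝓞 K) => Ideal.absNorm I) ⁻¹' {n} = idealsOfNorm K n := by
    ext I
    rw [Finset.mem_coe, mem_idealsOfNorm, Set.mem_preimage, Set.mem_singleton_iff]
  rw [hfiber, Finset.tsum_subtype' (idealsOfNorm K n) fun I => f I / (Ideal.absNorm I : ℂ) ^ s]
  rcases eq_or_ne n 0 with rfl | hn
  · rw [LSeries.term_zero, Finset.sum_eq_zero]
    intro I hI
    rw [mem_idealsOfNorm.1 hI, Nat.cast_zero, Complex.zero_cpow hs, div_zero]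
  · rw [LSeries.term_of_ne_zero hn, idealCoeff_apply f hn, Finset.sum_div]
    exact Finset.sum_congr rfl fun I hI => by rw [mem_idealsOfNorm.1 hI]

lemma sum_divisorsAntidiagonal_idealsOfNorm {M : Type*} [AddCommMonoid M]
    (F : Ideal (𝓞 K) → Ideal (𝓞 K) → M) {n : ℕ} (hn : n ≠ 0) :
    ∑ d ∈ n.divisorsAntidiagonal,
        ∑ p ∈ idealsOfNorm K d.1 ×ˢ idealsOfNorm K d.2, F (p.1 * p.2) p.2 =
      ∑ I ∈ idealsOfNorm K n, ∑ J ∈ idealDivisors I, F I J := by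
  rw [Finset.sum_sigma', Finset.sum_sigma']
  refine Finset.sum_bij (fun x _ => ⟨x.2.1 * x.2.2, x.2.2⟩) ?_ ?_ ?_ fun _ _ => rfl
  · rintro ⟨⟨d, e⟩, I, J⟩ h
    simp only [Finset.mem_sigma, Nat.mem_divisorsAntidiagonal, Finset.mem_product,
      mem_idealsOfNorm] at h
    have hIJ : I * J ∈ idealsOfNorm K n := by
      rw [mem_idealsOfNorm, map_mul, h.2.1, h.2.2, h.1.1]
    exact Finset.mem_sigma.2 ⟨hIJ, (mem_idealDivisors (ne_zero_of_mem_idealsOfNorm hn hIJ)).2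
      (dvd_mul_left J I)⟩
  · rintro ⟨⟨d, e⟩, I, J⟩ h ⟨⟨d', e'⟩, I', J'⟩ h' heq
    simp only [Finset.mem_sigma, Nat.mem_divisorsAntidiagonal, Finset.mem_product,
      mem_idealsOfNorm] at h h'
    obtain ⟨⟨hde, -⟩, rfl, rfl⟩ := h
    obtain ⟨-, rfl, rfl⟩ := h'
    obtain ⟨hmul, rfl⟩ : I * J = I' * J' ∧ J = J' := by simpa using heq
    have hJ : J ≠ 0 := by
      rintro rfl
      exact hn (by rw [← hde, Submodule.zero_eq_bot, Ideal.absNorm_bot, mul_zero])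
    rw [mul_right_cancel₀ hJ hmul]
  · rintro ⟨I, J⟩ h
    obtain ⟨hI, hJ⟩ : I ∈ idealsOfNorm K n ∧ J ∈ idealDivisors I := Finset.mem_sigma.1 h
    obtain ⟨L, rfl⟩ := (mem_idealDivisors (ne_zero_of_mem_idealsOfNorm hn hI)).1 hJ
    refine ⟨⟨(Ideal.absNorm L, Ideal.absNorm J), L, J⟩, ?_, by rw [mul_comm]⟩
    simp only [Finset.mem_sigma, Nat.mem_divisorsAntidiagonal, Finset.mem_product,
      mem_idealsOfNorm, and_self, and_true]
    exact ⟨by rw [← mem_idealsOfNorm.1 hI, map_mul, mul_comm], hn⟩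

lemma idealCoeff_mul_idealCoeff (f : Ideal (𝓞 K) →* ℂ) (g : Ideal (𝓞 K) → ℂ) :
    idealCoeff f * idealCoeff (fun J => f J * g J) =
      idealCoeff fun I => f I * ∑ J ∈ idealDivisors I, g J := by
  ext n
  rcases eq_or_ne n 0 with rfl | hn
  · simp only [ArithmeticFunction.map_zero]
  simp only [ArithmeticFunction.mul_apply, idealCoeff_apply _ hn, Finset.mul_sum,
    ← sum_divisorsAntidiagonal_idealsOfNorm (fun I J => f I * g J) hn]
  refine Finset.sum_congr rfl fun d hd => ?_
  obtain ⟨h1, h2⟩ := Nat.ne_zero_of_mem_divisorsAntidiagonal hd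
  simp only [idealCoeff_apply _ h1, idealCoeff_apply _ h2, Finset.sum_mul_sum,
    ← Finset.sum_product', map_mul, mul_assoc]

end IdealArithmetic

section LogarithmicDerivative

open Filter Topology ComplexOrder

variable {f g Λ M : ArithmeticFunction ℂ}

/-- `Λ` is a logarithmic derivative of `f` for Dirichlet convolution: formally, the Dirichlet
series satisfy `-L(f, s)' = L(f, s) L(Λ, s)`. -/
def IsDirichletLogDeriv (f Λ : ArithmeticFunction ℂ) : Prop :=
  ∀ n : ℕ, f n * Real.log n = (f * Λ) n

lemma IsDirichletLogDeriv.mul (hf : IsDirichletLogDeriv f Λ) (hg : IsDirichletLogDeriv g M) :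
    IsDirichletLogDeriv (f * g) (Λ + M) := by
  intro n
  have hring : (f * g) * (Λ + M) = (f * Λ) * g + f * (g * M) := by ring
  simp only [hring, ArithmeticFunction.add_apply, ArithmeticFunction.mul_apply (f := f) (g := g),
    ArithmeticFunction.mul_apply (f := f * Λ), ArithmeticFunction.mul_apply (g := g * M),
    Finset.sum_mul, ← Finset.sum_add_distrib, ← hf _, ← hg _]
  refine Finset.sum_congr rfl fun d hd => ?_
  obtain ⟨h1, h2⟩ := Nat.ne_zero_of_mem_divisorsAntidiagonal hd
  rw [← (Nat.mem_divisorsAntidiagonal.1 hd).1, Nat.cast_mul,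
    Real.log_mul (Nat.cast_ne_zero.2 h1) (Nat.cast_ne_zero.2 h2)]
  push_cast
  ring

lemma isDirichletLogDeriv_one_zero : IsDirichletLogDeriv 1 0 := by
  intro n
  rcases eq_or_ne n 1 with rfl | hn
  · simp only [Nat.cast_one, Real.log_one, Complex.ofReal_zero, mul_zero,
      ArithmeticFunction.zero_apply]
  · rw [ArithmeticFunction.one_apply_ne hn, zero_mul, mul_zero, ArithmeticFunction.zero_apply]

lemma isDirichletLogDeriv_prod {ι : Type*} {F L : ι → ArithmeticFunction ℂ} (s : Finset ι)
    (h : ∀ i ∈ s, IsDirichletLogDeriv (F i) (L i)) :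
    IsDirichletLogDeriv (∏ i ∈ s, F i) (∑ i ∈ s, L i) := by
  classical
  induction s using Finset.induction_on with
  | empty => exact isDirichletLogDeriv_one_zero
  | insert i s hi ih =>
    rw [Finset.prod_insert hi, Finset.sum_insert hi]
    rw [Finset.forall_mem_insert] at h
    exact h.1.mul (ih h.2)

lemma IsDirichletLogDeriv.nonneg (hf : IsDirichletLogDeriv f Λ) (hΛ : ∀ n, 0 ≤ Λ n)
    (h1 : f 1 = 1) (n : ℕ) : 0 ≤ f n := by
  have hΛ1 : Λ 1 = 0 := by simpa [h1] using (hf 1).symm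
  induction n using Nat.strong_induction_on with
  | _ n ih =>
    rcases n.lt_or_ge 2 with hn | hn
    · interval_cases n
      · rw [ArithmeticFunction.map_zero]
      · exact h1 ▸ zero_le_one
    have hlog : 0 < Real.log n := Real.log_pos (Nat.one_lt_cast.2 hn)
    suffices hmul : 0 ≤ f n * Real.log n by
      have := mul_nonneg hmul (Complex.zero_le_real.2 (inv_pos.2 hlog).le)
      rwa [Complex.ofReal_inv, mul_inv_cancel_right₀ (Complex.ofReal_ne_zero.2 hlog.ne')] at this
    rw [hf n, ArithmeticFunction.mul_apply]
    refine Finset.sum_nonneg fun d hd => ?_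
    rcases eq_or_ne d.2 1 with hd2 | hd2
    · rw [hd2, hΛ1, mul_zero]
    · obtain ⟨h1, h2⟩ := Nat.ne_zero_of_mem_divisorsAntidiagonal hd
      have hlt : d.1 < d.1 * d.2 :=
        lt_mul_of_one_lt_right (Nat.pos_of_ne_zero h1)
          (Nat.one_lt_iff_ne_zero_and_ne_one.2 ⟨h2, hd2⟩)
      exact mul_nonneg (ih d.1 ((Nat.mem_divisorsAntidiagonal.1 hd).1 ▸ hlt)) (hΛ _)

lemma IsDirichletLogDeriv.logDeriv_LSeries (hf : IsDirichletLogDeriv f Λ) {s : ℂ}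
    (hs : LSeries.abscissaOfAbsConv f < s.re) (hΛ : LSeriesSummable Λ s) (h0 : LSeries f s ≠ 0) :
    logDeriv (LSeries f) s = -LSeries Λ s := by
  have hlog : LSeries.logMul f = (f * Λ : ArithmeticFunction ℂ) := by
    ext n
    rw [← hf n, LSeries.logMul, Complex.natCast_log, mul_comm]
  rw [logDeriv_apply, LSeries_deriv hs, hlog, ArithmeticFunction.LSeries_mul'
    (LSeriesSummable_of_abscissaOfAbsConv_lt_re hs) hΛ, neg_div, mul_div_cancel_left₀ _ h0]

lemma lseriesHasSum_prod {ι : Type*} {F : ι → ArithmeticFunction ℂ} {V : ι → ℂ} {z : ℂ}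
    (s : Finset ι) (h : ∀ i ∈ s, LSeriesHasSum (F i) z (V i)) :
    LSeriesHasSum (∏ i ∈ s, F i : ArithmeticFunction ℂ) z (∏ i ∈ s, V i) := by
  classical
  induction s using Finset.induction_on with
  | empty =>
    rw [Finset.prod_empty, Finset.prod_empty, LSeriesHasSum,
      show ⇑(1 : ArithmeticFunction ℂ) = LSeries.delta from ArithmeticFunction.one_eq_delta]
    rw [funext (LSeries.term_delta z)]
    exact hasSum_ite_eq 1 1
  | insert i s hi ih =>
    rw [Finset.prod_insert hi, Finset.prod_insert hi]
    rw [Finset.forall_mem_insert] at h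
    exact ArithmeticFunction.LSeriesHasSum_mul h.1 (ih h.2)

lemma abscissaOfAbsConv_le_one_of_lseriesHasSum {a : ℕ → ℂ} {V : ℂ → ℂ}
    (h : ∀ s : ℂ, 1 < s.re → LSeriesHasSum a s (V s)) : LSeries.abscissaOfAbsConv a ≤ 1 :=
  LSeries.abscissaOfAbsConv_le_of_forall_lt_LSeriesSummable fun y hy =>
    (h y (by simpa using hy)).LSeriesSummable

lemma IsDirichletLogDeriv.tendsto_sub_one_mul_LSeries (hf : IsDirichletLogDeriv f Λ)
    (hΛ : ∀ s : ℂ, 1 < s.re → LSeriesSummable Λ s) {h : ℂ → ℂ} (hh : Differentiable ℂ h)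
    (h1 : h 1 ≠ 0) {k : ℕ} (hsum : ∀ s : ℂ, 1 < s.re → LSeriesHasSum f s (h s / (s - 1) ^ k)) :
    Tendsto (fun x : ℝ => ((x : ℂ) - 1) * LSeries Λ x) (𝓝[>] 1) (𝓝 k) := by
  have hcast : Tendsto (fun x : ℝ => (x : ℂ)) (𝓝[>] 1) (𝓝 1) :=
    (Complex.continuous_ofReal.tendsto' 1 1 Complex.ofReal_one).mono_left nhdsWithin_le_nhds
  have hlim : Tendsto (fun x : ℝ => k - ((x : ℂ) - 1) * logDeriv h x) (𝓝[>] 1) (𝓝 k) := by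
    have hcont : ContinuousAt (fun s => k - (s - 1) * logDeriv h s) 1 := by
      have hdc : Continuous (deriv h) := (hh.contDiff (n := 1)).continuous_deriv le_rfl
      have : ContinuousAt (logDeriv h) 1 := hdc.continuousAt.div hh.continuous.continuousAt h1
      fun_prop
    have := hcont.tendsto.comp hcast
    rwa [sub_self, zero_mul, sub_zero] at this
  refine hlim.congr' ?_
  filter_upwards [hcast (hh.continuous.continuousAt.eventually_ne h1), self_mem_nhdsWithin]
    with x hx (hx1 : 1 < x)
  have hre : 1 < (x : ℂ).re := by rwa [Complex.ofReal_re]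
  have hne := sub_one_ne_zero_of_one_lt_re hre
  have heq : LSeries f =ᶠ[𝓝 (x : ℂ)] fun s => h s / (s - 1) ^ k := by
    filter_upwards [(isOpen_lt continuous_const Complex.continuous_re).mem_nhds hre] with s hs
    exact (hsum s hs).LSeries_eq
  have hlogDeriv : logDeriv (fun s : ℂ => (s - 1) ^ k) x = k / (x - 1) := by
    rw [logDeriv_fun_pow (by fun_prop), logDeriv_apply]
    simp [div_eq_mul_inv]
  rw [← neg_eq_iff_eq_neg.2 (hf.logDeriv_LSeries (lt_of_le_of_lt
      (abscissaOfAbsConv_le_one_of_lseriesHasSum hsum) (by exact_mod_cast hre)) (hΛ x hre)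
      (heq.eq_of_nhds ▸ div_ne_zero hx (pow_ne_zero k hne))), (logDeriv_congr_nhds heq).eq_of_nhds,
    logDeriv_div (f := h) (g := fun s => (s - 1) ^ k) _ hx (pow_ne_zero k hne) (hh x)
      (by fun_prop), hlogDeriv]
  field_simp
  ring

lemma exists_differentiable_eq_sub_mul {h : ℂ → ℂ} (hh : Differentiable ℂ h) {c : ℂ}
    (hc : h c = 0) : ∃ g : ℂ → ℂ, Differentiable ℂ g ∧ ∀ s, h s = (s - c) * g s := by
  refine ⟨dslope h c, ?_, fun s => ?_⟩
  · rw [← differentiableOn_univ, Complex.differentiableOn_dslope univ_mem]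
    exact hh.differentiableOn
  · rw [← smul_eq_mul, sub_smul_dslope, hc, sub_zero]

/-- The residue cannot vanish: `L(f, s)` would continue to an entire function, which for nonnegative
coefficients is positive on the whole real axis. -/
lemma IsDirichletLogDeriv.ne_zero_of_nonneg (hf : IsDirichletLogDeriv f Λ) (hΛ : ∀ n, 0 ≤ Λ n)
    (hf1 : f 1 = 1) {h : ℂ → ℂ} (hh : Differentiable ℂ h) (h0 : h (-1) = 0)
    (hsum : ∀ s : ℂ, 1 < s.re → LSeriesHasSum f s (h s / (s - 1))) : h 1 ≠ 0 := by
  intro h1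
  obtain ⟨g, hg, hhg⟩ := exists_differentiable_eq_sub_mul hh h1
  have hpos := LSeries.positive_of_differentiable_of_eqOn (hf.nonneg hΛ hf1)
    (hf1 ▸ zero_lt_one) hg (x := 1) (abscissaOfAbsConv_le_one_of_lseriesHasSum hsum)
    (fun s hs => by
      rw [(hsum s hs).LSeries_eq, hhg, mul_div_cancel_left₀ _ (sub_one_ne_zero_of_one_lt_re hs)])
    (-1)
  have hzero : g (-1) = 0 :=
    (mul_eq_zero.1 ((hhg (-1)).symm.trans h0)).resolve_left (by norm_num)
  exact hpos.ne' (by exact_mod_cast hzero)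

lemma tendsto_sub_one_mul_LSeries_of_lseriesSummable_one {a : ℕ → ℂ}
    (ha : LSeriesSummable a 1) :
    Tendsto (fun x : ℝ => ((x : ℂ) - 1) * LSeries a x) (𝓝[>] 1) (𝓝 0) := by
  have hbound : ∀ᶠ x : ℝ in 𝓝[>] 1, ‖LSeries a x‖ ≤ ∑' n, ‖LSeries.term a 1 n‖ := by
    filter_upwards [self_mem_nhdsWithin] with x (hx : 1 < x)
    exact tsum_of_norm_bounded ha.norm.hasSum fun n =>
      LSeries.norm_term_le_of_re_le_re a (by simpa using hx.le) n
  have hcast : Tendsto (fun x : ℝ => (x : ℂ) - 1) (𝓝[>] 1) (𝓝 0) :=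
    ((Complex.continuous_ofReal.sub continuous_const).tendsto' 1 0 (by simp)).mono_left
      nhdsWithin_le_nhds
  exact hcast.zero_mul_isBoundedUnder_le (isBoundedUnder_of_eventually_le hbound)

end LogarithmicDerivative

section PrimesInClasses

open NumberField Filter Topology ComplexOrder

section Orthogonality

variable {M R : Type*} [CommMonoid M] [Finite M] [CommRing R] [IsDomain R]
  [HasEnoughRootsOfUnity R (Monoid.exponent Mˣ)] [Fintype (MulChar M R)]

lemma sum_mulChar_apply [DecidableEq M] (a : M) :
    ∑ χ : MulChar M R, χ a = if a = 1 then (Fintype.card (MulChar M R) : R) else 0 := by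
  split_ifs with ha
  · simp only [ha, map_one, Finset.sum_const, Finset.card_univ, nsmul_one]
  · obtain ⟨χ, hχ⟩ := MulChar.exists_apply_ne_one_of_hasEnoughRootsOfUnity M R ha
    refine eq_zero_of_mul_eq_self_left hχ ?_
    simp only [Finset.mul_sum, ← MulChar.mul_apply]
    exact Fintype.sum_bijective _ (Group.mulLeft_bijective χ) _ _ fun _ => rfl

lemma sum_mulChar_inv_mul_apply [DecidableEq M] (β : Mˣ) (a : M) :
    ∑ χ : MulChar M R, χ ↑β⁻¹ * χ a =
      if a = β then (Fintype.card (MulChar M R) : R) else 0 := by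
  simp only [← map_mul, sum_mulChar_apply, Units.inv_mul_eq_one, eq_comm]

end Orthogonality

variable {K : Type*} [Field K] [NumberField K]

lemma summable_mul_idealVonMangoldt_div_cpow {f : Ideal (𝓞 K) → ℂ} (hf : ∀ I, ‖f I‖ ≤ 1)
    {s : ℂ} (hs : 1 < s.re) :
    Summable fun I : Ideal (𝓞 K) => f I * idealVonMangoldt I / (Ideal.absNorm I : ℂ) ^ s := by
  refine .of_norm_bounded (summable_idealVonMangoldt_div_rpow hs) fun I => ?_
  rw [norm_div, norm_mul, Complex.norm_real, Real.norm_of_nonneg (idealVonMangoldt_nonneg I),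
    Complex.norm_natCast_cpow_of_re_ne_zero _ (by linarith)]
  gcongr
  exact mul_le_of_le_one_left (idealVonMangoldt_nonneg I) (hf I)

lemma lseriesSummable_idealCoeff_mul_idealVonMangoldt {f : Ideal (𝓞 K) → ℂ}
    (hf : ∀ I, ‖f I‖ ≤ 1) {s : ℂ} (hs : 1 < s.re) :
    LSeriesSummable (idealCoeff fun I => f I * idealVonMangoldt I) s :=
  (lseriesHasSum_idealCoeff (Complex.ne_zero_of_one_lt_re hs)
    (summable_mul_idealVonMangoldt_div_cpow hf hs).hasSum).LSeriesSummable

lemma isDirichletLogDeriv_idealCoeff (f : Ideal (𝓞 K) →* ℂ) :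
    IsDirichletLogDeriv (idealCoeff f) (idealCoeff fun I => f I * idealVonMangoldt I) := by
  intro n
  rcases eq_or_ne n 0 with rfl | hn
  · rw [ArithmeticFunction.map_zero, ArithmeticFunction.map_zero, zero_mul]
  rw [idealCoeff_mul_idealCoeff, idealCoeff_apply _ hn, idealCoeff_apply _ hn, Finset.sum_mul]
  refine Finset.sum_congr rfl fun I hI => ?_
  rw [← Complex.ofReal_sum, sum_idealVonMangoldt (ne_zero_of_mem_idealsOfNorm hn hI),
    mem_idealsOfNorm.1 hI]

lemma coe_sum_arithmeticFunction {ι R : Type*} [AddCommMonoid R] (s : Finset ι)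
    (F : ι → ArithmeticFunction R) : ⇑(∑ i ∈ s, F i) = ∑ i ∈ s, ⇑(F i) := by
  classical
  induction s using Finset.induction_on with
  | empty => rfl
  | insert i s hi ih =>
    rw [Finset.sum_insert hi, Finset.sum_insert hi, ← ih]
    rfl

lemma idealCoeff_sum {ι : Type*} (s : Finset ι) (F : ι → Ideal (𝓞 K) → ℂ) :
    idealCoeff (fun I => ∑ i ∈ s, F i I) = ∑ i ∈ s, idealCoeff (F i) := by
  ext n
  rw [coe_sum_arithmeticFunction, Finset.sum_apply]
  rcases eq_or_ne n 0 with rfl | hn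
  · simp only [ArithmeticFunction.map_zero, Finset.sum_const_zero]
  · simp only [idealCoeff_apply _ hn]
    exact Finset.sum_comm

lemma idealCoeff_const_mul (c : ℂ) (f : Ideal (𝓞 K) → ℂ) :
    ⇑(idealCoeff fun I => c * f I) = c • ⇑(idealCoeff f) := by
  ext n
  rcases eq_or_ne n 0 with rfl | hn
  · simp only [ArithmeticFunction.map_zero, Pi.smul_apply, smul_zero]
  · simp only [idealCoeff_apply _ hn, Pi.smul_apply, smul_eq_mul, Finset.mul_sum]

lemma idealCoeff_nonneg {f : Ideal (𝓞 K) → ℂ} (hf : ∀ I, 0 ≤ f I) (n : ℕ) :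
    0 ≤ idealCoeff f n := by
  rcases eq_or_ne n 0 with rfl | hn
  · rw [ArithmeticFunction.map_zero]
  · rw [idealCoeff_apply f hn]
    exact Finset.sum_nonneg fun I _ => hf I

lemma two_le_absNorm_of_prime {P : Ideal (𝓞 K)} (hP : Prime P) : 2 ≤ Ideal.absNorm P :=
  (Nat.two_le_iff _).2 ⟨mt Ideal.absNorm_eq_zero_iff.1 hP.ne_zero, fun h =>
    hP.not_isUnit (Ideal.isUnit_iff.2 (Ideal.absNorm_eq_one_iff.1 h))⟩

lemma summable_idealVonMangoldt_div_of_not_prime :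
    Summable fun I : {I : Ideal (𝓞 K) // ¬Prime I} =>
      idealVonMangoldt I.1 / (Ideal.absNorm I.1 : ℝ) := by
  let j (x : {P : Ideal (𝓞 K) // Prime P} × ℕ) : {I : Ideal (𝓞 K) // ¬Prime I} :=
    ⟨x.1.1 ^ (x.2 + 2), not_prime_pow (Nat.succ_succ_ne_one _)⟩
  have hj : Function.Injective j := by
    rintro ⟨⟨P, hP⟩, k⟩ ⟨⟨Q, hQ⟩, l⟩ h
    have h' : P ^ (k + 2) = Q ^ (l + 2) := congrArg Subtype.val h
    obtain rfl : P = Q := eq_of_prime_pow_eq hP hQ (Nat.succ_pos _) h'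
    obtain rfl : k = l :=
      Nat.add_right_cancel (pow_injective_of_not_isUnit hP.not_isUnit hP.ne_zero h')
    rfl
  refine (hj.summable_iff ?_).1 ?_
  · rintro ⟨I, hI⟩ hrange
    rw [idealVonMangoldt_of_not_isPrimePow, zero_div]
    rintro ⟨P, k, hP, hk, rfl⟩
    match k with
    | 1 => exact hI (by rwa [pow_one])
    | l + 2 => exact hrange ⟨(⟨P, hP⟩, l), rfl⟩
  · have hgeom := ((summable_idealVonMangoldt_div_rpow one_lt_two).comp_injective
      (i := fun P : {P : Ideal (𝓞 K) // Prime P} => P.1) Subtype.val_injective).mul_of_nonneg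
      summable_geometric_two (fun P => div_nonneg (idealVonMangoldt_nonneg _) (by positivity))
      (fun k => by positivity)
    refine .of_nonneg_of_le
      (fun x => div_nonneg (idealVonMangoldt_nonneg _) (Nat.cast_nonneg _)) ?_ hgeom
    rintro ⟨⟨P, hP⟩, k⟩
    have hN : (2 : ℝ) ≤ Ideal.absNorm P := Nat.ofNat_le_cast.2 (two_le_absNorm_of_prime hP)
    have hΛ : idealVonMangoldt P = Real.log (Ideal.absNorm P) := by
      rw [← pow_one P, idealVonMangoldt_prime_pow hP one_ne_zero, pow_one]
    calc idealVonMangoldt (P ^ (k + 2)) / (Ideal.absNorm (P ^ (k + 2)) : ℝ)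
        = Real.log (Ideal.absNorm P) / (Ideal.absNorm P : ℝ) ^ (2 : ℝ) *
            (1 / Ideal.absNorm P) ^ k := by
          rw [idealVonMangoldt_prime_pow hP (Nat.succ_ne_zero _), map_pow, Nat.cast_pow, pow_add,
            Real.rpow_two, one_div_pow]
          field_simp
      _ ≤ idealVonMangoldt P / (Ideal.absNorm P : ℝ) ^ (2 : ℝ) * (1 / 2) ^ k := by
          rw [hΛ]
          gcongr

lemma norm_mulChar_apply_le_one {M : Type*} [CommMonoid M] [Finite M] (χ : MulChar M ℂ) (a : M) :
    ‖χ a‖ ≤ 1 := by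
  by_cases ha : IsUnit a
  · obtain ⟨u, rfl⟩ := ha
    refine (Complex.norm_eq_one_of_pow_eq_one (n := Nat.card Mˣ) ?_ Nat.card_pos.ne').le
    rw [← map_pow, ← Units.val_pow_eq_pow_val, pow_card_eq_one', Units.val_one, map_one]
  · rw [χ.map_nonunit ha, norm_zero]
    exact zero_le_one

variable {M : Type*} [CommMonoid M] [Finite M] [DecidableEq (MulChar M ℂ)]
  {cl : Ideal (𝓞 K) →* M} {h : MulChar M ℂ → ℂ → ℂ}

lemma ne_zero_of_lseriesHasSum_idealCoeff (hh : ∀ χ, Differentiable ℂ (h χ)) (h0 : h 1 (-1) = 0)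
    (hsum : ∀ χ (s : ℂ), 1 < s.re → LSeriesHasSum (idealCoeff fun I => χ (cl I)) s
      (h χ s / (s - 1) ^ (if χ = 1 then 1 else 0)))
    (χ : MulChar M ℂ) : h χ 1 ≠ 0 := by
  classical
  have := Fintype.ofFinite (MulChar M ℂ)
  have hlog : IsDirichletLogDeriv (∏ χ : MulChar M ℂ, idealCoeff fun I => χ (cl I))
      (idealCoeff fun I => ∑ χ : MulChar M ℂ, χ (cl I) * idealVonMangoldt I) := by
    rw [idealCoeff_sum]
    exact isDirichletLogDeriv_prod _ fun χ _ =>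
      isDirichletLogDeriv_idealCoeff (χ.toMonoidHom.comp cl)
  have hnonneg (I : Ideal (𝓞 K)) : 0 ≤ ∑ χ : MulChar M ℂ, χ (cl I) * idealVonMangoldt I := by
    rw [← Finset.sum_mul, sum_mulChar_apply]
    refine mul_nonneg ?_ (Complex.zero_le_real.2 (idealVonMangoldt_nonneg I))
    split_ifs
    exacts [Nat.cast_nonneg _, le_rfl]
  have hone : (∏ χ : MulChar M ℂ, idealCoeff fun I => χ (cl I)) 1 = 1 :=
    Finset.prod_induction _ (fun f : ArithmeticFunction ℂ => f 1 = 1)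
      (fun f g hf hg => by rw [ArithmeticFunction.mul_apply_one, hf, hg, one_mul])
      ArithmeticFunction.one_one fun χ _ => by rw [idealCoeff_one, map_one, map_one]
  have hprod : ∏ χ, h χ 1 ≠ 0 := by
    refine hlog.ne_zero_of_nonneg (idealCoeff_nonneg hnonneg) hone
      (h := fun s => ∏ χ, h χ s) (by fun_prop) ?_ fun s hs => ?_
    · exact Finset.prod_eq_zero (Finset.mem_univ 1) h0
    · convert! lseriesHasSum_prod Finset.univ fun χ _ => hsum χ s hs using 1
      rw [Finset.prod_div_distrib, Finset.prod_pow_eq_pow_sum, Finset.sum_ite_eq' Finset.univ 1,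
        if_pos (Finset.mem_univ _), pow_one]
  exact Finset.prod_ne_zero_iff.1 hprod χ (Finset.mem_univ χ)

lemma tendsto_sub_one_mul_LSeries_indicator (hh : ∀ χ, Differentiable ℂ (h χ))
    (h0 : h 1 (-1) = 0)
    (hsum : ∀ χ (s : ℂ), 1 < s.re → LSeriesHasSum (idealCoeff fun I => χ (cl I)) s
      (h χ s / (s - 1) ^ (if χ = 1 then 1 else 0)))
    (β : Mˣ) :
    Tendsto (fun x : ℝ => ((x : ℂ) - 1) * LSeries (idealCoeff fun I =>
      {I | cl I = β}.indicator (fun I => (Nat.card (MulChar M ℂ) : ℂ) * idealVonMangoldt I) I) x)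
      (𝓝[>] 1) (𝓝 1) := by
  classical
  have := Fintype.ofFinite (MulChar M ℂ)
  have hΛ (χ : MulChar M ℂ) {s : ℂ} (hs : 1 < s.re) :
      LSeriesSummable (idealCoeff fun I => χ (cl I) * idealVonMangoldt I) s :=
    lseriesSummable_idealCoeff_mul_idealVonMangoldt (fun I => norm_mulChar_apply_le_one χ _) hs
  have hlim (χ : MulChar M ℂ) :
      Tendsto (fun x : ℝ => ((x : ℂ) - 1) *
        LSeries (idealCoeff fun I => χ (cl I) * idealVonMangoldt I) x) (𝓝[>] 1)
        (𝓝 ((if χ = 1 then 1 else 0 : ℕ) : ℂ)) :=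
    (isDirichletLogDeriv_idealCoeff (χ.toMonoidHom.comp cl)).tendsto_sub_one_mul_LSeries
      (fun s hs => hΛ χ hs) (hh χ) (ne_zero_of_lseriesHasSum_idealCoeff hh h0 hsum χ) (hsum χ)
  have htotal := tendsto_finsetSum Finset.univ fun χ _ => (hlim χ).const_mul (χ ↑β⁻¹)
  have hvalue : ∑ χ : MulChar M ℂ, χ ↑β⁻¹ * ((if χ = 1 then 1 else 0 : ℕ) : ℂ) = 1 := by
    simp only [Nat.cast_ite, Nat.cast_one, Nat.cast_zero, mul_ite, mul_one, mul_zero,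
      Finset.sum_ite_eq', Finset.mem_univ, if_true, MulChar.one_apply_coe]
  rw [hvalue] at htotal
  refine htotal.congr' ?_
  filter_upwards [self_mem_nhdsWithin] with x (hx : 1 < x)
  have hindicator (I : Ideal (𝓞 K)) :
      {I | cl I = β}.indicator (fun I => (Nat.card (MulChar M ℂ) : ℂ) * idealVonMangoldt I) I =
        ∑ χ : MulChar M ℂ, χ ↑β⁻¹ * (χ (cl I) * idealVonMangoldt I) := by
    simp only [← mul_assoc, ← Finset.sum_mul, sum_mulChar_inv_mul_apply, ite_mul, zero_mul,
      Nat.card_eq_fintype_card, Set.indicator_apply, Set.mem_ofPred_eq]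
  have hx' : 1 < (x : ℂ).re := by rwa [Complex.ofReal_re]
  simp only [hindicator, idealCoeff_sum, coe_sum_arithmeticFunction, idealCoeff_const_mul]
  rw [LSeries_sum fun χ _ => (hΛ χ hx').smul _, Finset.mul_sum]
  exact Finset.sum_congr rfl fun χ _ => by rw [LSeries_smul, mul_left_comm]

theorem exists_prime_map_eq_of_lseriesHasSum (hh : ∀ χ, Differentiable ℂ (h χ))
    (h0 : h 1 (-1) = 0)
    (hsum : ∀ χ (s : ℂ), 1 < s.re → LSeriesHasSum (idealCoeff fun I => χ (cl I)) s
      (h χ s / (s - 1) ^ (if χ = 1 then 1 else 0)))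
    (β : Mˣ) : ∃ P : Ideal (𝓞 K), Prime P ∧ cl P = β := by
  by_contra! hP
  set F : Ideal (𝓞 K) → ℂ :=
    {I | cl I = β}.indicator fun I => (Nat.card (MulChar M ℂ) : ℂ) * idealVonMangoldt I
  have hF {I : Ideal (𝓞 K)} (hI : Prime I) : F I = 0 :=
    Set.indicator_of_notMem (s := {I | cl I = β}) (hP I hI) _
  have hsummable : Summable fun I => F I / (Ideal.absNorm I : ℂ) ^ (1 : ℂ) := by
    refine (Subtype.val_injective.summable_iff
      (g := ((↑) : {I : Ideal (𝓞 K) // ¬Prime I} → Ideal (𝓞 K))) fun I hI => ?_).1 ?_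
    · rw [hF (not_not.1 fun h => hI ⟨⟨I, h⟩, rfl⟩), zero_div]
    refine .of_norm_bounded
      (summable_idealVonMangoldt_div_of_not_prime.mul_left (Nat.card (MulChar M ℂ) : ℝ)) fun I => ?_
    rw [Function.comp_apply, Complex.cpow_one, norm_div, Complex.norm_natCast, ← mul_div_assoc]
    gcongr
    refine (norm_indicator_le_norm_self _ _).trans_eq ?_
    rw [norm_mul, Complex.norm_natCast, Complex.norm_real,
      Real.norm_of_nonneg (idealVonMangoldt_nonneg _)]
  exact one_ne_zero <| tendsto_nhds_unique
    (tendsto_sub_one_mul_LSeries_indicator hh h0 hsum β)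
    (tendsto_sub_one_mul_LSeries_of_lseriesSummable_one
      (lseriesHasSum_idealCoeff one_ne_zero hsummable.hasSum).LSeriesSummable)

end PrimesInClasses

section RayClasses

/-- The congruence on a commutative monoid that identifies elements differing by a unit from `U`. -/
def unitsCon {N : Type*} [CommMonoid N] (U : Subgroup Nˣ) : Con N where
  toSetoid := MulAction.orbitRel U N
  mul' := by
    rintro _ x _ y ⟨u, rfl⟩ ⟨v, rfl⟩
    exact ⟨u * v, smul_mul_smul_comm u x v y |>.symm⟩

lemma isUnit_coe_unitsCon_iff {N : Type*} [CommMonoid N] {U : Subgroup Nˣ} {x : N} :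
    IsUnit (x : (unitsCon U).Quotient) ↔ IsUnit x := by
  refine ⟨fun h => ?_, fun h => h.map (unitsCon U).mk'⟩
  obtain ⟨y, hy⟩ := h.exists_right_inv
  obtain ⟨y, rfl⟩ := Con.mk'_surjective y
  obtain ⟨u, hu⟩ := (unitsCon U).eq.1 (show ((x * y : N) : (unitsCon U).Quotient) = (1 : N) from hy)
  have hxy : IsUnit (x * y) := by
    rw [← hu]
    exact isUnit_one.smul u
  exact isUnit_of_mul_isUnit_left hxy

variable {R : Type*} [CommRing R] (J : Ideal R)

/-- The monoid of residue classes modulo `J` up to units of `R`. Its unit group is the ray class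
group of modulus `J` when `R` is a principal ideal domain. -/
abbrev RayClassMonoid : Type _ :=
  (unitsCon (Units.map (Ideal.Quotient.mk J : R →* R ⧸ J)).range).Quotient

/-- The class of a residue modulo `J`. -/
abbrev residueClass : R ⧸ J →* RayClassMonoid J := Con.mk' _

instance [Finite (R ⧸ J)] : Finite (RayClassMonoid J) :=
  Finite.of_surjective _ (Con.mk'_surjective (c := unitsCon _))

variable {J}

lemma residueClass_mk_eq_iff {x y : R} :
    residueClass J (Ideal.Quotient.mk J x) = residueClass J (Ideal.Quotient.mk J y) ↔
      ∃ u : Rˣ, u * y - x ∈ J := by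
  simp only [← Ideal.Quotient.eq]
  refine (unitsCon _).eq.trans ⟨?_, ?_⟩
  · rintro ⟨⟨_, u, rfl⟩, h⟩
    exact ⟨u, h⟩
  · rintro ⟨u, h⟩
    exact ⟨⟨_, u, rfl⟩, h⟩

lemma residueClass_zero_not_isUnit (hJ : J ≠ ⊤) : ¬IsUnit (residueClass J 0) := by
  have := Ideal.Quotient.nontrivial_iff.2 hJ
  exact mt isUnit_coe_unitsCon_iff.1 not_isUnit_zero

lemma sum_mulChar_residueClass [Fintype (R ⧸ J)] {χ : MulChar (RayClassMonoid J) ℂ} (hχ : χ ≠ 1) :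
    ∑ x, χ (residueClass J x) = 0 := by
  obtain ⟨β, hβ⟩ := MulChar.ne_one_iff.1 hχ
  obtain ⟨a, ha⟩ := Con.mk'_surjective (c := unitsCon _) (β : RayClassMonoid J)
  have hunit : IsUnit a := isUnit_coe_unitsCon_iff.1 (ha ▸ β.isUnit : IsUnit (residueClass J a))
  refine eq_zero_of_mul_eq_self_left hβ ?_
  simp only [← ha, Finset.mul_sum, ← map_mul]
  exact Fintype.sum_bijective _ (IsUnit.isUnit_iff_mulLeft_bijective.1 hunit) _ _ fun _ => rfl

lemma sum_comp_eq_nsmul_sum_of_surjective {G H E : Type*} [AddGroup G] [AddGroup H] [Fintype G]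
    [Fintype H] [AddCommMonoid E] {p : G →+ H} (hp : Function.Surjective p) (f : H → E) :
    ∑ x, f (p x) = Nat.card p.ker • ∑ y, f y := by
  classical
  rw [Finset.sum_comp, Finset.image_univ_of_surjective hp, Finset.smul_sum]
  refine Finset.sum_congr rfl fun y _ => ?_
  rw [AddMonoidHom.card_fiber_eq_of_mem_range p (hp y) ⟨0, map_zero p⟩,
    ← Nat.subtype_card _ fun x => by
      rw [Finset.mem_filter_univ, ← AddMonoidHom.mem_ker, ← SetLike.mem_coe]]
  rfl

section RayClass

variable [IsDomain R]

lemma residueClass_mk_eq_of_span_singleton_eq {x y : R} (h : Ideal.span {x} = Ideal.span {y}) :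
    residueClass J (Ideal.Quotient.mk J x) = residueClass J (Ideal.Quotient.mk J y) := by
  obtain ⟨u, hu⟩ := Ideal.span_singleton_eq_span_singleton.1 h.symm
  exact residueClass_mk_eq_iff.2 ⟨u, by rw [mul_comm, hu, sub_self]; exact J.zero_mem⟩

variable [IsPrincipalIdealRing R]

variable (J) in
/-- The class of an ideal of a principal ideal domain, given by the residue of any generator. -/
noncomputable def rayClass : Ideal R →* RayClassMonoid J where
  toFun I := residueClass J (Ideal.Quotient.mk J (Submodule.IsPrincipal.generator I))
  map_one' := by
    rw [residueClass_mk_eq_of_span_singleton_eq (y := 1)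
      (by rw [Ideal.span_singleton_generator, Ideal.span_singleton_one, Ideal.one_eq_top]),
      map_one, map_one]
  map_mul' I I' := by
    rw [← map_mul, ← map_mul]
    exact residueClass_mk_eq_of_span_singleton_eq
      (by simp only [← Ideal.span_singleton_mul_span_singleton, Ideal.span_singleton_generator])

lemma rayClass_span_singleton (x : R) :
    rayClass J (Ideal.span {x}) = residueClass J (Ideal.Quotient.mk J x) :=
  residueClass_mk_eq_of_span_singleton_eq (Ideal.span_singleton_generator _)

lemma exists_span_singleton_eq_and_sub_mem {I : Ideal R} {c : R}
    (h : rayClass J I = residueClass J (Ideal.Quotient.mk J c)) :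
    ∃ x, Ideal.span {x} = I ∧ x - c ∈ J := by
  obtain ⟨x, rfl⟩ := IsPrincipalIdealRing.principal I
  obtain ⟨u, hu⟩ := residueClass_mk_eq_iff.1 (h.symm.trans (rayClass_span_singleton x))
  exact ⟨u * x, Ideal.span_singleton_mul_left_unit u.isUnit x, hu⟩

end RayClass

end RayClasses

lemma finite_quotient_range_of_injective {A B : Type*} [AddCommGroup A] [Module.Free ℤ A]
    [Module.Finite ℤ A] [AddCommGroup B] {ι : B →+ A} (hι : Function.Injective ι)
    (h : Module.finrank ℤ B = Module.finrank ℤ A) : Finite (A ⧸ ι.range) :=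
  Submodule.finiteQuotientOfFreeOfRankEq ι.toIntLinearMap.range
    ((LinearMap.finrank_range_of_inj hι).trans h)

section ImaginaryQuadratic

open NumberField ComplexConjugate

variable {K : Type*} [Field K]

lemma isTotallyComplex_of_sq_eq_neg {δ : K} {d : ℕ} (hd : d ≠ 0) (hδ : δ ^ 2 = -d) :
    IsTotallyComplex K := by
  refine ⟨fun v => InfinitePlace.not_isReal_iff_isComplex.1 fun hv => ?_⟩
  obtain ⟨φ, hφ, -⟩ := hv
  have hsq : hφ.embedding δ ^ 2 = -d := by rw [← map_pow, hδ, map_neg, map_natCast]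
  have hd' : (0 : ℝ) < d := Nat.cast_pos.2 (Nat.pos_of_ne_zero hd)
  linarith [sq_nonneg (hφ.embedding δ)]

variable [NumberField K]

lemma subsingleton_infinitePlace [IsTotallyComplex K] (hK : Module.finrank ℚ K = 2) :
    Subsingleton (InfinitePlace K) := by
  rw [← Finite.card_le_one_iff_subsingleton, Nat.card_eq_fintype_card,
    InfinitePlace.card_eq_nrRealPlaces_add_nrComplexPlaces, IsTotallyComplex.nrRealPlaces_eq_zero]
  have := IsTotallyComplex.finrank K
  lia

lemma normSq_eq_absNorm_span_singleton [IsTotallyComplex K] (hK : Module.finrank ℚ K = 2)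
    (φ : K →+* ℂ) (x : 𝓞 K) : Complex.normSq (φ x) = Ideal.absNorm (Ideal.span {x}) := by
  have := subsingleton_infinitePlace hK
  have hprod := InfinitePlace.prod_eq_abs_norm (x : K)
  rw [Fintype.prod_subsingleton _ (InfinitePlace.mk φ), IsTotallyComplex.mult_eq,
    InfinitePlace.apply, ← Complex.normSq_eq_norm_sq, ← Algebra.coe_norm_int] at hprod
  rw [hprod, Ideal.absNorm_span_singleton, Nat.cast_natAbs]
  norm_cast

lemma finite_units_ringOfIntegers [IsTotallyComplex K] (hK : Module.finrank ℚ K = 2) :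
    Finite (𝓞 K)ˣ := by
  have hinj : Function.Injective fun u : (𝓞 K)ˣ => (u : K) :=
    fun u v h => Units.ext (RingOfIntegers.ext h)
  refine Set.finite_univ_iff.1 <| ((Embeddings.finite_of_norm_le K ℂ 1).preimage
    hinj.injOn).subset fun u _ => ⟨u.1.isIntegral_coe, fun φ => ?_⟩
  rw [← sq_le_one_iff₀ (norm_nonneg _), ← Complex.normSq_eq_norm_sq,
    normSq_eq_absNorm_span_singleton hK, Ideal.span_singleton_eq_top.2 u.isUnit,
    Ideal.absNorm_top, Nat.cast_one]

lemma exists_embedding_eq_sqrt_mul_I {δ : K} {d : ℕ} (hδ : δ ^ 2 = -d) :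
    ∃ φ : K →+* ℂ, φ δ = √d * Complex.I := by
  obtain ⟨φ⟩ : Nonempty (K →+* ℂ) := inferInstance
  have hsq : φ δ ^ 2 = (√d * Complex.I) ^ 2 := by
    rw [← map_pow, hδ, mul_pow, Complex.I_sq, ← Complex.ofReal_pow, Real.sq_sqrt d.cast_nonneg]
    simp
  rcases sq_eq_sq_iff_eq_or_eq_neg.1 hsq with h | h
  · exact ⟨φ, h⟩
  · refine ⟨ComplexEmbedding.conjugate φ, ?_⟩
    rw [ComplexEmbedding.conjugate_coe_eq, h]
    simp

lemma exists_rectangular_lattice_le (hK : Module.finrank ℚ K = 2) {δ : 𝓞 K} {d : ℕ} (hd : d ≠ 0)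
    (hδ : δ ^ 2 = -d) {J : Ideal (𝓞 K)} (hJ : J ≠ ⊥) :
    ∃ (φ : K →+* ℂ) (ι : ℤ × ℤ →+ 𝓞 K) (ω₁ ω₂ : ℝ), 0 < ω₁ ∧ 0 < ω₂ ∧ (∀ p, ι p ∈ J) ∧
      Finite (𝓞 K ⧸ ι.range) ∧ ∀ p, φ (ι p) = p.1 * ω₁ + p.2 * ω₂ * Complex.I := by
  obtain ⟨φ, hφ⟩ := exists_embedding_eq_sqrt_mul_I (δ := (δ : K)) (d := d)
    (by rw [← map_pow, hδ, map_neg, map_natCast])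
  set N := Ideal.absNorm J
  let ι : ℤ × ℤ →+ 𝓞 K := (AddMonoidHom.mulLeft (N : 𝓞 K)).comp
    ((Int.castAddHom _).coprod ((AddMonoidHom.mulRight δ).comp (Int.castAddHom _)))
  have hN : (0 : ℝ) < N := Nat.cast_pos.2 (Nat.pos_of_ne_zero (Ideal.absNorm_eq_zero_iff.not.2 hJ))
  have hd' : (0 : ℝ) < √d := Real.sqrt_pos.2 (Nat.cast_pos.2 (Nat.pos_of_ne_zero hd))
  have hι (p : ℤ × ℤ) : ι p = N * (p.1 + p.2 * δ) := rfl
  have hφι (p : ℤ × ℤ) : φ (ι p) = p.1 * (N : ℝ) + p.2 * (N * √d : ℝ) * Complex.I := by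
    simp only [hι, map_mul, map_add, map_natCast, map_intCast, hφ]
    push_cast
    ring
  have hinj : Function.Injective ι := by
    intro p q hpq
    have h : φ (ι p) = φ (ι q) := by rw [hpq]
    rw [hφι, hφι, Complex.ext_iff] at h
    simpa [Prod.ext_iff, hN.ne', hd'.ne'] using h
  refine ⟨φ, ι, N, N * √d, hN, mul_pos hN hd', fun p => ?_, ?_, hφι⟩
  · exact J.mul_mem_right _ J.absNorm_mem
  · exact finite_quotient_range_of_injective hinj
      (by rw [RingOfIntegers.rank, hK, Module.finrank_prod, Module.finrank_self])

variable [IsPrincipalIdealRing (𝓞 K)]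

lemma exists_entire_lseriesHasSum_rayClass (hK : Module.finrank ℚ K = 2) {δ : 𝓞 K} {d : ℕ}
    (hd : d ≠ 0) (hδ : δ ^ 2 = -d) {J : Ideal (𝓞 K)} (hJ : J ≠ ⊥) (hJ' : J ≠ ⊤)
    (χ : MulChar (RayClassMonoid J) ℂ) :
    ∃ H : ℂ → ℂ, Differentiable ℂ H ∧ H (-1) = 0 ∧ (χ ≠ 1 → H 1 = 0) ∧
      ∀ s : ℂ, 1 < s.re →
        LSeriesHasSum (idealCoeff fun I => χ (rayClass J I)) s (H s / (s - 1)) := by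
  have : IsTotallyComplex K := isTotallyComplex_of_sq_eq_neg (δ := (δ : K)) hd
    (by rw [← map_pow, hδ, map_neg, map_natCast])
  have := finite_units_ringOfIntegers hK
  have : Finite (𝓞 K ⧸ J) := J.finiteQuotientOfFreeOfNeBot hJ
  obtain ⟨φ, ι, ω₁, ω₂, hω₁, hω₂, hιJ, hfin, hι⟩ := exists_rectangular_lattice_le hK hd hδ hJ
  let p : 𝓞 K ⧸ ι.range →+ 𝓞 K ⧸ J := QuotientAddGroup.lift _ (Ideal.Quotient.mk J).toAddMonoidHom
    (by rintro _ ⟨x, rfl⟩; exact Ideal.Quotient.eq_zero_iff_mem.2 (hιJ x))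
  have hzero : χ (residueClass J 0) = 0 := χ.map_nonunit (residueClass_zero_not_isUnit hJ')
  obtain ⟨H, hH, hH0, hH1, hsum⟩ := exists_entire_hasSum_periodic
    (e := (φ.comp (algebraMap (𝓞 K) K)).toAddMonoidHom)
    (φ.injective.comp RingOfIntegers.coe_injective) hω₁ hω₂ hι
    (f := fun r => χ (residueClass J (p r)))
    (by rw [map_zero, hzero])
  refine ⟨fun s => H s / Nat.card (𝓞 K)ˣ, hH.div_const _, by simp only [hH0, zero_div],
    fun hχ => ?_, fun s hs => ?_⟩
  · have := Fintype.ofFinite (𝓞 K ⧸ ι.range)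
    have := Fintype.ofFinite (𝓞 K ⧸ J)
    have hp : Function.Surjective p :=
      QuotientAddGroup.lift_surjective_of_surjective _ _ Ideal.Quotient.mk_surjective _
    simp only [hH1]
    rw [finsum_eq_sum_of_fintype,
      sum_comp_eq_nsmul_sum_of_surjective hp fun y => χ (residueClass J y),
      sum_mulChar_residueClass hχ, nsmul_zero, mul_zero, zero_div]
  · have hs0 := Complex.ne_zero_of_one_lt_re hs
    refine lseriesHasSum_idealCoeff hs0 ?_
    rw [div_right_comm]
    refine hasSum_ideal_of_hasSum_span ?_ ?_
    · rw [Ideal.absNorm_bot, Nat.cast_zero, Complex.zero_cpow hs0, div_zero]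
    · convert! hsum s hs using 2 with x
      change χ _ / _ = χ (residueClass J (Ideal.Quotient.mk J x)) / (Complex.normSq (φ x) : ℂ) ^ s
      rw [rayClass_span_singleton, normSq_eq_absNorm_span_singleton hK, Complex.ofReal_natCast]

theorem exists_prime_sub_mem (hK : Module.finrank ℚ K = 2) {δ : 𝓞 K} {d : ℕ} (hd : d ≠ 0)
    (hδ : δ ^ 2 = -d) {J : Ideal (𝓞 K)} (hJ : J ≠ ⊥) (hJ' : J ≠ ⊤) {γ : 𝓞 K}
    (hγ : IsUnit (Ideal.Quotient.mk J γ)) : ∃ p, Prime p ∧ p - γ ∈ J := by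
  classical
  have : Finite (𝓞 K ⧸ J) := J.finiteQuotientOfFreeOfNeBot hJ
  have hL (χ : MulChar (RayClassMonoid J) ℂ) : ∃ h : ℂ → ℂ, Differentiable ℂ h ∧
      (χ = 1 → h (-1) = 0) ∧ ∀ s : ℂ, 1 < s.re →
        LSeriesHasSum (idealCoeff fun I => χ (rayClass J I)) s
          (h s / (s - 1) ^ (if χ = 1 then 1 else 0)) := by
    obtain ⟨H, hH, hH0, hH1, hsum⟩ := exists_entire_lseriesHasSum_rayClass hK hd hδ hJ hJ' χ
    by_cases hχ : χ = 1
    · exact ⟨H, hH, fun _ => hH0, fun s hs => by rw [if_pos hχ, pow_one]; exact hsum s hs⟩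
    · obtain ⟨g, hg, hHg⟩ := exists_differentiable_eq_sub_mul hH (hH1 hχ)
      refine ⟨g, hg, fun h => (hχ h).elim, fun s hs => ?_⟩
      have := hsum s hs
      rwa [hHg, mul_div_cancel_left₀ _ (sub_one_ne_zero_of_one_lt_re hs), ← div_one (g s),
        ← pow_zero (s - 1), ← if_neg (c := χ = 1) (t := 1) (e := 0) hχ] at this
  choose h hh h0 hsum using hL
  obtain ⟨P, hP, hPγ⟩ := exists_prime_map_eq_of_lseriesHasSum hh (h0 1 rfl) hsum
    (hγ.map (residueClass J)).unit
  obtain ⟨p, rfl, hp⟩ := exists_span_singleton_eq_and_sub_mem hPγ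
  have hp0 : p ≠ 0 := fun h => hP.ne_zero (Ideal.span_singleton_eq_bot.2 h)
  exact ⟨p, (Ideal.span_singleton_prime hp0).1 (Ideal.isPrime_of_prime hP), hp⟩

end ImaginaryQuadratic

section Congruence

variable {R : Type*} [CommRing R]

lemma isUnit_mk_span_singleton_of_isCoprime {x y : R} (h : IsCoprime x y) :
    IsUnit (Ideal.Quotient.mk (Ideal.span {y}) x) := by
  obtain ⟨u, v, huv⟩ := h
  refine IsUnit.of_mul_eq_one_right (Ideal.Quotient.mk _ u) ?_
  rw [← map_mul, ← map_one (Ideal.Quotient.mk _), Ideal.Quotient.eq, Ideal.mem_span_singleton]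
  exact ⟨-v, by linear_combination huv⟩

lemma exists_dvd_sub_and_isCoprime_mul {x y a b : R} (hxy : IsCoprime x y) (ha : IsCoprime a x)
    (hb : IsCoprime b y) : ∃ c, x ∣ c - a ∧ y ∣ c - b ∧ IsCoprime c (x * y) := by
  obtain ⟨u, v, huv⟩ := hxy
  have hca : a * (v * y) + b * (u * x) = a + x * ((b - a) * u) := by linear_combination a * huv
  have hcb : a * (v * y) + b * (u * x) = b + y * ((a - b) * v) := by linear_combination b * huv
  refine ⟨a * (v * y) + b * (u * x), ⟨(b - a) * u, by rw [hca, add_sub_cancel_left]⟩,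
    ⟨(a - b) * v, by rw [hcb, add_sub_cancel_left]⟩, IsCoprime.mul_right ?_ ?_⟩
  · exact hca ▸ ha.add_mul_left_left _
  · exact hcb ▸ hb.add_mul_left_left _

end Congruence

section ThirdCyclotomic

open NumberField

variable {K : Type*} [Field K] [NumberField K] [IsCyclotomicExtension {3} ℚ K]

lemma exists_intCast_add_intCast_mul_eq {ζ : 𝓞 K} (hζ : IsPrimitiveRoot ζ 3) (x : 𝓞 K) :
    ∃ a b : ℤ, x = a + b * ζ := by
  have hζK : IsPrimitiveRoot (ζ : K) 3 := hζ.map_of_injective RingOfIntegers.coe_injective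
  have hdim : hζK.integralPowerBasis.dim = 2 := hζK.integralPowerBasis_dim
  have hgen : hζK.integralPowerBasis.gen = ζ := by rw [hζK.integralPowerBasis_gen]; rfl
  have hsum := (hζK.integralPowerBasis.basis.reindex (finCongr hdim)).sum_repr x
  rw [Fin.sum_univ_two] at hsum
  simp only [Module.Basis.reindex_apply, PowerBasis.coe_basis, finCongr_symm, finCongr_apply,
    Fin.val_cast, Fin.val_zero, Fin.val_one, pow_zero, pow_one, hgen, zsmul_eq_mul, mul_one] at hsum
  exact ⟨_, _, hsum.symm⟩

lemma exists_prime_dvd_sub_of_isCoprime {m γ : 𝓞 K} (hm : m ≠ 0) (hm' : ¬ IsUnit m)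
    (hγ : IsCoprime γ m) : ∃ p, Prime p ∧ m ∣ p - γ := by
  have hζ := IsCyclotomicExtension.zeta_spec 3 ℚ K
  have hδ : (1 + 2 * hζ.toInteger) ^ 2 = -(3 : ℕ) := by
    have hsq : hζ.toInteger ^ 2 + hζ.toInteger + 1 = 0 := by
      simpa [Polynomial.cyclotomic_three] using
        hζ.toInteger_isPrimitiveRoot.isRoot_cyclotomic three_pos
    push_cast
    linear_combination 4 * hsq
  have hK : Module.finrank ℚ K = 2 :=
    IsCyclotomicExtension.finrank K (Polynomial.cyclotomic.irreducible_rat three_pos)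
  have : IsPrincipalIdealRing (𝓞 K) := IsCyclotomicExtension.Rat.three_pid K
  obtain ⟨p, hp, hpγ⟩ := exists_prime_sub_mem hK three_ne_zero hδ
    (mt Ideal.span_singleton_eq_bot.1 hm) (mt Ideal.span_singleton_eq_top.1 hm')
    (isUnit_mk_span_singleton_of_isCoprime hγ)
  exact ⟨p, hp, Ideal.mem_span_singleton.1 hpγ⟩

theorem exists_primary_prime_congruent_general {ζ : 𝓞 K} (hζ : IsPrimitiveRoot ζ 3) {m α : 𝓞 K}
    (hm : IsCoprime 3 m) (hα : IsCoprime m α) :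
    ∃ (lam : 𝓞 K) (a' b' : ℤ), lam = a' + b' * ζ ∧ 3 ∣ b' ∧ Prime lam ∧ m ∣ lam - α := by
  have h3 : ¬ IsUnit (3 : 𝓞 K) := fun h => by
    have : IsUnit (3 : ℤ) := isUnit_of_map_unit (algebraMap ℤ (𝓞 K)) 3 (by rwa [map_ofNat])
    exact absurd this (by decide)
  have hm0 : m ≠ 0 := by
    rintro rfl
    exact h3 (isCoprime_zero_right.1 hm)
  obtain ⟨γ, hγ3, hγm, hγ⟩ := exists_dvd_sub_and_isCoprime_mul hm isCoprime_one_left hα.symm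
  obtain ⟨p, hp, hpγ⟩ := exists_prime_dvd_sub_of_isCoprime (mul_ne_zero (by norm_num) hm0)
    (mt isUnit_of_mul_isUnit_left h3) hγ
  obtain ⟨x, hx⟩ : 3 ∣ p - 1 :=
    sub_add_sub_cancel p γ 1 ▸ dvd_add (dvd_of_mul_right_dvd hpγ) hγ3
  obtain ⟨c, d, rfl⟩ := exists_intCast_add_intCast_mul_eq hζ x
  refine ⟨p, 1 + 3 * c, 3 * d, ?_, dvd_mul_right 3 d, hp, ?_⟩
  · push_cast
    linear_combination hx
  · exact sub_add_sub_cancel p γ α ▸ dvd_add (dvd_of_mul_left_dvd hpγ) hγm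

end ThirdCyclotomic

open NumberField in
/-- In the third cyclotomic field `K = ℚ(ζ)` with ring of integers `ℤ[ζ]`, given a rational
prime `q ≠ 3` and `α = a + bζ` coprime to `q`, there is a primary prime `λ = a′ + b′ζ`
(`3 ∣ b′`) with `λ ≡ α (mod q)`. -/
theorem exists_primary_prime_congruent (K : Type*) [Field K] [NumberField K]
    [IsCyclotomicExtension {3} ℚ K]
    (ζ : 𝓞 K) (hζ : IsPrimitiveRoot ζ 3)
    (q : ℕ) (hq : q.Prime) (hq3 : q ≠ 3)
    (a b : ℤ) (α : 𝓞 K) (hα : α = (a : 𝓞 K) + (b : 𝓞 K) * ζ)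
    (hcop : IsCoprime (q : 𝓞 K) α) :
    ∃ (lam : 𝓞 K) (a' b' : ℤ), lam = (a' : 𝓞 K) + (b' : 𝓞 K) * ζ ∧ (3 : ℤ) ∣ b' ∧
      Prime lam ∧ (q : 𝓞 K) ∣ (lam - α) := by
  have h3q : IsCoprime (3 : 𝓞 K) q := by
    simpa using ((Nat.coprime_primes Nat.prime_three hq).2 hq3.symm).isCoprime.map
      (Int.castRingHom (𝓞 K))
  exact exists_primary_prime_congruent_general hζ h3q hcop
end
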